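/- Let T be a scalar Calderón–Zygmund operator on ℝ^d with modulus of continuity ω satisfying the Dini condition, let ρ ∈ (2,∞), let ε ∈ (0,1), and suppose V_ρ(T_*) is bounded on L^q(ℝ^d) for some q ∈ (1,∞). Then for every cube Q₀ ⊂ ℝ^d and every f ∈ L^∞(ℝ^d) supported in Q₀, there exist pairwise disjoint dyadic subcubes {P_j} of Q₀ with Σ_j |P_j| ≤ ε|Q₀| such that for a.e. x ∈ Q₀, V_ρ(T_*(f χ_{3Q₀}))(x) ≤ C ⟨|f|⟩_{3Q₀} + Σ_j V_ρ(T_*(f χ_{3P_j}))(x) χ_{P_j}(x), where C depends only on T, ρ, ε and d. -/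

import Mathlib

open MeasureTheory Set Filter Classical
open scoped ENNReal
noncomputable section

abbrev Rd (d : ℕ) := EuclideanSpace ℝ (Fin d)

/-- An axis-parallel (half-open) cube in `ℝ^d`, given by its center and side length. -/
structure Cube (d : ℕ) where
  c : Fin d → ℝ
  l : ℝ
  hl : 0 < l

/-- The underlying (half-open) set of a cube. -/
def Cube.set {d : ℕ} (Q : Cube d) : Set (Rd d) :=
  {y | ∀ i, Q.c i - Q.l / 2 ≤ y i ∧ y i < Q.c i + Q.l / 2}

/-- The (half-open) set `tQ`, the cube concentric with `Q` of side length `t·ℓ(Q)`. -/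
def Cube.dilate {d : ℕ} (Q : Cube d) (t : ℝ) : Set (Rd d) :=
  {y | ∀ i, Q.c i - t * Q.l / 2 ≤ y i ∧ y i < Q.c i + t * Q.l / 2}

/-- The volume `|Q| = ℓ(Q)^d` of a cube, as an extended nonnegative real. -/
def Cube.vol {d : ℕ} (Q : Cube d) : ℝ≥0∞ := ENNReal.ofReal (Q.l ^ d)

/-- `Q` is one of the dyadic subcubes of `Q₀` obtained by repeated subdivision of `Q₀`
into `2^d` congruent subcubes. -/
def IsDyadicSubcube {d : ℕ} (Q₀ Q : Cube d) : Prop :=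
  ∃ (k : ℕ) (m : Fin d → ℕ), (∀ i, m i < 2 ^ k) ∧ Q.l = Q₀.l / 2 ^ k ∧
    ∀ i, Q.c i = Q₀.c i - Q₀.l / 2 + ((m i : ℝ) + 1 / 2) * (Q₀.l / 2 ^ k)
/-- A scalar Calderón–Zygmund operator on `ℝ^d` with Dini modulus of continuity:
a linear operator `T` bounded on `L²(ℝ^d)` associated with a kernel `K` satisfying the
size condition and the `ω`-smoothness condition, where `ω` is increasing, subadditive,
vanishes at `0`, and satisfies the Dini condition `∫₀¹ ω(t) dt/t < ∞`. -/
structure CZO (d : ℕ) where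
  K : Rd d → Rd d → ℝ
  measK : Measurable (Function.uncurry K)
  ω : ℝ → ℝ
  Cst : ℝ
  hCst : 0 < Cst
  ω_mono : MonotoneOn ω (Set.Ici 0)
  ω_zero : ω 0 = 0
  ω_subadd : ∀ s t : ℝ, 0 ≤ s → 0 ≤ t → ω (s + t) ≤ ω s + ω t
  dini : IntegrableOn (fun t => ω t / t) (Set.Ioo (0 : ℝ) 1)
  size : ∀ x y : Rd d, x ≠ y → |K x y| ≤ Cst / dist x y ^ d
  smooth : ∀ x x' y : Rd d, x ≠ y → dist x x' ≤ dist x y / 2 →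
    |K x y - K x' y| + |K y x - K y x'| ≤ Cst * ω (dist x x' / dist x y) / dist x y ^ d
  T : Lp ℝ 2 (volume : Measure (Rd d)) →L[ℝ] Lp ℝ 2 (volume : Measure (Rd d))
  assoc : ∀ f : Lp ℝ 2 (volume : Measure (Rd d)),
    ∀ᵐ x ∂(volume : Measure (Rd d)), x ∉ tsupport (f : Rd d → ℝ) →
      (T f : Rd d → ℝ) x = ∫ y, K x y * f y

/-- The truncated singular integral `T_ε f(x) = ∫_{|x-y|>ε} K(x,y) f(y) dy`. -/
def CZO.trunc {d : ℕ} (S : CZO d) (ε : ℝ) (f : Rd d → ℝ) (x : Rd d) : ℝ :=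
  ∫ y in {y : Rd d | ε < dist x y}, S.K x y * f y

/-- The variation operator `V_ρ(T_* f)(x)`, with values in `[0,∞]`: the supremum over all
strictly decreasing positive sequences `ε_i → 0` of `(Σ_i |T_{ε_{i+1}}f(x) - T_{ε_i}f(x)|^ρ)^{1/ρ}`. -/
def CZO.var {d : ℕ} (S : CZO d) (ρ : ℝ) (f : Rd d → ℝ) (x : Rd d) : ℝ≥0∞ :=
  ⨆ (ε : ℕ → ℝ) (_ : StrictAnti ε ∧ (∀ i, 0 < ε i) ∧ Tendsto ε atTop (nhds 0)),
    (∑' i : ℕ, ENNReal.ofReal |S.trunc (ε (i + 1)) f x - S.trunc (ε i) f x| ^ ρ) ^ (1 / ρ)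

/-- `V_ρ(T_*)` is bounded on `L^q(ℝ^d)`. -/
def CZO.VarBdd {d : ℕ} (S : CZO d) (ρ q : ℝ) : Prop :=
  ∃ A : ℝ, 0 < A ∧ ∀ f : Rd d → ℝ, Measurable f →
    ∫⁻ x, S.var ρ f x ^ q ∂volume ≤ ENNReal.ofReal A * ∫⁻ x, ENNReal.ofReal |f x| ^ q ∂volume

/-- The weak `(1,1)` operator (quasi-)norm `‖V_ρ(T_*)‖_{L¹ → L^{1,∞}}`. -/
def CZO.weak11Norm {d : ℕ} (S : CZO d) (ρ : ℝ) : ℝ≥0∞ :=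
  sInf {A : ℝ≥0∞ | ∀ f : Rd d → ℝ, Measurable f → ∀ t : ℝ, 0 < t →
    ENNReal.ofReal t * volume {x | ENNReal.ofReal t < S.var ρ f x} ≤
      A * ∫⁻ x, ENNReal.ofReal |f x| ∂volume}

/-- The local grand maximal truncated operator `M_{V_ρ(T_*),Q₀}`. -/
def CZO.grandMaxLoc {d : ℕ} (S : CZO d) (ρ : ℝ) (Q₀ : Cube d) (f : Rd d → ℝ) (x : Rd d) : ℝ≥0∞ :=
  if x ∈ Q₀.set then
    ⨆ (Q : Cube d) (_ : x ∈ Q.set ∧ Q.set ⊆ Q₀.set),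
      essSup (fun ξ => S.var ρ ((Q₀.dilate 3 \ Q.dilate 3).indicator f) ξ)
        (volume.restrict Q.set)
  else 0

/-- The (global) grand maximal truncated operator `M_{V_ρ(T_*)}`. -/
def CZO.grandMax {d : ℕ} (S : CZO d) (ρ : ℝ) (f : Rd d → ℝ) (x : Rd d) : ℝ≥0∞ :=
  ⨆ (Q : Cube d) (_ : x ∈ Q.set),
    essSup (fun ξ => S.var ρ (((Q.dilate 3)ᶜ).indicator f) ξ) (volume.restrict Q.set)

/-- The Hardy–Littlewood maximal operator over cubes, with values in `[0,∞]`. -/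
def maxCube {d : ℕ} (f : Rd d → ℝ) (x : Rd d) : ℝ≥0∞ :=
  ⨆ (Q : Cube d) (_ : x ∈ Q.set), Q.vol⁻¹ * ∫⁻ y in Q.set, ENNReal.ofReal |f y|

/-- The average `⟨|f|⟩_{3Q} = (1/|3Q|) ∫_{3Q} |f|`. -/
def avg3 {d : ℕ} (Q : Cube d) (f : Rd d → ℝ) : ℝ :=
  (∫ y in Q.dilate 3, |f y|) / (3 * Q.l) ^ d
/-- The Euclidean norm of a vector in `ℝ^n`. -/
def enorm' {n : ℕ} (v : Fin n → ℝ) : ℝ := Real.sqrt (∑ i, v i ^ 2)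

/-- The operator norm (with respect to Euclidean norms) of an `n × n` real matrix. -/
def matOpNorm {n : ℕ} (A : Matrix (Fin n) (Fin n) ℝ) : ℝ :=
  sSup ((fun v => enorm' (A.mulVec v)) '' {v | enorm' v ≤ 1})

/-- The spectral power `A^s` of a symmetric matrix `A = U D Uᵗ`, defined as `U D^s Uᵗ`
(junk value `A` if `A` is not symmetric). -/
def Matrix.rpowH {n : ℕ} (A : Matrix (Fin n) (Fin n) ℝ) (s : ℝ) : Matrix (Fin n) (Fin n) ℝ :=
  if h : A.IsHermitian then
    (h.eigenvectorUnitary : Matrix (Fin n) (Fin n) ℝ) *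
      Matrix.diagonal (fun i => h.eigenvalues i ^ s) *
      star (h.eigenvectorUnitary : Matrix (Fin n) (Fin n) ℝ)
  else A

/-- A matrix weight on `ℝ^d`: a measurable function with a.e. symmetric positive definite
values whose operator norm is locally integrable. -/
structure MatrixWeight (d n : ℕ) where
  W : Rd d → Matrix (Fin n) (Fin n) ℝ
  meas : ∀ i j, Measurable fun x => W x i j
  pd : ∀ᵐ x : Rd d, (W x).PosDef
  locInt : LocallyIntegrable (fun x => matOpNorm (W x)) (volume : Measure (Rd d))

/-- The matrix `A_p` characteristic `[W]_{A_p}`. -/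
def MatrixWeight.apConst {d n : ℕ} (W : MatrixWeight d n) (p : ℝ) : ℝ≥0∞ :=
  ⨆ Q : Cube d, Q.vol⁻¹ * ∫⁻ x in Q.set,
    (Q.vol⁻¹ * ∫⁻ t in Q.set,
        ENNReal.ofReal (matOpNorm ((W.W x).rpowH (1 / p) * (W.W t).rpowH (-(1 / p))))
          ^ (p / (p - 1))) ^ (p - 1)

/-- The norm of `f` in `L^p(W)`. -/
def MatrixWeight.wNorm {d n : ℕ} (W : MatrixWeight d n) (p : ℝ)
    (f : Rd d → Fin n → ℝ) : ℝ≥0∞ :=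
  (∫⁻ x, ENNReal.ofReal (enorm' (((W.W x).rpowH (1 / p)).mulVec (f x))) ^ p) ^ (1 / p)

/-- The Euclidean length `|V_ρ(T_{n,*} f⃗)(x)|` of the componentwise variation vector
(with values in `[0,∞]`). -/
def CZO.varVecNorm {d : ℕ} (n : ℕ) (S : CZO d) (ρ : ℝ) (f : Rd d → Fin n → ℝ)
    (x : Rd d) : ℝ≥0∞ :=
  (∑ j : Fin n, S.var ρ (fun y => f y j) x ^ (2 : ℝ)) ^ ((1 : ℝ) / 2)

/-- An `η`-sparse family of cubes. -/
def IsSparse {d : ℕ} (η : ℝ) (F : Set (Cube d)) : Prop :=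
  ∃ E : Cube d → Set (Rd d),
    (∀ Q ∈ F, E Q ⊆ Q.set ∧ MeasurableSet (E Q) ∧ ENNReal.ofReal η * Q.vol ≤ volume (E Q)) ∧
    F.PairwiseDisjoint E

/-- The convex body average `⟨⟨f⃗⟩⟩_{tQ}` of a vector-valued function over the cube `tQ`. -/
def convexBodyAvg {d n : ℕ} (f : Rd d → Fin n → ℝ) (Q : Cube d) (t : ℝ) :
    Set (Fin n → ℝ) :=
  {v | ∃ φ : Rd d → ℝ, Measurable φ ∧ (∀ y, |φ y| ≤ 1) ∧
    ∀ j, v j = (∫ y in Q.dilate t, φ y * f y j) / (t * Q.l) ^ d}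

/-!
Decompose `f χ_{3Q₀} = g + b` at height `t ≈ ⟨|f|⟩_{3Q₀}`. Call a point good if `V_ρ(T_* g) ≤ t`
there, it is far from every Calderón–Zygmund cube relative to the size of the cube, and a potential
built from `ω` and the masses of `b` on the cubes is at most `t`; the Dini condition makes the
integral of each term of this potential comparable to the mass of its cube, so the bad points form
a set of measure less than `ε|Q₀|`. Take the `P_j` to be the maximal dyadic subcubes of `Q₀` inside
an open set of measure less than `ε|Q₀|` containing the bad points, so that the parent of each `P_j`
contains a good point. Away from `3P_j`, moving from that good point to a point of `P_j` costs only
`O(t)`: the variation of the far part of `g` changes by `O(t)` by smoothness of the kernel, and the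
variation of the far part of `b` is controlled by the cancellation of `b` on cubes lying inside one
annulus, while the cubes crossing the boundary spheres are summed in `ℓ²`, which is where `ρ ≥ 2`
enters.
-/

open scoped NNReal

attribute [ext] Cube

/-! ### Cubes -/

section EuclideanCoordinates

variable {d : ℕ}

theorem euclidean_dist_le_card_mul {x y : Rd d} {l : ℝ} (h : ∀ i, |x i - y i| ≤ l) :
    dist x y ≤ d * l := by
  rw [EuclideanSpace.dist_eq]
  calc √(∑ i, dist (x i) (y i) ^ 2) ≤ ∑ i, dist (x i) (y i) := by
        rw [Real.sqrt_le_left (Finset.sum_nonneg fun i _ => dist_nonneg)]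
        exact Finset.sum_sq_le_sq_sum_of_nonneg fun i _ => dist_nonneg
    _ ≤ ∑ _i : Fin d, l := Finset.sum_le_sum fun i _ => by rw [Real.dist_eq]; exact h i
    _ = d * l := by simp

theorem abs_coord_sub_le_dist (x y : Rd d) (i : Fin d) : |x i - y i| ≤ dist x y := by
  rw [dist_eq_norm]
  simpa using PiLp.norm_apply_le (x - y) i

end EuclideanCoordinates

namespace Cube

variable {d : ℕ} (Q : Cube d)

/-- The center of a cube as a point of `ℝ^d`. -/
def center : Rd d := WithLp.toLp 2 Q.c

/-- A convenient upper bound `d · ℓ(Q)` for the Euclidean diameter `√d · ℓ(Q)` of a cube. -/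
def diamBound : ℝ := d * Q.l

/-- The dilate `tQ` as a cube; its underlying set is `Q.dilate t`. -/
def scale (t : ℝ) (ht : 0 < t) : Cube d := ⟨Q.c, t * Q.l, mul_pos ht Q.hl⟩

theorem center_mem : Q.center ∈ Q.set := by
  have := Q.hl
  intro i
  simp only [center]
  constructor <;> linarith

theorem diamBound_pos (hd : 0 < d) : 0 < Q.diamBound :=
  mul_pos (Nat.cast_pos.2 hd) Q.hl

theorem diamBound_nonneg : 0 ≤ Q.diamBound :=
  mul_nonneg d.cast_nonneg Q.hl.le

variable {Q} in
theorem dist_le_diamBound {x y : Rd d} (hx : x ∈ Q.set) (hy : y ∈ Q.set) :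
    dist x y ≤ Q.diamBound :=
  euclidean_dist_le_card_mul fun i => by
    have := hx i; have := hy i
    rw [abs_le]; constructor <;> linarith

theorem set_eq_preimage_pi : Q.set = (WithLp.ofLp : Rd d → Fin d → ℝ) ⁻¹'
    (univ.pi fun i => Ico (Q.c i - Q.l / 2) (Q.c i + Q.l / 2)) := by
  ext x; simp [Cube.set]

theorem measurableSet_set : MeasurableSet Q.set := by
  rw [Q.set_eq_preimage_pi]
  exact (PiLp.volume_preserving_ofLp (Fin d)).measurable
    (MeasurableSet.univ_pi fun i => measurableSet_Ico)

theorem measurableSet_dilate {t : ℝ} (ht : 0 < t) : MeasurableSet (Q.dilate t) :=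
  (Q.scale t ht).measurableSet_set

theorem volume_set : volume Q.set = Q.vol := by
  rw [Q.set_eq_preimage_pi, (PiLp.volume_preserving_ofLp (Fin d)).measure_preimage
    (MeasurableSet.univ_pi fun i => measurableSet_Ico).nullMeasurableSet, Real.volume_pi_Ico]
  have side (i : Fin d) : Q.c i + Q.l / 2 - (Q.c i - Q.l / 2) = Q.l := by ring
  simp only [side, Finset.prod_const, Cube.vol, Finset.card_univ, Fintype.card_fin,
    ENNReal.ofReal_pow Q.hl.le]

theorem vol_pos : 0 < Q.vol := ENNReal.ofReal_pos.2 (pow_pos Q.hl d)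

theorem vol_ne_top : Q.vol ≠ ∞ := ENNReal.ofReal_ne_top

variable {Q}

theorem side_le_dist_of_notMem_dilate_three {x y : Rd d} (hx : x ∈ Q.set)
    (hy : y ∉ Q.dilate 3) : Q.l ≤ dist x y := by
  simp only [Cube.dilate, mem_ofPred_eq, not_forall, not_and_or, not_le, not_lt] at hy
  obtain ⟨i, hi⟩ := hy
  have := hx i
  refine le_trans ?_ (abs_coord_sub_le_dist x y i)
  rcases hi with hi | hi
  · exact le_abs.2 (.inl (by linarith))
  · exact le_abs.2 (.inr (by linarith))

theorem dist_le_of_mem_dilate_three {x y : Rd d} (hx : x ∈ Q.set) (hy : y ∈ Q.dilate 3) :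
    dist x y ≤ 2 * Q.diamBound := by
  have h : dist x y ≤ d * (2 * Q.l) := euclidean_dist_le_card_mul fun i => by
    have := hx i; have := hy i
    rw [abs_le]; constructor <;> linarith
  rw [diamBound]; linarith

end Cube

theorem tsum_vol_eq_volume_biUnion {d : ℕ} {F : Set (Cube d)} (hc : F.Countable)
    (hF : F.PairwiseDisjoint Cube.set) :
    ∑' P : F, (P : Cube d).vol = volume (⋃ P ∈ F, P.set) := by
  rw [measure_biUnion hc hF fun P _ => P.measurableSet_set]
  exact tsum_congr fun P => (Cube.volume_set _).symm

/-! ### Dyadic subcubes -/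

namespace Cube

variable {d : ℕ} (Q : Cube d)

/-- The `i`-th coordinate of `x` in the affine frame that maps `Q` onto `[0,1)^d`. -/
def unitCoord (x : Rd d) (i : Fin d) : ℝ := (x i - (Q.c i - Q.l / 2)) / Q.l

/-- The dyadic subcube of generation `k` of `Q` that contains `x`, for `x ∈ Q`. -/
def subcubeAt (k : ℕ) (x : Rd d) : Cube d where
  c i := Q.c i - Q.l / 2 + ((⌊Q.unitCoord x i * 2 ^ k⌋₊ : ℝ) + 1 / 2) * (Q.l / 2 ^ k)
  l := Q.l / 2 ^ k
  hl := div_pos Q.hl (by positivity)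

theorem apply_eq_unitCoord (x : Rd d) (i : Fin d) :
    x i = Q.c i - Q.l / 2 + Q.unitCoord x i * Q.l := by
  have := Q.hl.ne'
  rw [unitCoord]; field_simp; ring

theorem mem_set_iff_unitCoord {x : Rd d} :
    x ∈ Q.set ↔ ∀ i, 0 ≤ Q.unitCoord x i ∧ Q.unitCoord x i < 1 := by
  have hl := Q.hl
  refine forall_congr' fun i => ?_
  rw [unitCoord, le_div_iff₀ hl, div_lt_iff₀ hl]
  constructor <;> rintro ⟨h₁, h₂⟩ <;> constructor <;> linarith

theorem mem_set_iff_of_grid {P : Cube d} {k : ℕ} {m : Fin d → ℕ} (hl : P.l = Q.l / 2 ^ k)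
    (hc : ∀ i, P.c i = Q.c i - Q.l / 2 + ((m i : ℝ) + 1 / 2) * (Q.l / 2 ^ k)) {x : Rd d} :
    x ∈ P.set ↔ ∀ i, (m i : ℝ) ≤ Q.unitCoord x i * 2 ^ k ∧ Q.unitCoord x i * 2 ^ k < m i + 1 := by
  refine forall_congr' fun i => ?_
  have hs : 0 < Q.l / 2 ^ k := div_pos Q.hl (by positivity)
  have hx : x i = Q.c i - Q.l / 2 + Q.unitCoord x i * 2 ^ k * (Q.l / 2 ^ k) := by
    rw [Q.apply_eq_unitCoord x i]; field_simp
  have lower : m i * (Q.l / 2 ^ k) ≤ Q.unitCoord x i * 2 ^ k * (Q.l / 2 ^ k) ↔ _ :=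
    mul_le_mul_iff_of_pos_right hs
  have upper : Q.unitCoord x i * 2 ^ k * (Q.l / 2 ^ k) < (m i + 1) * (Q.l / 2 ^ k) ↔ _ :=
    mul_lt_mul_iff_of_pos_right hs
  rw [hl, hc, hx, ← lower, ← upper]
  constructor <;> rintro ⟨h₁, h₂⟩ <;> constructor <;> linarith

variable {Q}

theorem mem_subcubeAt_iff {k : ℕ} {x y : Rd d} (hy : y ∈ Q.set) :
    y ∈ (Q.subcubeAt k x).set ↔
      ∀ i, ⌊Q.unitCoord y i * 2 ^ k⌋₊ = ⌊Q.unitCoord x i * 2 ^ k⌋₊ := by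
  rw [Q.mem_set_iff_of_grid (P := Q.subcubeAt k x) rfl fun _ => rfl]
  have hy := (Q.mem_set_iff_unitCoord).1 hy
  exact forall_congr' fun i => (Nat.floor_eq_iff (mul_nonneg (hy i).1 (by positivity))).symm

theorem mem_subcubeAt_self (k : ℕ) {x : Rd d} (hx : x ∈ Q.set) : x ∈ (Q.subcubeAt k x).set :=
  (mem_subcubeAt_iff hx).2 fun _ => rfl

theorem isDyadicSubcube_subcubeAt (k : ℕ) {x : Rd d} (hx : x ∈ Q.set) :
    IsDyadicSubcube Q (Q.subcubeAt k x) := by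
  refine ⟨k, fun i => ⌊Q.unitCoord x i * 2 ^ k⌋₊, fun i => ?_, rfl, fun _ => rfl⟩
  obtain ⟨h₀, h₁⟩ := (Q.mem_set_iff_unitCoord).1 hx i
  rw [Nat.floor_lt (by positivity)]
  push_cast
  exact mul_lt_of_lt_one_left (by positivity) h₁

theorem subcubeAt_zero {x : Rd d} (hx : x ∈ Q.set) : Q.subcubeAt 0 x = Q := by
  have floor_eq (i : Fin d) : ⌊Q.unitCoord x i * 2 ^ 0⌋₊ = 0 := by
    rw [pow_zero, mul_one, Nat.floor_eq_zero]
    exact ((Q.mem_set_iff_unitCoord).1 hx i).2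
  ext i
  · simp only [subcubeAt, floor_eq]; push_cast; ring
  · simp [subcubeAt]

theorem subcubeAt_anti {j k : ℕ} (hjk : j ≤ k) {x y : Rd d} (hy : y ∈ Q.set)
    (h : y ∈ (Q.subcubeAt k x).set) : y ∈ (Q.subcubeAt j x).set := by
  have floor_coarse (z : Rd d) (i : Fin d) :
      ⌊Q.unitCoord z i * 2 ^ j⌋₊ = ⌊Q.unitCoord z i * 2 ^ k⌋₊ / 2 ^ (k - j) := by
    rw [← Nat.floor_div_natCast, ← Nat.sub_add_cancel hjk, pow_add, Nat.add_sub_cancel]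
    push_cast
    congr 1
    field_simp
  rw [mem_subcubeAt_iff hy] at h ⊢
  intro i
  rw [floor_coarse, floor_coarse, h i]

theorem side_subcubeAt_lt_iff {j k : ℕ} {x y : Rd d} :
    (Q.subcubeAt j x).l < (Q.subcubeAt k y).l ↔ k < j := by
  have := Q.hl
  simp only [subcubeAt]
  rw [div_lt_div_iff_of_pos_left this (by positivity) (by positivity)]
  exact pow_lt_pow_iff_right₀ one_lt_two

end Cube

namespace IsDyadicSubcube

variable {d : ℕ} {P Q Q₀ : Cube d}

theorem side_le (h : IsDyadicSubcube Q₀ P) : P.l ≤ Q₀.l := by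
  obtain ⟨k, -, -, hl, -⟩ := h
  rw [hl]
  exact div_le_self Q₀.hl.le (one_le_pow₀ one_le_two)

theorem corner_mem_Icc (h : IsDyadicSubcube Q₀ P) (i : Fin d) :
    Q₀.c i - Q₀.l / 2 ≤ P.c i - P.l / 2 ∧ P.c i + P.l / 2 ≤ Q₀.c i + Q₀.l / 2 := by
  obtain ⟨k, m, hm, hl, hc⟩ := h
  have hs : 0 < Q₀.l / 2 ^ k := div_pos Q₀.hl (by positivity)
  have : (0 : ℝ) ≤ m i := by positivity
  have hm₁ : (m i : ℝ) + 1 ≤ 2 ^ k := by exact_mod_cast hm i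
  have side : 2 ^ k * (Q₀.l / 2 ^ k) = Q₀.l := by field_simp
  rw [hl, hc]
  constructor <;> nlinarith

theorem set_subset (h : IsDyadicSubcube Q₀ P) : P.set ⊆ Q₀.set := fun _ hx i =>
  ⟨(h.corner_mem_Icc i).1.trans (hx i).1, (hx i).2.trans_le (h.corner_mem_Icc i).2⟩

theorem dilate_three_subset (h : IsDyadicSubcube Q₀ P) : P.dilate 3 ⊆ Q₀.dilate 3 := by
  intro x hx i
  have := h.corner_mem_Icc i
  have := h.side_le
  have := hx i
  constructor <;> linarith

theorem exists_eq_subcubeAt (h : IsDyadicSubcube Q₀ P) :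
    ∃ k, ∀ x ∈ P.set, P = Q₀.subcubeAt k x := by
  obtain ⟨k, m, -, hl, hc⟩ := h
  refine ⟨k, fun x hx => ?_⟩
  have floor_eq (i : Fin d) : ⌊Q₀.unitCoord x i * 2 ^ k⌋₊ = m i := by
    have := (Q₀.mem_set_iff_of_grid hl hc).1 hx i
    exact (Nat.floor_eq_iff ((Nat.cast_nonneg _).trans this.1)).2 this
  ext i
  · simp only [hc, Cube.subcubeAt, floor_eq]
  · exact hl

theorem countable_setOf (Q₀ : Cube d) : {P | IsDyadicSubcube Q₀ P}.Countable := by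
  refine (countable_range fun a : ℕ × (Fin d → ℕ) => (⟨fun i => Q₀.c i - Q₀.l / 2 +
    ((a.2 i : ℝ) + 1 / 2) * (Q₀.l / 2 ^ a.1), Q₀.l / 2 ^ a.1,
    div_pos Q₀.hl (by positivity)⟩ : Cube d)).mono ?_
  rintro P ⟨k, m, -, hl, hc⟩
  exact ⟨(k, m), by ext i; exacts [(hc i).symm, hl.symm]⟩

theorem exists_parent (h : IsDyadicSubcube Q₀ P) (hne : P ≠ Q₀) :
    ∃ P', IsDyadicSubcube Q₀ P' ∧ P.set ⊆ P'.set ∧ P'.l = 2 * P.l := by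
  obtain ⟨k, hk⟩ := h.exists_eq_subcubeAt
  have hx := h.set_subset P.center_mem
  have hP := hk _ P.center_mem
  set x := P.center
  cases k with
  | zero => exact absurd (hP.trans (Cube.subcubeAt_zero hx)) hne
  | succ k =>
    refine ⟨_, Cube.isDyadicSubcube_subcubeAt k hx, fun y hy => ?_, ?_⟩
    · exact Cube.subcubeAt_anti k.le_succ (h.set_subset hy) (hP ▸ hy)
    · rw [hP]; simp only [Cube.subcubeAt, pow_succ]; field_simp

end IsDyadicSubcube

namespace Cube

variable {d : ℕ} (Q₀ : Cube d) (p : Cube d → Prop)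

/-- The maximal dyadic subcubes of `Q₀` with the property `p`: no larger dyadic subcube of `Q₀`
that contains them has it. -/
def maximalSubcubes : Set (Cube d) :=
  {P | IsDyadicSubcube Q₀ P ∧ p P ∧
    ∀ P', IsDyadicSubcube Q₀ P' → P.set ⊆ P'.set → P.l < P'.l → ¬ p P'}

theorem countable_maximalSubcubes : (Q₀.maximalSubcubes p).Countable :=
  (IsDyadicSubcube.countable_setOf Q₀).mono fun _ hP => hP.1

theorem pairwiseDisjoint_maximalSubcubes : (Q₀.maximalSubcubes p).PairwiseDisjoint Cube.set := by
  rintro P ⟨hP, hpP, hmaxP⟩ Q ⟨hQ, hpQ, hmaxQ⟩ hne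
  rw [Function.onFun, disjoint_left]
  intro x hxP hxQ
  obtain ⟨j, hj⟩ := hP.exists_eq_subcubeAt
  obtain ⟨k, hk⟩ := hQ.exists_eq_subcubeAt
  have hPx := hj x hxP
  have hQx := hk x hxQ
  rcases lt_trichotomy j k with h | rfl | h
  · refine hmaxQ P hP (fun y hy => ?_) ?_ hpP
    · exact hPx ▸ subcubeAt_anti h.le (hQ.set_subset hy) (hQx ▸ hy)
    · rw [hPx, hQx]; exact side_subcubeAt_lt_iff.2 h
  · exact hne (hPx.trans hQx.symm)
  · refine hmaxP Q hQ (fun y hy => ?_) ?_ hpQ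
    · exact hQx ▸ subcubeAt_anti h.le (hP.set_subset hy) (hPx ▸ hy)
    · rw [hPx, hQx]; exact side_subcubeAt_lt_iff.2 h

variable {Q₀ p}

theorem exists_maximalSubcubes_mem {Q : Cube d} (hQ : IsDyadicSubcube Q₀ Q) (hp : p Q) {x : Rd d}
    (hx : x ∈ Q.set) : ∃ P ∈ Q₀.maximalSubcubes p, x ∈ P.set := by
  have hx₀ := hQ.set_subset hx
  have hex : ∃ k, p (Q₀.subcubeAt k x) := by
    obtain ⟨k, hk⟩ := hQ.exists_eq_subcubeAt
    exact ⟨k, hk x hx ▸ hp⟩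
  refine ⟨_, ⟨isDyadicSubcube_subcubeAt _ hx₀, Nat.find_spec hex, fun P' hP' hsub hl hpP' => ?_⟩,
    mem_subcubeAt_self _ hx₀⟩
  obtain ⟨j, hj⟩ := hP'.exists_eq_subcubeAt
  have hP'x := hj x (hsub (mem_subcubeAt_self _ hx₀))
  rw [hP'x] at hl hpP'
  exact Nat.find_min hex (side_subcubeAt_lt_iff.1 hl) hpP'

theorem exists_parent_of_mem_maximalSubcubes (h₀ : ¬ p Q₀) {P : Cube d}
    (hP : P ∈ Q₀.maximalSubcubes p) :
    ∃ P', IsDyadicSubcube Q₀ P' ∧ P.set ⊆ P'.set ∧ P'.l = 2 * P.l ∧ ¬ p P' := by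
  obtain ⟨hdyad, hp, hmax⟩ := hP
  obtain ⟨P', hP', hsub, hl⟩ := hdyad.exists_parent (by rintro rfl; exact h₀ hp)
  exact ⟨P', hP', hsub, hl, hmax P' hP' hsub (by linarith [P.hl])⟩

theorem exists_subcubeAt_subset_of_isOpen {U : Set (Rd d)} (hU : IsOpen U) {x : Rd d}
    (hx : x ∈ Q₀.set) (hxU : x ∈ U) : ∃ k, (Q₀.subcubeAt k x).set ⊆ U := by
  obtain ⟨r, hr, hrU⟩ := Metric.isOpen_iff.1 hU x hxU
  obtain ⟨k, hk⟩ : ∃ k : ℕ, Q₀.diamBound * (1 / 2 : ℝ) ^ k < r := by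
    have lim := (tendsto_pow_atTop_nhds_zero_of_lt_one (r := (1 / 2 : ℝ)) (by norm_num)
      (by norm_num)).const_mul Q₀.diamBound
    rw [mul_zero] at lim
    exact (lim.eventually (gt_mem_nhds hr)).exists
  refine ⟨k, fun y hy => hrU (Metric.mem_ball.2 ?_)⟩
  calc dist y x ≤ (Q₀.subcubeAt k x).diamBound := dist_le_diamBound hy (mem_subcubeAt_self k hx)
    _ = Q₀.diamBound * (1 / 2 : ℝ) ^ k := by
        simp only [diamBound, subcubeAt, one_div, inv_pow]; ring
    _ < r := hk

theorem inter_subset_biUnion_maximalSubcubes {U : Set (Rd d)} (hU : IsOpen U) :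
    Q₀.set ∩ U ⊆ ⋃ P ∈ Q₀.maximalSubcubes (·.set ⊆ U), P.set := by
  rintro x ⟨hx, hxU⟩
  obtain ⟨k, hk⟩ := exists_subcubeAt_subset_of_isOpen hU hx hxU
  obtain ⟨P, hP, hxP⟩ := exists_maximalSubcubes_mem (p := (·.set ⊆ U))
    (isDyadicSubcube_subcubeAt k hx) hk (mem_subcubeAt_self k hx)
  exact mem_biUnion hP hxP

theorem tsum_vol_maximalSubcubes_le (Q₀ : Cube d) (U : Set (Rd d)) :
    ∑' P : Q₀.maximalSubcubes (·.set ⊆ U), (P : Cube d).vol ≤ volume U := by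
  rw [tsum_vol_eq_volume_biUnion (countable_maximalSubcubes _ _)
    (pairwiseDisjoint_maximalSubcubes _ _)]
  exact measure_mono (iUnion₂_subset fun P hP => hP.2.1)

end Cube

/-! ### Dyadic decompositions of integrals -/

/-- The volume of the unit ball of `ℝ^d`. -/
def unitBallVolume (d : ℕ) : ℝ≥0∞ := volume (Metric.ball (0 : Rd d) 1)

theorem unitBallVolume_ne_top (d : ℕ) : unitBallVolume d ≠ ∞ := measure_ball_lt_top.ne

theorem volume_closedBall_eq {d : ℕ} (x : Rd d) {r : ℝ} (hr : 0 ≤ r) :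
    volume (Metric.closedBall x r) = ENNReal.ofReal (r ^ d) * unitBallVolume d := by
  rw [Measure.addHaar_closedBall _ _ hr, finrank_euclideanSpace_fin]; rfl

theorem exists_dyadic_scale {δ r : ℝ} (hδ : 0 < δ) (hr : δ ≤ r) :
    ∃ k : ℕ, 2 ^ k * δ ≤ r ∧ r < 2 ^ (k + 1) * δ := by
  obtain ⟨k, hk, hk'⟩ := exists_nat_pow_near ((one_le_div hδ).2 hr) (one_lt_two : (1 : ℝ) < 2)
  exact ⟨k, (le_div_iff₀ hδ).1 hk, (div_lt_iff₀ hδ).1 hk'⟩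

section DiniModulus

theorem dyadic_value_le_lintegral {ω : ℝ → ℝ} (hmono : MonotoneOn ω (Ici 0))
    (hnonneg : ∀ t, 0 ≤ t → 0 ≤ ω t) (k : ℕ) :
    ENNReal.ofReal (ω ((1 / 2) ^ (k + 1))) ≤
      2 * ∫⁻ t in Ioo (((1 : ℝ) / 2) ^ (k + 1)) ((1 / 2) ^ k), ENNReal.ofReal (ω t / t) := by
  set a : ℝ := (1 / 2) ^ (k + 1) with ha
  have hak : ((1 : ℝ) / 2) ^ k = 2 * a := by rw [ha, pow_succ]; ring
  have ha₀ : 0 < a := by positivity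
  have hω := hnonneg a ha₀.le
  rw [hak]
  calc ENNReal.ofReal (ω a) = 2 * (ENNReal.ofReal (ω a / (2 * a)) * volume (Ioo a (2 * a))) := by
        rw [Real.volume_Ioo, ← ENNReal.ofReal_mul (by positivity), ← ENNReal.ofReal_ofNat,
          ← ENNReal.ofReal_mul zero_le_two]
        congr 1; field_simp; ring
    _ = 2 * ∫⁻ _ in Ioo a (2 * a), ENNReal.ofReal (ω a / (2 * a)) := by rw [setLIntegral_const]
    _ ≤ _ := by
        refine mul_le_mul_right (setLIntegral_mono' measurableSet_Ioo fun t ht => ?_) _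
        have ht₀ : 0 < t := ha₀.trans ht.1
        exact ENNReal.ofReal_le_ofReal <|
          div_le_div₀ (hnonneg t ht₀.le) (hmono ha₀.le ht₀.le ht.1.le) ht₀ ht.2.le

theorem tsum_dyadic_ne_top_of_dini {ω : ℝ → ℝ} (hmono : MonotoneOn ω (Ici 0))
    (hnonneg : ∀ t, 0 ≤ t → 0 ≤ ω t) (hdini : IntegrableOn (fun t => ω t / t) (Ioo (0 : ℝ) 1)) :
    ∑' k : ℕ, ENNReal.ofReal (ω ((1 / 2) ^ k)) ≠ ∞ := by
  have hanti : Antitone fun k : ℕ => ((1 : ℝ) / 2) ^ k := fun _ _ hab =>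
    pow_le_pow_of_le_one (by norm_num) (by norm_num) hab
  rw [tsum_eq_zero_add' ENNReal.summable]
  refine ENNReal.add_ne_top.2 ⟨ENNReal.ofReal_ne_top, ne_top_of_le_ne_top
    (ENNReal.mul_ne_top (ENNReal.ofNat_ne_top (n := 2)) hdini.lintegral_lt_top.ne) ?_⟩
  calc ∑' k : ℕ, ENNReal.ofReal (ω ((1 / 2) ^ (k + 1)))
      ≤ ∑' k : ℕ, 2 * ∫⁻ t in Ioo (((1 : ℝ) / 2) ^ (k + 1)) ((1 / 2) ^ k),
          ENNReal.ofReal (ω t / t) :=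
        ENNReal.tsum_le_tsum (dyadic_value_le_lintegral hmono hnonneg)
    _ = 2 * ∫⁻ t in ⋃ k : ℕ, Ioo (((1 : ℝ) / 2) ^ (k + 1)) ((1 / 2) ^ k),
          ENNReal.ofReal (ω t / t) := by
        rw [ENNReal.tsum_mul_left]
        exact congrArg (2 * ·) (lintegral_iUnion (fun _ => measurableSet_Ioo)
          hanti.pairwise_disjoint_on_Ioo_succ _).symm
    _ ≤ 2 * ∫⁻ t in Ioo (0 : ℝ) 1, ENNReal.ofReal (ω t / t) := by
        refine mul_le_mul_right (lintegral_mono_set (iUnion_subset fun k t ht => ?_)) _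
        exact ⟨lt_trans (by positivity) ht.1,
          ht.2.trans_le (pow_le_one₀ (by norm_num) (by norm_num))⟩

theorem sqrt_half_pow (k : ℕ) : √((1 / 2 : ℝ) ^ k) = √(1 / 2) ^ k := by
  rw [Real.sqrt_eq_iff_mul_self_eq (by positivity) (by positivity), ← mul_pow,
    Real.mul_self_sqrt (by norm_num)]

theorem tsum_ofReal_sqrt_half_pow_ne_top :
    ∑' k : ℕ, ENNReal.ofReal √((1 / 2 : ℝ) ^ k) ≠ ∞ := by
  simp_rw [sqrt_half_pow]
  refine (summable_geometric_of_lt_one (Real.sqrt_nonneg _) ?_).tsum_ofReal_ne_top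
  rw [Real.sqrt_lt' one_pos]; norm_num

end DiniModulus

theorem setLIntegral_dyadicShell_le {d : ℕ} {φ : ℝ → ℝ} (hφ : Monotone φ) (hφ₀ : ∀ t, 0 ≤ φ t)
    (c : Rd d) {δ : ℝ} (hδ : 0 < δ) (k : ℕ) :
    ∫⁻ z in {z | 2 ^ k * δ ≤ dist c z ∧ dist c z < 2 ^ (k + 1) * δ},
        ENNReal.ofReal (φ (δ / dist c z) / dist c z ^ d) ≤
      ENNReal.ofReal (φ ((1 / 2) ^ k)) * (ENNReal.ofReal (2 ^ d) * unitBallVolume d) := by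
  set r : ℝ := 2 ^ k * δ with hr
  have hr₀ : 0 < r := by positivity
  have hr' : 2 ^ (k + 1) * δ = 2 * r := by rw [hr, pow_succ]; ring
  have hδr : δ = (1 / 2) ^ k * r := by rw [hr, one_div, inv_pow]; field_simp
  rw [hr']
  have hdist : Measurable fun z : Rd d => dist c z := by fun_prop
  have hmeas : MeasurableSet {z : Rd d | r ≤ dist c z ∧ dist c z < 2 * r} :=
    (measurableSet_le measurable_const hdist).inter (measurableSet_lt hdist measurable_const)
  calc _ ≤ ∫⁻ _ in {z : Rd d | r ≤ dist c z ∧ dist c z < 2 * r},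
        ENNReal.ofReal (φ ((1 / 2) ^ k) / r ^ d) := by
        refine setLIntegral_mono' hmeas fun z hz => ENNReal.ofReal_le_ofReal ?_
        refine div_le_div₀ (hφ₀ _) (hφ ?_) (by positivity) (pow_le_pow_left₀ hr₀.le hz.1 d)
        rw [div_le_iff₀ (hr₀.trans_le hz.1), hδr]
        exact mul_le_mul_of_nonneg_left hz.1 (by positivity)
    _ = ENNReal.ofReal (φ ((1 / 2) ^ k) / r ^ d) *
          volume {z : Rd d | r ≤ dist c z ∧ dist c z < 2 * r} := setLIntegral_const _ _
    _ ≤ ENNReal.ofReal (φ ((1 / 2) ^ k) / r ^ d) * volume (Metric.closedBall c (2 * r)) := by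
        refine mul_le_mul_right (measure_mono fun z hz => ?_) _
        rw [Metric.mem_closedBall, dist_comm]; exact hz.2.le
    _ = _ := by
        rw [volume_closedBall_eq _ (by positivity), ← mul_assoc,
          ← mul_assoc (ENNReal.ofReal (φ _)), ← ENNReal.ofReal_mul (hφ₀ _),
          ← ENNReal.ofReal_mul (div_nonneg (hφ₀ _) (by positivity)), mul_pow 2 r,
          div_mul_eq_mul_div, ← mul_assoc, mul_div_cancel_right₀ _ (by positivity)]

theorem setLIntegral_modulus_div_dist_pow_le {d : ℕ} {φ : ℝ → ℝ} (hφ : Monotone φ)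
    (hφ₀ : ∀ t, 0 ≤ φ t) (c : Rd d) {δ : ℝ} (hδ : 0 < δ) :
    ∫⁻ z in {z | δ ≤ dist c z}, ENNReal.ofReal (φ (δ / dist c z) / dist c z ^ d) ≤
      (∑' k : ℕ, ENNReal.ofReal (φ ((1 / 2) ^ k))) *
        (ENNReal.ofReal (2 ^ d) * unitBallVolume d) := by
  have cover : {z : Rd d | δ ≤ dist c z} ⊆
      ⋃ k : ℕ, {z | 2 ^ k * δ ≤ dist c z ∧ dist c z < 2 ^ (k + 1) * δ} := fun z hz =>
    mem_iUnion.2 (exists_dyadic_scale hδ hz)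
  rw [← ENNReal.tsum_mul_right]
  exact (lintegral_mono_set cover).trans ((lintegral_iUnion_le _ _).trans
    (ENNReal.tsum_le_tsum (setLIntegral_dyadicShell_le hφ hφ₀ c hδ)))

/-! ### A weight that blows up at a sphere -/

section SphereWeight

variable {d : ℕ} (x : Rd d) (s : ℝ)

/-- The weight `|x-y|^{1/2-d} ||x-y|-s|^{-1/2}` on `s/2 ≤ |x-y| ≤ 2s`, which blows up at the sphere
of radius `s` about `x` but has an integral bounded independently of `x` and `s`. -/
def sphereWeight (y : Rd d) : ℝ≥0∞ :=
  {y | s / 2 ≤ dist x y ∧ dist x y ≤ 2 * s}.indicator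
    (fun y => ENNReal.ofReal (√(dist x y) / dist x y ^ d) *
      (ENNReal.ofReal √|dist x y - s|)⁻¹) y

/-- The points whose distance to the sphere of radius `s` about `x` is comparable to `2^{-k}s`. -/
def sphereShell (k : ℕ) : Set (Rd d) :=
  {y | (1 / 2) ^ (k + 1) * s < |dist x y - s| ∧ |dist x y - s| ≤ (1 / 2) ^ k * s}

theorem measurable_sphereWeight : Measurable (sphereWeight x s) := by
  have hdist : Measurable fun y : Rd d => dist x y := by fun_prop
  have : Measurable fun y : Rd d => √|dist x y - s| :=
    (by fun_prop : Continuous fun y : Rd d => √|dist x y - s|).measurable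
  exact Measurable.indicator (by fun_prop)
    ((measurableSet_le measurable_const hdist).inter (measurableSet_le hdist measurable_const))

theorem measurableSet_sphereShell (k : ℕ) : MeasurableSet (sphereShell x s k) := by
  have : Measurable fun y : Rd d => |dist x y - s| :=
    (by fun_prop : Continuous fun y : Rd d => |dist x y - s|).measurable
  exact (measurableSet_lt measurable_const this).inter (measurableSet_le this measurable_const)

variable {s}

theorem volume_closedBall_diff_ball_le (hd : 0 < d) (hs : 0 ≤ s) {u : ℝ} (hu₀ : 0 ≤ u)
    (hu₁ : u ≤ 1) : volume (Metric.closedBall x ((1 + u) * s) \ Metric.ball x ((1 - u) * s)) ≤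
      ENNReal.ofReal (s ^ d * (2 * d * 2 ^ d * u)) * unitBallVolume d := by
  have : Nonempty (Fin d) := ⟨⟨0, hd⟩⟩
  have hu : 0 ≤ 1 - u := by linarith
  have pow_diff : (1 + u) ^ d - (1 - u) ^ d ≤ 2 * d * 2 ^ d * u :=
    calc (1 + u) ^ d - (1 - u) ^ d ≤ |1 + u - (1 - u)| * d * max |1 + u| |1 - u| ^ (d - 1) :=
          (le_abs_self _).trans (abs_pow_sub_pow_le _ _ _)
      _ ≤ 2 * u * d * 2 ^ d := by
          have : max |1 + u| |1 - u| ≤ 2 := by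
            rw [abs_of_nonneg (by positivity), abs_of_nonneg hu]
            exact max_le (by linarith) (by linarith)
          rw [show 1 + u - (1 - u) = 2 * u by ring, abs_of_nonneg (by positivity)]
          gcongr ?_ * ?_
          exact (pow_le_pow_left₀ (by positivity) this _).trans
            (pow_le_pow_right₀ one_le_two (Nat.sub_le d 1))
      _ = 2 * d * 2 ^ d * u := by ring
  rw [measure_sdiff
    (Metric.ball_subset_closedBall.trans (Metric.closedBall_subset_closedBall (by nlinarith)))
    measurableSet_ball.nullMeasurableSet measure_ball_lt_top.ne,
    volume_closedBall_eq _ (by positivity), Measure.addHaar_ball _ _ (by positivity),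
    finrank_euclideanSpace_fin]
  change _ - _ * unitBallVolume d ≤ _
  rw [← ENNReal.sub_mul fun _ _ => unitBallVolume_ne_top d,
    ← ENNReal.ofReal_sub _ (by positivity), mul_pow, mul_pow, ← sub_mul, mul_comm (_ - _)]
  gcongr

theorem volume_sphereShell_le (hd : 0 < d) (hs : 0 ≤ s) (k : ℕ) : volume (sphereShell x s k) ≤
    ENNReal.ofReal (s ^ d * (2 * d * 2 ^ d * (1 / 2) ^ k)) * unitBallVolume d := by
  refine (measure_mono fun y hy => ?_).trans (volume_closedBall_diff_ball_le x hd hs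
    (by positivity) (pow_le_one₀ (by norm_num) (by norm_num)))
  have := abs_le.1 hy.2
  rw [Set.mem_sdiff, Metric.mem_closedBall, Metric.mem_ball, dist_comm, not_lt]
  constructor <;> linarith

variable {x}

theorem sphereWeight_le_of_mem_sphereShell (hs : 0 < s) {k : ℕ} {y : Rd d}
    (hy : y ∈ sphereShell x s k) :
    sphereWeight x s y ≤ ENNReal.ofReal (2 * 2 ^ d / s ^ d / √((1 / 2) ^ k)) := by
  refine indicator_apply_le' (fun ⟨h₁, h₂⟩ => ?_) fun _ => zero_le
  have hlow := hy.1
  rw [pow_succ] at hlow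
  set u : ℝ := (1 / 2) ^ k
  have hu : 0 < u := by positivity
  have hdist : 0 < |dist x y - s| := lt_trans (by positivity) hlow
  rw [← ENNReal.ofReal_inv_of_pos (by positivity), ← ENNReal.ofReal_mul (by positivity)]
  refine ENNReal.ofReal_le_ofReal ?_
  calc √(dist x y) / dist x y ^ d * (√|dist x y - s|)⁻¹
      ≤ √(2 * s) / (s / 2) ^ d * (√(u * s / 2))⁻¹ := by gcongr; linarith
    _ = 2 * 2 ^ d / s ^ d / √u := by
        have : √(u * s / 2) = √(2 * s) * √u / 2 := by
          rw [← Real.sqrt_mul (by positivity), Real.sqrt_eq_iff_mul_self_eq (by positivity)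
            (by positivity)]
          nlinarith [Real.mul_self_sqrt (by positivity : 0 ≤ 2 * s * u)]
        rw [this, div_pow]
        field_simp

theorem sphereWeight_eq_zero_of_notMem_iUnion (hs : 0 < s) {y : Rd d}
    (hsphere : y ∉ Metric.sphere x s) (hy : y ∉ ⋃ k, sphereShell x s k) :
    sphereWeight x s y = 0 := by
  unfold sphereWeight
  rw [indicator_of_notMem]
  rintro ⟨h₁, h₂⟩
  refine hy (mem_iUnion.2 ?_)
  have hpos : 0 < |dist x y - s| := abs_pos.2 <| sub_ne_zero.2 fun h =>
    hsphere (by rwa [Metric.mem_sphere, dist_comm])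
  obtain ⟨k, hk, hk'⟩ := exists_dyadic_scale hpos
    (show |dist x y - s| ≤ s from abs_le.2 ⟨by linarith, by linarith⟩)
  refine ⟨k, ?_, ?_⟩
  · rw [one_div, inv_pow, inv_mul_lt_iff₀ (by positivity)]; linarith
  · rw [one_div, inv_pow, le_inv_mul_iff₀ (by positivity)]; linarith

theorem setLIntegral_sphereShell_sphereWeight_le (hd : 0 < d) (hs : 0 < s) (k : ℕ) :
    ∫⁻ y in sphereShell x s k, sphereWeight x s y ≤
      ENNReal.ofReal √((1 / 2) ^ k) * (ENNReal.ofReal (4 * d * 4 ^ d) * unitBallVolume d) := by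
  calc ∫⁻ y in sphereShell x s k, sphereWeight x s y
      ≤ ∫⁻ _ in sphereShell x s k, ENNReal.ofReal (2 * 2 ^ d / s ^ d / √((1 / 2) ^ k)) :=
        setLIntegral_mono' (measurableSet_sphereShell x s k) fun _ =>
          sphereWeight_le_of_mem_sphereShell hs
    _ = ENNReal.ofReal (2 * 2 ^ d / s ^ d / √((1 / 2) ^ k)) * volume (sphereShell x s k) :=
        setLIntegral_const _ _
    _ ≤ ENNReal.ofReal (2 * 2 ^ d / s ^ d / √((1 / 2) ^ k)) *
          (ENNReal.ofReal (s ^ d * (2 * d * 2 ^ d * (1 / 2) ^ k)) * unitBallVolume d) :=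
        mul_le_mul_right (volume_sphereShell_le x hd hs.le k) _
    _ = _ := by
        set u : ℝ := (1 / 2) ^ k
        have hu : 0 < u := by positivity
        rw [← mul_assoc, ← mul_assoc (ENNReal.ofReal _), ← ENNReal.ofReal_mul (by positivity),
          ← ENNReal.ofReal_mul (by positivity)]
        congr 2
        have h4 : (4 : ℝ) ^ d = 2 ^ d * 2 ^ d := by rw [← mul_pow]; norm_num
        rw [h4]
        field_simp
        rw [Real.sq_sqrt hu.le]; ring

end SphereWeight

/-- A bound for the integral of `sphereWeight x s` that is uniform in `x` and `s`. -/
def sphereWeightBound (d : ℕ) : ℝ≥0∞ :=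
  (∑' k : ℕ, ENNReal.ofReal √((1 / 2 : ℝ) ^ k)) *
    (ENNReal.ofReal (4 * d * 4 ^ d) * unitBallVolume d)

theorem sphereWeightBound_ne_top (d : ℕ) : sphereWeightBound d ≠ ∞ :=
  ENNReal.mul_ne_top tsum_ofReal_sqrt_half_pow_ne_top
    (ENNReal.mul_ne_top ENNReal.ofReal_ne_top (unitBallVolume_ne_top d))

theorem lintegral_sphereWeight_le {d : ℕ} (hd : 0 < d) (x : Rd d) {s : ℝ} (hs : 0 < s) :
    ∫⁻ y, sphereWeight x s y ≤ sphereWeightBound d := by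
  have : Nonempty (Fin d) := ⟨⟨0, hd⟩⟩
  have hmeas : MeasurableSet (⋃ k, sphereShell x s k) :=
    MeasurableSet.iUnion (measurableSet_sphereShell x s)
  have off_sphere : ∀ᵐ y, y ∉ Metric.sphere x s :=
    measure_eq_zero_iff_ae_notMem.1 (Measure.addHaar_sphere volume x s)
  calc ∫⁻ y, sphereWeight x s y ≤ ∫⁻ y in ⋃ k, sphereShell x s k, sphereWeight x s y := by
        rw [← lintegral_indicator hmeas]
        refine lintegral_mono_ae ?_
        filter_upwards [off_sphere] with y hy
        refine le_indicator_apply (fun _ => le_rfl) fun h => ?_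
        exact (sphereWeight_eq_zero_of_notMem_iUnion hs hy h).le
    _ ≤ ∑' k, ∫⁻ y in sphereShell x s k, sphereWeight x s y := lintegral_iUnion_le _ _
    _ ≤ _ := by
        rw [sphereWeightBound, ← ENNReal.tsum_mul_right]
        exact ENNReal.tsum_le_tsum (setLIntegral_sphereShell_sphereWeight_le hd hs)

/-! ### The modulus of continuity -/

namespace CZO

variable {d : ℕ} (S : CZO d)

/-- The Dini modulus `ω(t) + √t`. The summand `√t` absorbs the error terms that stem from the
sharp cutoff of the truncations instead of the regularity of the kernel. -/
def modulus (t : ℝ) : ℝ := S.ω (max t 0) + √t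

variable {t : ℝ}

theorem ω_nonneg (ht : 0 ≤ t) : 0 ≤ S.ω t := by
  simpa only [S.ω_zero] using S.ω_mono self_mem_Ici ht ht

theorem monotone_modulus : Monotone S.modulus := fun _ _ hst =>
  add_le_add (S.ω_mono (mem_Ici.2 (le_max_right _ _)) (mem_Ici.2 (le_max_right _ _))
    (max_le_max_right 0 hst))
    (Real.sqrt_le_sqrt hst)

theorem modulus_nonneg (t : ℝ) : 0 ≤ S.modulus t :=
  add_nonneg (S.ω_nonneg (le_max_right _ _)) (Real.sqrt_nonneg _)

theorem modulus_of_nonneg (ht : 0 ≤ t) : S.modulus t = S.ω t + √t := by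
  rw [modulus, max_eq_left ht]

theorem modulus_two_mul_le (ht : 0 ≤ t) : S.modulus (2 * t) ≤ 2 * S.modulus t := by
  have hω : S.ω (2 * t) ≤ 2 * S.ω t := by simpa only [← two_mul] using S.ω_subadd t t ht ht
  have hsqrt : √(2 * t) ≤ 2 * √t := by
    rw [Real.sqrt_le_left (by positivity), mul_pow, Real.sq_sqrt ht]; nlinarith
  rw [S.modulus_of_nonneg ht, S.modulus_of_nonneg (by positivity)]
  linarith

theorem ω_le_modulus (ht : 0 ≤ t) : S.ω t ≤ S.modulus t := by
  rw [S.modulus_of_nonneg ht]; exact le_add_of_nonneg_right (Real.sqrt_nonneg t)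

theorem sqrt_le_modulus (t : ℝ) : √t ≤ S.modulus t :=
  le_add_of_nonneg_left (S.ω_nonneg (le_max_right _ _))

theorem tsum_modulus_ne_top : ∑' k : ℕ, ENNReal.ofReal (S.modulus ((1 / 2) ^ k)) ≠ ∞ := by
  have hsplit (k : ℕ) : ENNReal.ofReal (S.modulus ((1 / 2) ^ k)) =
      ENNReal.ofReal (S.ω ((1 / 2) ^ k)) + ENNReal.ofReal √((1 / 2) ^ k) := by
    rw [S.modulus_of_nonneg (by positivity),
      ENNReal.ofReal_add (S.ω_nonneg (by positivity)) (Real.sqrt_nonneg _)]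
  rw [tsum_congr hsplit, ENNReal.tsum_add]
  exact ENNReal.add_ne_top.2 ⟨tsum_dyadic_ne_top_of_dini S.ω_mono (fun _ => S.ω_nonneg) S.dini,
    tsum_ofReal_sqrt_half_pow_ne_top⟩

/-- A bound for `∫_{|c-z| ≥ δ} φ(δ/|c-z|) |c-z|^{-d} dz`, with `φ` the modulus of `S`, that is
uniform in `c` and `δ`. -/
def modulusBound : ℝ≥0∞ :=
  (∑' k : ℕ, ENNReal.ofReal (S.modulus ((1 / 2) ^ k))) *
    (ENNReal.ofReal (2 ^ d) * unitBallVolume d)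

theorem modulusBound_ne_top : S.modulusBound ≠ ∞ :=
  ENNReal.mul_ne_top S.tsum_modulus_ne_top
    (ENNReal.mul_ne_top ENNReal.ofReal_ne_top (unitBallVolume_ne_top d))

end CZO

/-! ### The `ℓ^ρ` norm -/

/-- The `ℓ^ρ` norm of a sequence of extended nonnegative reals. -/
def seqNorm (ρ : ℝ) (a : ℕ → ℝ≥0∞) : ℝ≥0∞ := (∑' i, a i ^ ρ) ^ (1 / ρ)

section SeqNorm

variable {ρ : ℝ} {a b : ℕ → ℝ≥0∞}

theorem seqNorm_mono (hρ : 0 ≤ ρ) (h : ∀ i, a i ≤ b i) : seqNorm ρ a ≤ seqNorm ρ b := by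
  unfold seqNorm
  gcongr with i
  exact h i

theorem seqNorm_add_le (hρ : 1 ≤ ρ) (a b : ℕ → ℝ≥0∞) :
    seqNorm ρ (fun i => a i + b i) ≤ seqNorm ρ a + seqNorm ρ b := by
  simpa only [seqNorm, lintegral_count, Pi.add_apply] using
    ENNReal.lintegral_Lp_add_le (μ := Measure.count) (f := a) (g := b)
      (measurable_of_countable _).aemeasurable (measurable_of_countable _).aemeasurable hρ

theorem seqNorm_le_tsum (hρ : 1 ≤ ρ) (a : ℕ → ℝ≥0∞) : seqNorm ρ a ≤ ∑' i, a i := by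
  set A := ∑' i, a i
  have hρ₀ : 0 < ρ := by linarith
  have rpow_eq (t : ℝ≥0∞) : t ^ ρ = t * t ^ (ρ - 1) := by
    nth_rw 2 [← ENNReal.rpow_one t]
    rw [← ENNReal.rpow_add_of_nonneg _ _ zero_le_one (by linarith), add_sub_cancel]
  rw [seqNorm, one_div, ENNReal.rpow_inv_le_iff hρ₀]
  calc ∑' i, a i ^ ρ ≤ ∑' i, a i * A ^ (ρ - 1) := ENNReal.tsum_le_tsum fun i => by
        rw [rpow_eq]
        have := ENNReal.le_tsum (f := a) i
        gcongr
    _ = A ^ ρ := by rw [ENNReal.tsum_mul_right, rpow_eq]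

theorem seqNorm_le_seqNorm_two (hρ : 2 ≤ ρ) (a : ℕ → ℝ≥0∞) : seqNorm ρ a ≤ seqNorm 2 a := by
  calc seqNorm ρ a = seqNorm (ρ / 2) (fun i => a i ^ (2 : ℝ)) ^ ((1 : ℝ) / 2) := by
        simp only [seqNorm, ← ENNReal.rpow_mul]
        congr 1
        · simp only [mul_div_cancel₀ ρ two_ne_zero]
        · field_simp
    _ ≤ seqNorm 2 a :=
        ENNReal.rpow_le_rpow (seqNorm_le_tsum (by linarith) _) (by norm_num)

end SeqNorm

/-! ### Annuli and truncations -/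

section Annulus

variable {d : ℕ} (x : Rd d)

/-- The annulus `r < |x-y| ≤ s` about `x`. -/
def annulus (r s : ℝ) : Set (Rd d) := {y | r < dist x y ∧ dist x y ≤ s}

theorem measurableSet_lt_dist (r : ℝ) : MeasurableSet {y : Rd d | r < dist x y} :=
  measurableSet_lt measurable_const (by fun_prop)

theorem measurableSet_annulus (r s : ℝ) : MeasurableSet (annulus x r s) :=
  (measurableSet_lt_dist x r).inter
    (measurableSet_le (by fun_prop : Measurable fun y => dist x y) measurable_const)

theorem pairwise_disjoint_annulus {ε : ℕ → ℝ} (hε : Antitone ε) :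
    Pairwise (Function.onFun Disjoint fun i => annulus x (ε (i + 1)) (ε i)) :=
  fun _ _ hij => (hε.pairwise_disjoint_on_Ioc_succ hij).preimage fun y => dist x y

end Annulus

/-- The sequences of truncation parameters over which `CZO.var` takes the supremum. -/
def IsTruncationSeq (ε : ℕ → ℝ) : Prop :=
  StrictAnti ε ∧ (∀ i, 0 < ε i) ∧ Tendsto ε atTop (nhds 0)

namespace CZO

variable {d : ℕ} (S : CZO d)

theorem measurable_kernel (x : Rd d) : Measurable (S.K x) :=
  S.measK.comp (by fun_prop : Measurable fun y : Rd d => (x, y))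

theorem abs_kernel_le {x y : Rd d} {r : ℝ} (hr : 0 < r) (hxy : r ≤ dist x y) :
    |S.K x y| ≤ S.Cst / r ^ d := by
  have hCst := S.hCst
  refine (S.size x y (dist_pos.1 (hr.trans_le hxy))).trans ?_
  gcongr

/-- The difference `T_r h - T_s h` of two truncations, as an integral over an annulus. -/
def annularIntegral (h : Rd d → ℝ) (x : Rd d) (r s : ℝ) : ℝ :=
  ∫ y in annulus x r s, S.K x y * h y

section Integrable

variable {ρ : ℝ} {h : Rd d → ℝ} (hh : Integrable h)
include hh

theorem integrableOn_kernel_mul (x : Rd d) {r : ℝ} (hr : 0 < r) :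
    IntegrableOn (fun y => S.K x y * h y) {y | r < dist x y} := by
  refine Integrable.bdd_mul (c := S.Cst / r ^ d) hh.integrableOn
    (S.measurable_kernel x).aestronglyMeasurable ?_
  rw [ae_restrict_iff' (measurableSet_lt_dist x r)]
  exact Eventually.of_forall fun y hy => S.abs_kernel_le hr (le_of_lt hy)

theorem integrableOn_annulus_kernel_mul (x : Rd d) {r : ℝ} (hr : 0 < r) (s : ℝ) :
    IntegrableOn (fun y => S.K x y * h y) (annulus x r s) :=
  (S.integrableOn_kernel_mul hh x hr).mono_set fun _ hy => hy.1

theorem trunc_sub_trunc (x : Rd d) {r s : ℝ} (hr : 0 < r) (hrs : r ≤ s) :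
    S.trunc r h x - S.trunc s h x = S.annularIntegral h x r s := by
  have hset : annulus x r s = {y | r < dist x y} \ {y | s < dist x y} := by
    ext y; simp [annulus]
  rw [trunc, trunc, annularIntegral, hset, setIntegral_sdiff (measurableSet_lt_dist x s)
    (S.integrableOn_kernel_mul hh x hr) fun y => hrs.trans_lt]

theorem var_eq_iSup_seqNorm (ρ : ℝ) (x : Rd d) :
    S.var ρ h x = ⨆ (ε : ℕ → ℝ) (_ : IsTruncationSeq ε),
      seqNorm ρ fun i => ‖S.annularIntegral h x (ε (i + 1)) (ε i)‖ₑ := by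
  refine iSup_congr fun ε => iSup_congr fun (hε : IsTruncationSeq ε) => ?_
  simp only [seqNorm, Real.enorm_eq_ofReal_abs,
    ← S.trunc_sub_trunc hh x (hε.2.1 _) (hε.1 (Nat.lt_succ_self _)).le]

theorem var_le_of_forall_seqNorm_le {x : Rd d} {B : ℝ≥0∞} (hB : ∀ ε, IsTruncationSeq ε →
    seqNorm ρ (fun i => ‖S.annularIntegral h x (ε (i + 1)) (ε i)‖ₑ) ≤ B) : S.var ρ h x ≤ B := by
  rw [S.var_eq_iSup_seqNorm hh]
  exact iSup₂_le hB

theorem seqNorm_le_var (ρ : ℝ) (x : Rd d) {ε : ℕ → ℝ} (hε : IsTruncationSeq ε) :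
    seqNorm ρ (fun i => ‖S.annularIntegral h x (ε (i + 1)) (ε i)‖ₑ) ≤ S.var ρ h x := by
  rw [S.var_eq_iSup_seqNorm hh]
  exact le_iSup₂_of_le ε hε le_rfl

theorem var_le_lintegral_kernel_mul (hρ : 1 ≤ ρ) (x : Rd d) :
    S.var ρ h x ≤ ∫⁻ y, ‖S.K x y * h y‖ₑ := by
  refine S.var_le_of_forall_seqNorm_le hh fun ε hε => (seqNorm_le_tsum hρ _).trans ?_
  calc _ ≤ ∑' i, ∫⁻ y in annulus x (ε (i + 1)) (ε i), ‖S.K x y * h y‖ₑ :=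
        ENNReal.tsum_le_tsum fun i => enorm_integral_le_lintegral_enorm _
    _ = ∫⁻ y in ⋃ i, annulus x (ε (i + 1)) (ε i), ‖S.K x y * h y‖ₑ :=
        (lintegral_iUnion (fun _ => measurableSet_annulus _ _ _)
          (pairwise_disjoint_annulus x hε.1.antitone) _).symm
    _ ≤ _ := setLIntegral_le_lintegral _ _

theorem annularIntegral_add {k : Rd d → ℝ} (hk : Integrable k) (x : Rd d) {r : ℝ} (hr : 0 < r)
    (s : ℝ) : S.annularIntegral (h + k) x r s =
      S.annularIntegral h x r s + S.annularIntegral k x r s := by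
  simp only [annularIntegral, Pi.add_apply, mul_add]
  exact integral_add (S.integrableOn_annulus_kernel_mul hh x hr s)
    (S.integrableOn_annulus_kernel_mul hk x hr s)

theorem var_add_le (hρ : 1 ≤ ρ) {k : Rd d → ℝ} (hk : Integrable k) (x : Rd d) :
    S.var ρ (h + k) x ≤ S.var ρ h x + S.var ρ k x := by
  refine S.var_le_of_forall_seqNorm_le (hh.add hk) fun ε hε => ?_
  calc _ ≤ seqNorm ρ (fun i => ‖S.annularIntegral h x (ε (i + 1)) (ε i)‖ₑ +
          ‖S.annularIntegral k x (ε (i + 1)) (ε i)‖ₑ) :=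
        seqNorm_mono (by linarith) fun i => by
          rw [S.annularIntegral_add hh hk x (hε.2.1 _)]
          exact enorm_add_le _ _
    _ ≤ _ := seqNorm_add_le hρ _ _
    _ ≤ _ := add_le_add (S.seqNorm_le_var hh ρ x hε) (S.seqNorm_le_var hk ρ x hε)

end Integrable

theorem var_congr_ae (ρ : ℝ) {h k : Rd d → ℝ} (hhk : h =ᵐ[volume] k) (x : Rd d) :
    S.var ρ h x = S.var ρ k x := by
  have trunc_eq (r : ℝ) : S.trunc r h x = S.trunc r k x := by
    refine integral_congr_ae ?_
    filter_upwards [ae_restrict_of_ae hhk] with y hy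
    rw [hy]
  simp only [var, trunc_eq]

/-! ### Restriction to the complement of a ball -/

theorem trunc_indicator_lt_dist (h : Rd d → ℝ) (x : Rd d) (r R : ℝ) :
    S.trunc r ({y | R < dist x y}.indicator h) x = S.trunc (max r R) h x := by
  have hset : {y | max r R < dist x y} = {y | R < dist x y} ∩ {y | r < dist x y} := by
    ext y; simp [and_comm]
  rw [trunc, trunc, hset, ← Measure.restrict_restrict (measurableSet_lt_dist x R),
    ← integral_indicator (measurableSet_lt_dist x R)]
  simp only [indicator_mul_right]

end CZO

theorem IsTruncationSeq.exists_eventually_max_eq {ε : ℕ → ℝ} (hε : IsTruncationSeq ε) {R : ℝ}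
    (hR : 0 < R) : ∃ (n : ℕ) (δ : ℕ → ℝ), IsTruncationSeq δ ∧ (∀ i ≤ n, max (ε i) R = δ i) ∧
      ∀ i ≥ n, max (ε i) R = R := by
  obtain ⟨hanti, hpos, hlim⟩ := hε
  have hex : ∃ n, ε n ≤ R := (hlim.eventually_le_const hR).exists
  set n := Nat.find hex
  have hn : ε n ≤ R := Nat.find_spec hex
  have lt_of_lt {i : ℕ} (hi : i < n) : R < ε i := not_le.1 (Nat.find_min hex hi)
  have hεn := hpos n
  refine ⟨n, fun i => if i < n then ε i else R / ε n * ε i, ⟨strictAnti_nat_of_succ_lt fun i => ?_,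
    fun i => ?_, ?_⟩, fun i hi => ?_, fun i hi => max_eq_right ((hanti.antitone hi).trans hn)⟩
  · have hi := hanti (Nat.lt_succ_self i)
    rcases lt_trichotomy (i + 1) n with h | h | h
    · simpa only [h, (Nat.lt_succ_self i).trans h, if_true] using hi
    · simpa [h, show i < n by omega, hεn.ne'] using lt_of_lt (show i < n by omega)
    · simp only [show ¬ i + 1 < n by omega, show ¬ i < n by omega, if_false]
      gcongr
  · have := hpos i
    dsimp only
    split_ifs <;> positivity
  · have hlim' : Tendsto (fun i => R / ε n * ε i) atTop (nhds 0) := by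
      simpa only [mul_zero] using hlim.const_mul (R / ε n)
    refine hlim'.congr' ?_
    filter_upwards [eventually_ge_atTop n] with i hi
    rw [if_neg hi.not_gt]
  · dsimp only
    rcases hi.lt_or_eq with h | h
    · rw [if_pos h, max_eq_left (lt_of_lt h).le]
    · rw [h, if_neg (lt_irrefl _), max_eq_right hn, div_mul_cancel₀ _ hεn.ne']

namespace CZO

variable {d : ℕ} (S : CZO d)

theorem var_indicator_lt_dist_le {ρ : ℝ} (hρ : 0 < ρ) (h : Rd d → ℝ) (x : Rd d) {R : ℝ}
    (hR : 0 < R) : S.var ρ ({y | R < dist x y}.indicator h) x ≤ S.var ρ h x := by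
  refine iSup₂_le fun ε hε => ?_
  obtain ⟨n, δ, hδ, hle, hge⟩ := IsTruncationSeq.exists_eventually_max_eq hε hR
  refine le_iSup₂_of_le δ hδ ?_
  simp only [trunc_indicator_lt_dist]
  refine ENNReal.rpow_le_rpow (ENNReal.tsum_le_tsum fun i => ?_) (by positivity)
  rcases lt_or_ge i n with hi | hi
  · rw [hle i hi.le, hle (i + 1) hi]
  · rw [hge i hi, hge (i + 1) (by omega), sub_self, abs_zero, ENNReal.ofReal_zero,
      ENNReal.zero_rpow_of_pos hρ]
    exact zero_le

/-! ### Lower semicontinuity of the variation -/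

theorem tendsto_ω_zero : Tendsto S.ω (nhdsWithin 0 (Ici 0)) (nhds 0) := by
  have hdyadic := ENNReal.tendsto_atTop_zero_of_tsum_ne_top
    (tsum_dyadic_ne_top_of_dini S.ω_mono (fun _ => S.ω_nonneg) S.dini)
  rw [Metric.tendsto_nhdsWithin_nhds]
  intro η hη
  obtain ⟨k, hk⟩ := (hdyadic.eventually_lt_const (ENNReal.ofReal_pos.2 hη)).exists
  refine ⟨(1 / 2) ^ k, by positivity, fun {t} (ht : 0 ≤ t) htk => ?_⟩
  rw [Real.dist_0_eq_abs, abs_of_nonneg ht] at htk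
  rw [Real.dist_0_eq_abs, abs_of_nonneg (S.ω_nonneg ht)]
  exact (S.ω_mono ht (by positivity : (0 : ℝ) ≤ (1 / 2) ^ k) htk.le).trans_lt
    ((ENNReal.ofReal_lt_ofReal_iff hη).1 hk)

theorem continuousAt_kernel {x y : Rd d} (hxy : x ≠ y) : ContinuousAt (fun z => S.K z y) x := by
  have hpos : 0 < dist x y := dist_pos.2 hxy
  have hdist : Tendsto (fun z => dist x z / dist x y) (nhds x) (nhdsWithin 0 (Ici 0)) :=
    tendsto_nhdsWithin_iff.2 ⟨by
      simpa using (Continuous.tendsto (by fun_prop) x : Tendsto (fun z => dist x z / dist x y) _ _),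
      Eventually.of_forall fun z => mem_Ici.2 (by positivity)⟩
  have hbound : Tendsto (fun z => S.Cst * S.ω (dist x z / dist x y) / dist x y ^ d)
      (nhds x) (nhds 0) := by
    simpa using ((S.tendsto_ω_zero.comp hdist).const_mul S.Cst).div_const (dist x y ^ d)
  refine tendsto_iff_norm_sub_tendsto_zero.2 (squeeze_zero' (Eventually.of_forall fun _ =>
    norm_nonneg _) ?_ hbound)
  filter_upwards [Metric.ball_mem_nhds x (half_pos hpos)] with z hz
  have hz' : dist x z ≤ dist x y / 2 := by rw [dist_comm]; exact (Metric.mem_ball.1 hz).le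
  rw [Real.norm_eq_abs, abs_sub_comm]
  exact (le_add_of_nonneg_right (abs_nonneg _)).trans (S.smooth x z y hxy hz')

theorem continuousAt_indicator_kernel_mul {x y : Rd d} {r : ℝ} (hr : 0 < r) (hy : dist x y ≠ r)
    (h : Rd d → ℝ) :
    ContinuousAt (fun z => {y | r < dist z y}.indicator (fun y => S.K z y * h y) y) x := by
  have hcont : Continuous fun z => dist z y := by fun_prop
  rcases hy.lt_or_gt with hlt | hgt
  · refine (continuousAt_const (y := (0 : ℝ))).congr ?_
    filter_upwards [hcont.continuousAt.eventually_lt_const hlt] with z hz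
    rw [indicator_of_notMem (show y ∉ {y | r < dist z y} from hz.not_gt)]
  · have hK := S.continuousAt_kernel (dist_pos.1 (hr.trans hgt))
    refine (hK.mul (continuousAt_const (y := h y))).congr ?_
    filter_upwards [hcont.continuousAt.eventually_const_lt hgt] with z hz
    rw [indicator_of_mem (show y ∈ {y | r < dist z y} from hz), Pi.mul_apply]

variable {h : Rd d → ℝ} (hh : Integrable h)
include hh

theorem continuous_trunc (hd : 0 < d) {r : ℝ} (hr : 0 < r) : Continuous (S.trunc r h) := by
  have : Nonempty (Fin d) := ⟨⟨0, hd⟩⟩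
  refine continuous_iff_continuousAt.2 fun x => ?_
  have off_sphere : ∀ᵐ y, y ∉ Metric.sphere x r :=
    measure_eq_zero_iff_ae_notMem.1 (Measure.addHaar_sphere volume x r)
  unfold trunc
  simp_rw [← integral_indicator (measurableSet_lt_dist _ r)]
  refine continuousAt_of_dominated (bound := fun y => S.Cst / r ^ d * ‖h y‖)
    (Eventually.of_forall fun z => ?_) (Eventually.of_forall fun z => Eventually.of_forall
      fun y => ?_) (hh.norm.const_mul _) ?_
  · exact ((integrable_indicator_iff (measurableSet_lt_dist z r)).2
      (S.integrableOn_kernel_mul hh z hr)).aestronglyMeasurable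
  · have hCst := S.hCst
    by_cases hy : y ∈ {y | r < dist z y}
    · rw [indicator_of_mem hy, norm_mul]
      exact mul_le_mul_of_nonneg_right (S.abs_kernel_le hr (le_of_lt hy)) (norm_nonneg _)
    · rw [indicator_of_notMem hy, norm_zero]; positivity
  · filter_upwards [off_sphere] with y hy
    exact S.continuousAt_indicator_kernel_mul hr
      (fun h' => hy (by rwa [Metric.mem_sphere, dist_comm])) h

theorem lowerSemicontinuous_var (hd : 0 < d) {ρ : ℝ} (hρ : 0 < ρ) :
    LowerSemicontinuous (S.var ρ h) := by
  refine lowerSemicontinuous_biSup fun ε hε => ?_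
  have hcont (i : ℕ) : Continuous (S.trunc (ε i) h) := S.continuous_trunc hh hd (hε.2.1 i)
  refine Continuous.comp_lowerSemicontinuous ENNReal.continuous_rpow_const
    (lowerSemicontinuous_tsum fun i => Continuous.lowerSemicontinuous ?_)
    (ENNReal.monotone_rpow_of_nonneg (by positivity))
  exact ENNReal.continuous_rpow_const.comp
    (ENNReal.continuous_ofReal.comp ((hcont (i + 1)).sub (hcont i)).abs)

end CZO

/-! ### Boundary terms -/

section WeightedCauchySchwarz

variable {α : Type*} [MeasurableSpace α] {m w : α → ℝ≥0∞}

theorem sq_lintegral_le_lintegral_mul_mul_lintegral_mul_inv (μ : Measure α) (hm : Measurable m)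
    (hw : Measurable w) (hmw : ∀ y, m y ≠ 0 → w y ≠ 0 ∧ w y ≠ ∞) :
    (∫⁻ y, m y ∂μ) ^ (2 : ℝ) ≤ (∫⁻ y, m y * w y ∂μ) * ∫⁻ y, m y * (w y)⁻¹ ∂μ := by
  have sq_sqrt (t : ℝ≥0∞) : (t ^ ((1 : ℝ) / 2)) ^ (2 : ℝ) = t := by
    rw [← ENNReal.rpow_mul, one_div_mul_cancel two_ne_zero, ENNReal.rpow_one]
  have sqrt_sq (t : ℝ≥0∞) : (t * t) ^ ((1 : ℝ) / 2) = t := by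
    rw [← sq, ← ENNReal.rpow_two, ← ENNReal.rpow_mul, mul_one_div_cancel two_ne_zero,
      ENNReal.rpow_one]
  have hfactor (y : α) :
      (m y * w y) ^ ((1 : ℝ) / 2) * (m y * (w y)⁻¹) ^ ((1 : ℝ) / 2) = m y := by
    rw [← ENNReal.mul_rpow_of_nonneg _ _ (by norm_num)]
    rcases eq_or_ne (m y) 0 with h₀ | h₀
    · simp [h₀]
    · rw [mul_mul_mul_comm, ENNReal.mul_inv_cancel (hmw y h₀).1 (hmw y h₀).2, mul_one, sqrt_sq]
  have hölder := ENNReal.lintegral_mul_le_Lp_mul_Lq μ Real.HolderConjugate.two_two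
    ((hm.mul hw).pow_const ((1 : ℝ) / 2)).aemeasurable
    ((hm.mul hw.inv).pow_const ((1 : ℝ) / 2)).aemeasurable
  simp only [Pi.mul_apply, Pi.inv_apply, hfactor, sq_sqrt] at hölder
  calc _ ≤ _ := ENNReal.rpow_le_rpow hölder zero_le_two
    _ = _ := by rw [ENNReal.mul_rpow_of_nonneg _ _ zero_le_two, sq_sqrt, sq_sqrt]

theorem rpow_half_mul_le_add (a b : ℝ≥0∞) : (a * b) ^ ((1 : ℝ) / 2) ≤ a + b := by
  rw [one_div, ENNReal.rpow_inv_le_iff two_pos, ENNReal.rpow_two, sq]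
  exact mul_le_mul' le_self_add le_add_self

theorem seqNorm_setLIntegral_le {ρ : ℝ} (hρ : 2 ≤ ρ) {μ : Measure α} (hm : Measurable m)
    (hw : Measurable w) (hmw : ∀ y, m y ≠ 0 → w y ≠ 0 ∧ w y ≠ ∞) {B : ℕ → Set α}
    (hB : ∀ i, MeasurableSet (B i)) (hdisj : Pairwise (Function.onFun Disjoint B)) {C : ℝ≥0∞}
    (hC : ∀ i, ∫⁻ y in B i, m y * w y ∂μ ≤ C) :
    seqNorm ρ (fun i => ∫⁻ y in B i, m y ∂μ) ≤ C + ∫⁻ y, m y * (w y)⁻¹ ∂μ := by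
  refine (seqNorm_le_seqNorm_two hρ _).trans (le_trans ?_ (rpow_half_mul_le_add _ _))
  refine ENNReal.rpow_le_rpow ?_ (by norm_num)
  calc ∑' i, (∫⁻ y in B i, m y ∂μ) ^ (2 : ℝ)
      ≤ ∑' i, C * ∫⁻ y in B i, m y * (w y)⁻¹ ∂μ := ENNReal.tsum_le_tsum fun i =>
        (sq_lintegral_le_lintegral_mul_mul_lintegral_mul_inv _ hm hw hmw).trans
          (mul_le_mul_left (hC i) _)
    _ = C * ∫⁻ y in ⋃ i, B i, m y * (w y)⁻¹ ∂μ := by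
        rw [ENNReal.tsum_mul_left, lintegral_iUnion hB hdisj]
    _ ≤ C * ∫⁻ y, m y * (w y)⁻¹ ∂μ := mul_le_mul_right (setLIntegral_le_lintegral _ _) _

end WeightedCauchySchwarz

theorem ofReal_sqrt_div_le_sphereWeight {d : ℕ} {x y : Rd d} {r s : ℝ} (hr : 0 < r)
    (hys : |dist x y - s| ≤ r) (hy : s / 2 ≤ dist x y) (hy' : dist x y ≤ 2 * s) :
    ENNReal.ofReal (√(dist x y / r) / dist x y ^ d) ≤ sphereWeight x s y := by
  rw [sphereWeight, indicator_of_mem (show y ∈ {y | s / 2 ≤ dist x y ∧ dist x y ≤ 2 * s} from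
    ⟨hy, hy'⟩), Real.sqrt_div' _ hr.le, div_right_comm, div_eq_mul_inv _ √r,
    ENNReal.ofReal_mul (by positivity), ENNReal.ofReal_inv_of_pos (by positivity)]
  gcongr

theorem abs_dist_sub_le_or_of_mem_symmDiff_annulus {d : ℕ} {x x' y : Rd d} {r s : ℝ}
    (hy : y ∈ symmDiff (annulus x r s) (annulus x' r s)) :
    |dist x' y - r| ≤ dist x x' ∨ |dist x' y - s| ≤ dist x x' := by
  have hxy := dist_triangle x x' y
  have hx'y := dist_triangle_left x' y x
  simp only [annulus, mem_symmDiff, mem_ofPred_eq, not_and_or, not_lt, not_le] at hy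
  rcases hy with ⟨⟨_, _⟩, _ | _⟩ | ⟨⟨_, _⟩, _ | _⟩
  · exact Or.inl (abs_le.2 ⟨by linarith, by linarith⟩)
  · exact Or.inr (abs_le.2 ⟨by linarith, by linarith⟩)
  · exact Or.inl (abs_le.2 ⟨by linarith, by linarith⟩)
  · exact Or.inr (abs_le.2 ⟨by linarith, by linarith⟩)

/-! ### Moving the base point -/

namespace CZO

variable {d : ℕ} (S : CZO d) {h : Rd d → ℝ} {M : ℝ≥0} {x x' : Rd d} {r : ℝ}

theorem enorm_kernel_le {y : Rd d} (hr : 0 < r) (hy : r ≤ dist x y) :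
    ‖S.K x y‖ₑ ≤ ENNReal.ofReal (S.Cst / r ^ d) := by
  rw [Real.enorm_eq_ofReal_abs]
  exact ENNReal.ofReal_le_ofReal (S.abs_kernel_le hr hy)

theorem integrable_kernel_mul (hh : Integrable h) (hr : 0 < r) (hx : ∀ y, h y ≠ 0 → r < dist x y) :
    Integrable fun y => S.K x y * h y := by
  refine ((integrable_indicator_iff (measurableSet_lt_dist x r)).2
    (S.integrableOn_kernel_mul hh x hr)).congr (Eventually.of_forall fun y => ?_)
  exact indicator_apply_eq_self.2 fun hy => by rw [not_imp_comm.1 (hx y) hy, mul_zero]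

theorem var_le_of_forall_lt_dist {ρ : ℝ} (hρ : 1 ≤ ρ) (hh : Integrable h) (hr : 0 < r)
    (hx : ∀ y, h y ≠ 0 → r < dist x y) :
    S.var ρ h x ≤ ENNReal.ofReal (S.Cst / r ^ d) * ∫⁻ y, ‖h y‖ₑ := by
  refine (S.var_le_lintegral_kernel_mul hh hρ x).trans ?_
  rw [← lintegral_const_mul' _ _ ENNReal.ofReal_ne_top]
  refine lintegral_mono fun y => ?_
  rcases eq_or_ne (h y) 0 with hy | hy
  · simp [hy]
  · rw [enorm_mul]
    exact mul_le_mul_left (S.enorm_kernel_le hr (hx y hy).le) _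

theorem lintegral_le_mul_modulusBound {F : Rd d → ℝ≥0∞} {c : ℝ≥0∞} (hc : c ≠ ∞) (hr : 0 < r)
    (hF : ∀ y, F y ≠ 0 → r < dist x y)
    (hle : ∀ y, r < dist x y →
      F y ≤ c * ENNReal.ofReal (S.modulus (r / dist x y) / dist x y ^ d)) :
    ∫⁻ y, F y ≤ c * S.modulusBound := by
  have hsubset : {y | r < dist x y} ⊆ {y | r ≤ dist x y} := fun y (hy : r < dist x y) => hy.le
  rw [← setLIntegral_eq_of_support_subset (s := {y | r < dist x y}) hF]
  calc ∫⁻ y in {y | r < dist x y}, F y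
      ≤ ∫⁻ y in {y | r < dist x y}, c * ENNReal.ofReal (S.modulus (r / dist x y) / dist x y ^ d) :=
        setLIntegral_mono' (measurableSet_lt_dist x r) hle
    _ ≤ c * ∫⁻ y in {y | r ≤ dist x y},
          ENNReal.ofReal (S.modulus (r / dist x y) / dist x y ^ d) := by
        rw [lintegral_const_mul' _ _ hc]
        exact mul_le_mul_right (lintegral_mono_set hsubset) _
    _ ≤ c * S.modulusBound :=
        mul_le_mul_right
          (setLIntegral_modulus_div_dist_pow_le S.monotone_modulus S.modulus_nonneg x hr) _

theorem abs_kernel_sub_kernel_le {y : Rd d} (hr : 0 < r) (hxx' : dist x x' ≤ r / 2)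
    (hy : r < dist x y) :
    |S.K x y - S.K x' y| ≤ S.Cst * (S.modulus (r / dist x y) / dist x y ^ d) := by
  have hpos : 0 < dist x y := hr.trans hy
  have hCst := S.hCst
  have hω : S.ω (dist x x' / dist x y) ≤ S.modulus (r / dist x y) :=
    (S.ω_le_modulus (by positivity)).trans (S.monotone_modulus (by gcongr; linarith))
  calc |S.K x y - S.K x' y| ≤ S.Cst * S.ω (dist x x' / dist x y) / dist x y ^ d :=
        (le_add_of_nonneg_right (abs_nonneg _)).trans
          (S.smooth x x' y (dist_pos.1 hpos) (by linarith))
    _ ≤ S.Cst * (S.modulus (r / dist x y) / dist x y ^ d) := by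
        rw [← mul_div_assoc]; gcongr

theorem enorm_annularIntegral_le_add (hh : Integrable h) (hr : 0 < r)
    (hx : ∀ y, h y ≠ 0 → r < dist x y) (hx' : ∀ y, h y ≠ 0 → r < dist x' y) (s t : ℝ) :
    ‖S.annularIntegral h x s t‖ₑ ≤ ‖S.annularIntegral h x' s t‖ₑ +
      (∫⁻ y in annulus x s t, ‖(S.K x y - S.K x' y) * h y‖ₑ) +
      (∫⁻ y in annulus x s t \ annulus x' s t, ‖S.K x' y * h y‖ₑ) +
      ∫⁻ y in annulus x' s t \ annulus x s t, ‖S.K x' y * h y‖ₑ := by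
  have hi := S.integrable_kernel_mul hh hr hx
  have hi' := S.integrable_kernel_mul hh hr hx'
  have hsplit : S.annularIntegral h x s t = S.annularIntegral h x' s t +
      (∫ y in annulus x s t, (S.K x y - S.K x' y) * h y) +
      (∫ y in annulus x s t \ annulus x' s t, S.K x' y * h y) -
      ∫ y in annulus x' s t \ annulus x s t, S.K x' y * h y := by
    have hsub := integral_sub (μ := volume.restrict (annulus x s t))
      hi.integrableOn hi'.integrableOn
    have hA := integral_inter_add_sdiff (s := annulus x s t) (measurableSet_annulus x' s t)
      hi'.integrableOn
    have hA' := integral_inter_add_sdiff (s := annulus x' s t) (measurableSet_annulus x s t)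
      hi'.integrableOn
    rw [inter_comm] at hA'
    simp only [annularIntegral, sub_mul]
    linarith
  rw [hsplit]
  refine enorm_sub_le.trans (add_le_add ?_ (enorm_integral_le_lintegral_enorm _))
  refine (enorm_add_le _ _).trans (add_le_add ?_ (enorm_integral_le_lintegral_enorm _))
  exact (enorm_add_le _ _).trans (add_le_add le_rfl (enorm_integral_le_lintegral_enorm _))

section Bounded

variable (hM : ∀ y, ‖h y‖ₑ ≤ M)
include hM

theorem enorm_kernel_mul_le {y : Rd d} (hr : 0 < r) (hy : r < dist x y) :
    ‖S.K x y * h y‖ₑ ≤ M * ENNReal.ofReal S.Cst * ENNReal.ofReal (1 / dist x y ^ d) := by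
  have hCst := S.hCst
  rw [enorm_mul, mul_comm, mul_assoc, ← ENNReal.ofReal_mul hCst.le, mul_one_div]
  exact mul_le_mul' (hM y) (S.enorm_kernel_le (hr.trans hy) le_rfl)

theorem lintegral_kernel_sub_kernel_mul_le (hr : 0 < r) (hxx' : dist x x' ≤ r / 2)
    (hx : ∀ y, h y ≠ 0 → r < dist x y) :
    ∫⁻ y, ‖(S.K x y - S.K x' y) * h y‖ₑ ≤ M * ENNReal.ofReal S.Cst * S.modulusBound := by
  refine S.lintegral_le_mul_modulusBound (by finiteness) hr
    (fun y hy => hx y fun h₀ => hy (by simp [h₀])) fun y hy => ?_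
  have hCst := S.hCst
  rw [enorm_mul, mul_comm, mul_assoc, ← ENNReal.ofReal_mul hCst.le,
    Real.enorm_eq_ofReal_abs (_ - _)]
  exact mul_le_mul' (hM y) (ENNReal.ofReal_le_ofReal (S.abs_kernel_sub_kernel_le hr hxx' hy))

theorem lintegral_kernel_mul_inv_sqrt_le (hr : 0 < r) (hx : ∀ y, h y ≠ 0 → r < dist x y) :
    ∫⁻ y, ‖S.K x y * h y‖ₑ * (ENNReal.ofReal √(dist x y / r))⁻¹ ≤
      M * ENNReal.ofReal S.Cst * S.modulusBound := by
  refine S.lintegral_le_mul_modulusBound (by finiteness) hr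
    (fun y hy => hx y fun h₀ => hy (by simp [h₀])) fun y hy => ?_
  have hpos : 0 < dist x y := hr.trans hy
  refine (mul_le_mul_left (S.enorm_kernel_mul_le hM hr hy) _).trans ?_
  rw [mul_assoc, ← ENNReal.ofReal_inv_of_pos (by positivity), ← ENNReal.ofReal_mul (by positivity),
    ← Real.sqrt_inv, inv_div, one_div_mul_eq_div]
  gcongr
  exact S.sqrt_le_modulus _

theorem setLIntegral_symmDiff_annulus_kernel_mul_sqrt_le (hd : 0 < d) (hr : 0 < r)
    (hxx' : dist x x' ≤ r / 2) (hx' : ∀ y, h y ≠ 0 → r < dist x' y) {s t : ℝ} (hs : 0 < s)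
    (ht : 0 < t) :
    ∫⁻ y in symmDiff (annulus x s t) (annulus x' s t),
        ‖S.K x' y * h y‖ₑ * ENNReal.ofReal √(dist x' y / r) ≤
      M * ENNReal.ofReal S.Cst * (2 * sphereWeightBound d) := by
  have le_sphereWeight {y : Rd d} (hy : r < dist x' y) {u : ℝ} (hu : |dist x' y - u| ≤ dist x x') :
      ENNReal.ofReal (√(dist x' y / r) / dist x' y ^ d) ≤ sphereWeight x' u y := by
    have := abs_le.1 hu
    exact ofReal_sqrt_div_le_sphereWeight hr (by linarith) (by linarith) (by linarith)
  calc _ ≤ ∫⁻ y in symmDiff (annulus x s t) (annulus x' s t),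
          M * ENNReal.ofReal S.Cst * (sphereWeight x' s y + sphereWeight x' t y) := by
        refine setLIntegral_mono' ((measurableSet_annulus x s t).symmDiff
          (measurableSet_annulus x' s t)) fun y hy => ?_
        rcases eq_or_ne (h y) 0 with h₀ | h₀
        · simp [h₀]
        have hy' := hx' y h₀
        refine (mul_le_mul_left (S.enorm_kernel_mul_le hM hr hy') _).trans ?_
        rw [mul_assoc, ← ENNReal.ofReal_mul (by positivity), one_div_mul_eq_div]
        gcongr
        rcases abs_dist_sub_le_or_of_mem_symmDiff_annulus hy with hys | hyt
        · exact (le_sphereWeight hy' hys).trans le_self_add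
        · exact (le_sphereWeight hy' hyt).trans le_add_self
    _ ≤ ∫⁻ y, M * ENNReal.ofReal S.Cst * (sphereWeight x' s y + sphereWeight x' t y) :=
        setLIntegral_le_lintegral _ _
    _ ≤ _ := by
        rw [lintegral_const_mul' _ _ (by finiteness),
          lintegral_add_left (measurable_sphereWeight x' s), two_mul]
        gcongr
        · exact lintegral_sphereWeight_le hd x' hs
        · exact lintegral_sphereWeight_le hd x' ht

end Bounded

/-- The loss in `var_le_var_add_shiftConst_mul` per unit of the bound on the function. -/
def shiftConst : ℝ≥0∞ :=
  ENNReal.ofReal S.Cst * (3 * S.modulusBound + 4 * sphereWeightBound d)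

theorem shiftConst_ne_top : S.shiftConst ≠ ∞ := by
  have := S.modulusBound_ne_top
  have := sphereWeightBound_ne_top d
  unfold shiftConst
  finiteness

theorem seqNorm_setLIntegral_kernel_mul_le {ρ : ℝ} (hρ : 2 ≤ ρ) (hd : 0 < d) (hmeas : Measurable h)
    (hM : ∀ y, ‖h y‖ₑ ≤ M) (hr : 0 < r) (hxx' : dist x x' ≤ r / 2)
    (hx' : ∀ y, h y ≠ 0 → r < dist x' y) {ε : ℕ → ℝ} (hε : ∀ i, 0 < ε i) {B : ℕ → Set (Rd d)}
    (hB : ∀ i, MeasurableSet (B i)) (hdisj : Pairwise (Function.onFun Disjoint B))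
    (hBsub : ∀ i, B i ⊆ symmDiff (annulus x (ε (i + 1)) (ε i)) (annulus x' (ε (i + 1)) (ε i))) :
    seqNorm ρ (fun i => ∫⁻ y in B i, ‖S.K x' y * h y‖ₑ) ≤
      M * ENNReal.ofReal S.Cst * (2 * sphereWeightBound d) +
        M * ENNReal.ofReal S.Cst * S.modulusBound := by
  have hw : Measurable fun y : Rd d => ENNReal.ofReal √(dist x' y / r) := by fun_prop
  refine (seqNorm_setLIntegral_le hρ ((S.measurable_kernel x').mul hmeas).enorm hw
    (fun y hy => ⟨?_, ENNReal.ofReal_ne_top⟩) hB hdisj fun i => ?_).trans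
    (add_le_add_right (S.lintegral_kernel_mul_inv_sqrt_le hM hr hx') _)
  · have : 0 < dist x' y := hr.trans (hx' y fun h₀ => hy (by simp [h₀]))
    exact (ENNReal.ofReal_pos.2 (by positivity)).ne'
  · exact (lintegral_mono_set (hBsub i)).trans
      (S.setLIntegral_symmDiff_annulus_kernel_mul_sqrt_le hM hd hr hxx' hx' (hε _) (hε _))

theorem var_le_var_add_shiftConst_mul {ρ : ℝ} (hρ : 2 ≤ ρ) (hd : 0 < d) (hmeas : Measurable h)
    (hh : Integrable h) (hM : ∀ y, ‖h y‖ₑ ≤ M) (hr : 0 < r) (hxx' : dist x x' ≤ r / 2)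
    (hx : ∀ y, h y ≠ 0 → r < dist x y) (hx' : ∀ y, h y ≠ 0 → r < dist x' y) :
    S.var ρ h x ≤ S.var ρ h x' + S.shiftConst * M := by
  have hρ₁ : 1 ≤ ρ := by linarith
  refine S.var_le_of_forall_seqNorm_le hh fun ε hε => ?_
  have hkernel : seqNorm ρ (fun i => ∫⁻ y in annulus x (ε (i + 1)) (ε i),
      ‖(S.K x y - S.K x' y) * h y‖ₑ) ≤ M * ENNReal.ofReal S.Cst * S.modulusBound := by
    refine (seqNorm_le_tsum hρ₁ _).trans ?_
    rw [← lintegral_iUnion (fun i => measurableSet_annulus _ _ _)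
      (pairwise_disjoint_annulus x hε.1.antitone)]
    exact (setLIntegral_le_lintegral _ _).trans
      (S.lintegral_kernel_sub_kernel_mul_le hM hr hxx' hx)
  have hmeasDiff (u v : Rd d) (i : ℕ) :
      MeasurableSet (annulus u (ε (i + 1)) (ε i) \ annulus v (ε (i + 1)) (ε i)) :=
    (measurableSet_annulus _ _ _).diff (measurableSet_annulus _ _ _)
  have hdisj (u v : Rd d) : Pairwise (Function.onFun Disjoint fun i =>
      annulus u (ε (i + 1)) (ε i) \ annulus v (ε (i + 1)) (ε i)) := fun i j hij =>
    (pairwise_disjoint_annulus u hε.1.antitone hij).mono sdiff_subset sdiff_subset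
  have hleft := S.seqNorm_setLIntegral_kernel_mul_le hρ hd hmeas hM hr hxx' hx' hε.2.1
    (hmeasDiff x x') (hdisj x x') fun i => subset_union_left
  have hright := S.seqNorm_setLIntegral_kernel_mul_le hρ hd hmeas hM hr hxx' hx' hε.2.1
    (hmeasDiff x' x) (hdisj x' x) fun i => subset_union_right
  calc _ ≤ _ := seqNorm_mono (by linarith) fun i => S.enorm_annularIntegral_le_add hh hr hx hx' _ _
    _ ≤ _ := seqNorm_add_le hρ₁ _ _
    _ ≤ _ := add_le_add_left (seqNorm_add_le hρ₁ _ _) _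
    _ ≤ _ := add_le_add_left (add_le_add_left (seqNorm_add_le hρ₁ _ _) _) _
    _ ≤ _ := add_le_add (add_le_add (add_le_add (S.seqNorm_le_var hh ρ x' hε) hkernel) hleft) hright
    _ = S.var ρ h x' + S.shiftConst * M := by rw [shiftConst]; ring

/-- The loss in `var_indicator_lt_dist_le_var_add` per unit of the bound on the function. -/
def farShiftConst : ℝ≥0∞ :=
  S.shiftConst + ENNReal.ofReal (S.Cst * 4 ^ d) * unitBallVolume d

theorem farShiftConst_ne_top : S.farShiftConst ≠ ∞ := by
  have := S.shiftConst_ne_top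
  have := unitBallVolume_ne_top d
  unfold farShiftConst
  finiteness

theorem var_le_of_mem_annulus {ρ : ℝ} (hρ : 1 ≤ ρ) (hh : Integrable h) (hM : ∀ y, ‖h y‖ₑ ≤ M)
    (hr : 0 < r) (hx : ∀ y, h y ≠ 0 → y ∈ annulus x r (4 * r)) :
    S.var ρ h x ≤ ENNReal.ofReal (S.Cst * 4 ^ d) * unitBallVolume d * M := by
  have hCst := S.hCst
  have hsupport : Function.support (fun y => ‖h y‖ₑ) ⊆ Metric.closedBall x (4 * r) := fun y hy => by
    rw [Metric.mem_closedBall, dist_comm]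
    exact (hx y fun h₀ => hy (by simp [h₀])).2
  calc S.var ρ h x ≤ ENNReal.ofReal (S.Cst / r ^ d) * ∫⁻ y, ‖h y‖ₑ :=
        S.var_le_of_forall_lt_dist hρ hh hr fun y hy => (hx y hy).1
    _ = ENNReal.ofReal (S.Cst / r ^ d) * ∫⁻ y in Metric.closedBall x (4 * r), ‖h y‖ₑ := by
        rw [setLIntegral_eq_of_support_subset hsupport]
    _ ≤ ENNReal.ofReal (S.Cst / r ^ d) * (M * volume (Metric.closedBall x (4 * r))) := by
        rw [← setLIntegral_const]
        gcongr with y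
        exact hM y
    _ = _ := by
        have hcancel : S.Cst / r ^ d * (4 * r) ^ d = S.Cst * 4 ^ d := by
          rw [mul_pow]; field_simp
        rw [volume_closedBall_eq _ (by positivity), mul_left_comm, ← mul_assoc (ENNReal.ofReal _),
          ← ENNReal.ofReal_mul (by positivity), hcancel, mul_comm]

theorem var_indicator_lt_dist_le_var_add {ρ : ℝ} (hρ : 2 ≤ ρ) (hd : 0 < d) {g : Rd d → ℝ}
    (hmeas : Measurable g) (hg : Integrable g) (hM : ∀ y, ‖g y‖ₑ ≤ M) {R : ℝ} (hR : 0 < R)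
    (hxx' : dist x x' ≤ R / 4) :
    S.var ρ ({y | R < dist x y}.indicator g) x ≤ S.var ρ g x' + S.farShiftConst * M := by
  have hρ₁ : 1 ≤ ρ := by linarith
  have hcompare (y : Rd d) : dist x y ≤ dist x x' + dist x' y ∧ dist x' y ≤ dist x x' + dist x y :=
    ⟨dist_triangle _ _ _, dist_triangle_left _ _ _⟩
  set h := {y | R < dist x y}.indicator g with h_def
  have hh : Integrable h := hg.indicator (measurableSet_lt_dist x R)
  have hhM (y : Rd d) : ‖h y‖ₑ ≤ M := (enorm_indicator_le_enorm_self _ _).trans (hM y)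
  have hx (y : Rd d) (hy : h y ≠ 0) : R < dist x y :=
    (mem_of_indicator_ne_zero hy : y ∈ {y | R < dist x y})
  have hx' (y : Rd d) (hy : h y ≠ 0) : R / 2 < dist x' y := by
    have := hx y hy; have := hcompare y; linarith
  set far := {y | 2 * R < dist x' y}
  have hfar : MeasurableSet far := measurableSet_lt_dist x' (2 * R)
  have hsplit : h = far.indicator g + farᶜ.indicator h := by
    have hfar_eq : far.indicator g = far.indicator h := by
      rw [h_def, indicator_indicator, inter_eq_left.2]
      intro y (hy : 2 * R < dist x' y)
      have := hcompare y
      exact (by linarith : R < dist x y)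
    rw [hfar_eq, indicator_self_add_compl]
  have hnear : S.var ρ (farᶜ.indicator h) x' ≤
      ENNReal.ofReal (S.Cst * 4 ^ d) * unitBallVolume d * M := by
    refine S.var_le_of_mem_annulus (r := R / 2) hρ₁ (hh.indicator hfar.compl)
      (fun y => (enorm_indicator_le_enorm_self _ _).trans (hhM y)) (by positivity) fun y hy => ?_
    rw [indicator_apply_ne_zero] at hy
    have hnotFar : ¬2 * R < dist x' y := hy.1
    exact ⟨hx' y hy.2, by linarith⟩
  calc S.var ρ h x ≤ S.var ρ h x' + S.shiftConst * M :=
        S.var_le_var_add_shiftConst_mul hρ hd (hmeas.indicator (measurableSet_lt_dist x R)) hh hhM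
          (half_pos hR) (by linarith) (fun y hy => by linarith [hx y hy]) hx'
    _ ≤ S.var ρ (far.indicator g) x' + S.var ρ (farᶜ.indicator h) x' + S.shiftConst * M := by
        conv_lhs => rw [hsplit]
        exact add_le_add_left (S.var_add_le (hg.indicator hfar) hρ₁ (hh.indicator hfar.compl) x') _
    _ ≤ S.var ρ g x' + ENNReal.ofReal (S.Cst * 4 ^ d) * unitBallVolume d * M +
          S.shiftConst * M :=
        add_le_add_left (add_le_add
          (S.var_indicator_lt_dist_le (by linarith) g x' (by positivity)) hnear) _
    _ = S.var ρ g x' + S.farShiftConst * M := by rw [farShiftConst]; ring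

end CZO

/-! ### The bad part -/

/-- Both `x` and `x'` are far from the cube `L` compared to its diameter, and `x` is not much
closer to it than `x'` is. -/
structure Cube.IsFarFrom {d : ℕ} (L : Cube d) (x x' : Rd d) : Prop where
  diamBound_le : 20 * L.diamBound ≤ dist x' L.center
  dist_le : dist x' L.center ≤ 2 * dist x L.center

/-- A Calderón–Zygmund bad part: a function carried by the disjoint cubes of `F`, with mean zero
and mean absolute value at most `M` on each of them. -/
structure IsBadPart {d : ℕ} (F : Set (Cube d)) (b : Rd d → ℝ) (M : ℝ≥0) : Prop where
  countable : F.Countable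
  pairwiseDisjoint : F.PairwiseDisjoint Cube.set
  measurable : Measurable b
  integrable : Integrable b
  eq_zero : ∀ y, y ∉ ⋃ L ∈ F, L.set → b y = 0
  integral_eq_zero : ∀ L ∈ F, ∫ y in L.set, b y = 0
  lintegral_le : ∀ L ∈ F, ∫⁻ y in L.set, ‖b y‖ₑ ≤ M * L.vol

namespace CZO

variable {d : ℕ} (S : CZO d)

/-- The size at `z` of `T` applied to a unit mass of mean zero on the cube `L`. -/
def cubeWeight (z : Rd d) (L : Cube d) : ℝ :=
  S.modulus (L.diamBound / dist z L.center) / dist z L.center ^ d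

/-- The constant in `IsBadPart.var_indicator_lt_dist_le`. -/
def badConst : ℝ≥0∞ :=
  ENNReal.ofReal (S.Cst * 2 ^ (d + 1)) +
    ENNReal.ofReal (2 * 4 ^ d * S.Cst) * (2 * sphereWeightBound d + 1)

theorem badConst_ne_top : S.badConst ≠ ∞ := by
  have := sphereWeightBound_ne_top d
  unfold badConst
  finiteness

/-- The sum over the cubes of `F` of the bounds that cancellation gives at `z` for `T b`. -/
def badPotential (F : Set (Cube d)) (b : Rd d → ℝ) (z : Rd d) : ℝ≥0∞ :=
  ∑' L : F, (∫⁻ y in (L : Cube d).set, ‖b y‖ₑ) * ENNReal.ofReal (S.cubeWeight z L)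

end CZO

/-! #### A single cube -/

namespace Cube.IsFarFrom

variable {d : ℕ} {L : Cube d} {x x' y z : Rd d} (hL : L.IsFarFrom x x') (hd : 0 < d)

include hL in
theorem ten_mul_diamBound_le : 10 * L.diamBound ≤ dist x L.center := by
  linarith [hL.diamBound_le, hL.dist_le]

include hL hd

theorem dist_center_pos : 0 < dist x L.center := by
  linarith [hL.ten_mul_diamBound_le, L.diamBound_pos hd]

theorem dist_center_pos' : 0 < dist x' L.center := by
  linarith [hL.diamBound_le, L.diamBound_pos hd]

theorem dist_le_two_mul (hy : y ∈ L.set) :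
    dist x y ≤ 2 * dist x L.center ∧ dist x L.center ≤ 2 * dist x y := by
  have hyL := L.dist_le_diamBound L.center_mem hy
  have htri := dist_triangle x L.center y
  have htri' := dist_triangle_right x L.center y
  have := hL.ten_mul_diamBound_le
  have := L.diamBound_pos hd
  constructor <;> linarith

theorem dist_pos (hy : y ∈ L.set) : 0 < dist x y := by
  linarith [hL.dist_center_pos hd, (hL.dist_le_two_mul hd hy).2]

theorem modulus_le_two_mul (S : CZO d) {t : ℝ} (ht : t ≤ L.diamBound / dist x L.center) :
    S.modulus t ≤ 2 * S.modulus (L.diamBound / dist x' L.center) := by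
  have hdiam := L.diamBound_pos hd
  have hx := hL.dist_center_pos hd
  have hx' := hL.dist_center_pos' hd
  refine (S.monotone_modulus (ht.trans ?_)).trans (S.modulus_two_mul_le (by positivity))
  rw [← mul_div_assoc, div_le_div_iff₀ hx hx']
  nlinarith [hL.dist_le]

theorem abs_kernel_sub_kernel_center_le (S : CZO d) (hy : y ∈ L.set) :
    |S.K x y - S.K x L.center| ≤ S.Cst * 2 ^ (d + 1) * S.cubeWeight x' L := by
  have hCst := S.hCst
  have hx := hL.dist_center_pos hd
  have hx' := hL.dist_center_pos' hd
  have hmod := S.modulus_nonneg (L.diamBound / dist x' L.center)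
  have hyL := L.dist_le_diamBound L.center_mem hy
  have hsmall : dist L.center y ≤ dist L.center x / 2 := by
    rw [dist_comm L.center x]; linarith [hL.ten_mul_diamBound_le]
  have hω : S.ω (dist L.center y / dist x L.center) ≤
      2 * S.modulus (L.diamBound / dist x' L.center) :=
    (S.ω_le_modulus (by positivity)).trans (hL.modulus_le_two_mul hd S (by gcongr))
  rw [abs_sub_comm]
  calc |S.K x L.center - S.K x y|
      ≤ S.Cst * S.ω (dist L.center y / dist x L.center) / dist x L.center ^ d := by
        have := S.smooth L.center y x (_root_.dist_pos.1 (dist_comm x _ ▸ hx)) hsmall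
        rw [dist_comm L.center x] at this
        exact (le_add_of_nonneg_left (abs_nonneg _)).trans this
    _ ≤ S.Cst * (2 * S.modulus (L.diamBound / dist x' L.center)) /
          (dist x' L.center / 2) ^ d := by
        gcongr; linarith [hL.dist_le]
    _ = S.Cst * 2 ^ (d + 1) * S.cubeWeight x' L := by
        rw [CZO.cubeWeight, div_pow]; field_simp; ring

theorem enorm_kernel_le (S : CZO d) (hy : y ∈ L.set) :
    ‖S.K x y‖ₑ ≤ ENNReal.ofReal (S.Cst * 2 ^ d / dist x L.center ^ d) := by
  have hx := hL.dist_center_pos hd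
  have hhalf : dist x L.center / 2 ≤ dist x y := by linarith [(hL.dist_le_two_mul hd hy).2]
  convert S.enorm_kernel_le (half_pos hx) hhalf using 2
  rw [div_pow]; field_simp

theorem enorm_kernel_mul_inv_sqrt_le (S : CZO d) (hy : y ∈ L.set) :
    ‖S.K x y‖ₑ * (ENNReal.ofReal √(dist x L.center / L.diamBound))⁻¹ ≤
      ENNReal.ofReal (2 * 4 ^ d * S.Cst) * ENNReal.ofReal (S.cubeWeight x' L) := by
  have hCst := S.hCst
  have hdiam := L.diamBound_pos hd
  have hx := hL.dist_center_pos hd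
  have hx' := hL.dist_center_pos' hd
  have := S.modulus_nonneg (L.diamBound / dist x' L.center)
  have hsqrt : (√(dist x L.center / L.diamBound))⁻¹ ≤
      2 * S.modulus (L.diamBound / dist x' L.center) := by
    rw [← Real.sqrt_inv, inv_div]
    exact (S.sqrt_le_modulus _).trans (hL.modulus_le_two_mul hd S le_rfl)
  refine (mul_le_mul_left (hL.enorm_kernel_le hd S hy) _).trans ?_
  rw [← ENNReal.ofReal_inv_of_pos (by positivity), ← ENNReal.ofReal_mul (by positivity),
    ← ENNReal.ofReal_mul (by positivity)]
  refine ENNReal.ofReal_le_ofReal ?_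
  calc S.Cst * 2 ^ d / dist x L.center ^ d * (√(dist x L.center / L.diamBound))⁻¹
      ≤ S.Cst * 2 ^ d / (dist x' L.center / 2) ^ d *
          (2 * S.modulus (L.diamBound / dist x' L.center)) := by
        gcongr; linarith [hL.dist_le]
    _ = 2 * 4 ^ d * S.Cst * S.cubeWeight x' L := by
        rw [CZO.cubeWeight, show (4 : ℝ) ^ d = 2 ^ d * 2 ^ d by rw [← mul_pow]; norm_num, div_pow]
        field_simp

theorem kernelBound_mul_sqrt_le (S : CZO d) (hz : z ∈ L.set) :
    ENNReal.ofReal (S.Cst * 2 ^ d / dist x L.center ^ d) *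
        ENNReal.ofReal √(dist x L.center / L.diamBound) ≤
      ENNReal.ofReal (2 * 4 ^ d * S.Cst) *
        ENNReal.ofReal (√(dist x z / L.diamBound) / dist x z ^ d) := by
  have hCst := S.hCst
  have hdiam := L.diamBound_pos hd
  have hx := hL.dist_center_pos hd
  have hxz := hL.dist_pos hd hz
  obtain ⟨hle, hle'⟩ := hL.dist_le_two_mul hd hz
  have hsqrt : √(dist x L.center / L.diamBound) ≤ 2 * √(dist x z / L.diamBound) := by
    rw [Real.sqrt_le_left (by positivity), mul_pow, Real.sq_sqrt (by positivity),
      ← mul_div_assoc]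
    gcongr; linarith
  rw [← ENNReal.ofReal_mul (by positivity), ← ENNReal.ofReal_mul (by positivity)]
  refine ENNReal.ofReal_le_ofReal ?_
  calc S.Cst * 2 ^ d / dist x L.center ^ d * √(dist x L.center / L.diamBound)
      ≤ S.Cst * 2 ^ d / (dist x z / 2) ^ d * (2 * √(dist x z / L.diamBound)) := by
        gcongr; linarith
    _ = 2 * 4 ^ d * S.Cst * (√(dist x z / L.diamBound) / dist x z ^ d) := by
        rw [show (4 : ℝ) ^ d = 2 ^ d * 2 ^ d by rw [← mul_pow]; norm_num, div_pow]
        field_simp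

theorem ofReal_sqrt_div_le_sphereWeight_add {s t : ℝ} (hy : y ∈ L.set) (hyA : y ∈ annulus x s t)
    (hLA : ¬L.set ⊆ annulus x s t) (hz : z ∈ L.set) :
    ENNReal.ofReal (√(dist x z / L.diamBound) / dist x z ^ d) ≤
      sphereWeight x s z + sphereWeight x t z := by
  have hdist {u v : Rd d} (hu : u ∈ L.set) (hv : v ∈ L.set) :
      dist x u ≤ dist x v + L.diamBound :=
    (dist_triangle x v u).trans (add_le_add_right (L.dist_le_diamBound hv hu) _)
  obtain ⟨v, hv, hvA⟩ := not_subset.1 hLA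
  obtain ⟨hys, hyt⟩ := hyA
  have hzy := hdist hz hy
  have hyz := hdist hy hz
  have hzv := hdist hz hv
  have hvz := hdist hv hz
  have hfar := hL.ten_mul_diamBound_le
  have hcenter := hdist L.center_mem hz
  have hdiam := L.diamBound_pos hd
  rw [annulus, mem_ofPred_eq, not_and_or, not_lt, not_le] at hvA
  rcases hvA with hvs | hvt
  · refine (ofReal_sqrt_div_le_sphereWeight hdiam (abs_le.2 ⟨?_, ?_⟩) ?_ ?_).trans le_self_add <;>
      linarith
  · refine (ofReal_sqrt_div_le_sphereWeight hdiam (abs_le.2 ⟨?_, ?_⟩) ?_ ?_).trans le_add_self <;>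
      linarith

end Cube.IsFarFrom

/-! #### Summing over the cubes -/

/-- The cubes of `F` contained in `A`; on these the kernel integral over `A` has full
cancellation. -/
def innerCubes {d : ℕ} (F : Set (Cube d)) (A : Set (Rd d)) : Set (Cube d) :=
  {L ∈ F | L.set ⊆ A}

/-- The weight `√(|x - c_L| / diam L)` on each cube `L` of `F`, with `c_L` its center; it balances
the two factors of the Cauchy–Schwarz inequality for the boundary terms. -/
def scaleWeight {d : ℕ} (F : Set (Cube d)) (x y : Rd d) : ℝ≥0∞ :=
  ∑' L : F, (L : Cube d).set.indicator
    (fun _ => ENNReal.ofReal √(dist x (L : Cube d).center / (L : Cube d).diamBound)) y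

theorem scaleWeight_of_mem {d : ℕ} {F : Set (Cube d)} (hF : F.PairwiseDisjoint Cube.set)
    {L : Cube d} (hL : L ∈ F) {y : Rd d} (hy : y ∈ L.set) (x : Rd d) :
    scaleWeight F x y = ENNReal.ofReal √(dist x L.center / L.diamBound) := by
  rw [scaleWeight, tsum_eq_single ⟨L, hL⟩, indicator_of_mem hy]
  intro L' hL'
  refine indicator_of_notMem (fun hy' => hL' (Subtype.ext ?_)) _
  exact hF.elim_set L'.2 hL y hy' hy

theorem measurable_scaleWeight {d : ℕ} {F : Set (Cube d)} (hF : F.Countable) (x : Rd d) :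
    Measurable (scaleWeight F x) := by
  have := hF.to_subtype
  exact Measurable.tsum fun L => measurable_const.indicator (Cube.measurableSet_set _)

theorem tsum_tsum_innerCubes_le {d : ℕ} (F : Set (Cube d)) {A : ℕ → Set (Rd d)}
    (hA : Pairwise (Function.onFun Disjoint A)) (a : Cube d → ℝ≥0∞) :
    ∑' i, ∑' L : innerCubes F (A i), a L ≤ ∑' L : F, a L := by
  rw [← ENNReal.tsum_sigma]
  refine ENNReal.tsum_comp_le_tsum_of_injective
    (f := fun p : Σ i, innerCubes F (A i) => (⟨p.2, p.2.2.1⟩ : F)) ?_ fun L : F => a L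
  rintro ⟨i, L, hL⟩ ⟨j, L', hL'⟩ heq
  obtain rfl : L = L' := congrArg Subtype.val heq
  obtain rfl : i = j := by_contra fun hij =>
    disjoint_left.1 (hA hij) (hL.2 L.center_mem) (hL'.2 L.center_mem)
  rfl

namespace IsBadPart

variable {d : ℕ} {S : CZO d} {F : Set (Cube d)} {b : Rd d → ℝ} {M : ℝ≥0} {L : Cube d}
  {x x' : Rd d} (hb : IsBadPart F b M)

include hb

theorem exists_mem_of_ne_zero {y : Rd d} (hy : b y ≠ 0) : ∃ L ∈ F, y ∈ L.set := by
  simpa only [mem_iUnion, exists_prop] using not_imp_comm.1 (hb.eq_zero y) hy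

theorem lintegral_eq_tsum (μ : Measure (Rd d)) {f : Rd d → ℝ≥0∞} (hf : ∀ y, b y = 0 → f y = 0) :
    ∫⁻ y, f y ∂μ = ∑' L : F, ∫⁻ y in (L : Cube d).set, f y ∂μ := by
  rw [← lintegral_biUnion hb.countable (fun L _ => L.measurableSet_set) hb.pairwiseDisjoint]
  exact (setLIntegral_eq_of_support_subset fun y hy =>
    not_imp_comm.1 (hb.eq_zero y) fun h₀ => hy (hf y h₀)).symm

theorem enorm_setIntegral_kernel_mul_le (hd : 0 < d) (hL : L ∈ F) (hfar : L.IsFarFrom x x') :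
    ‖∫ y in L.set, S.K x y * b y‖ₑ ≤ ENNReal.ofReal (S.Cst * 2 ^ (d + 1)) *
      ((∫⁻ y in L.set, ‖b y‖ₑ) * ENNReal.ofReal (S.cubeWeight x' L)) := by
  have hCst := S.hCst
  have hint : IntegrableOn (fun y => S.K x y * b y) L.set := by
    have hx := hfar.dist_center_pos hd
    refine (S.integrableOn_kernel_mul hb.integrable x (r := dist x L.center / 4)
      (by positivity)).mono_set fun y hy => ?_
    exact (by linarith [(hfar.dist_le_two_mul hd hy).2] : dist x L.center / 4 < dist x y)
  have hcancel : ∫ y in L.set, S.K x y * b y =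
      ∫ y in L.set, (S.K x y - S.K x L.center) * b y := by
    simp_rw [sub_mul]
    rw [integral_sub hint (hb.integrable.integrableOn.const_mul _), integral_const_mul,
      hb.integral_eq_zero L hL, mul_zero, sub_zero]
  calc ‖∫ y in L.set, S.K x y * b y‖ₑ
      ≤ ∫⁻ y in L.set, ‖(S.K x y - S.K x L.center) * b y‖ₑ := by
        rw [hcancel]; exact enorm_integral_le_lintegral_enorm _
    _ ≤ ∫⁻ y in L.set, ENNReal.ofReal (S.Cst * 2 ^ (d + 1) * S.cubeWeight x' L) * ‖b y‖ₑ := by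
        refine setLIntegral_mono' L.measurableSet_set fun y hy => ?_
        rw [enorm_mul, Real.enorm_eq_ofReal_abs (_ - _)]
        gcongr
        exact hfar.abs_kernel_sub_kernel_center_le hd S hy
    _ = _ := by
        rw [lintegral_const_mul' _ _ ENNReal.ofReal_ne_top, ENNReal.ofReal_mul (by positivity)]
        ring

theorem lintegral_kernel_mul_inv_scaleWeight_le (hd : 0 < d)
    (hfar : ∀ L ∈ F, L.IsFarFrom x x') :
    ∫⁻ y, ‖S.K x y * b y‖ₑ * (scaleWeight F x y)⁻¹ ≤
      ENNReal.ofReal (2 * 4 ^ d * S.Cst) * S.badPotential F b x' := by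
  rw [hb.lintegral_eq_tsum volume fun y h₀ => by simp [h₀], CZO.badPotential,
    ← ENNReal.tsum_mul_left]
  refine ENNReal.tsum_le_tsum fun ⟨L, hL⟩ => ?_
  calc ∫⁻ y in L.set, ‖S.K x y * b y‖ₑ * (scaleWeight F x y)⁻¹
      ≤ ∫⁻ y in L.set, ENNReal.ofReal (2 * 4 ^ d * S.Cst) * ENNReal.ofReal (S.cubeWeight x' L) *
          ‖b y‖ₑ := by
        refine setLIntegral_mono' L.measurableSet_set fun y hy => ?_
        rw [scaleWeight_of_mem hb.pairwiseDisjoint hL hy, enorm_mul, mul_right_comm]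
        exact mul_le_mul_left ((hfar L hL).enorm_kernel_mul_inv_sqrt_le hd S hy) _
    _ = _ := by rw [lintegral_const_mul' _ _ (by finiteness)]; ring

theorem setLIntegral_kernel_mul_sqrt_le (hd : 0 < d) (hL : L ∈ F) (hfar : L.IsFarFrom x x')
    {s t : ℝ} (hmeet : (L.set ∩ annulus x s t).Nonempty) (hLA : ¬L.set ⊆ annulus x s t) :
    ∫⁻ y in L.set, ‖S.K x y * b y‖ₑ * ENNReal.ofReal √(dist x L.center / L.diamBound) ≤
      M * ENNReal.ofReal (2 * 4 ^ d * S.Cst) *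
        ∫⁻ z in L.set, (sphereWeight x s z + sphereWeight x t z) := by
  obtain ⟨u, huL, huA⟩ := hmeet
  set a := ENNReal.ofReal √(dist x L.center / L.diamBound)
  set k := ENNReal.ofReal (S.Cst * 2 ^ d / dist x L.center ^ d)
  calc ∫⁻ y in L.set, ‖S.K x y * b y‖ₑ * a
      ≤ ∫⁻ y in L.set, k * a * ‖b y‖ₑ := by
        refine setLIntegral_mono' L.measurableSet_set fun y hy => ?_
        rw [enorm_mul, mul_right_comm]
        exact mul_le_mul_left (mul_le_mul_left (hfar.enorm_kernel_le hd S hy) _) _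
    _ ≤ M * ∫⁻ _ in L.set, k * a := by
        rw [lintegral_const_mul' _ _ (by finiteness), setLIntegral_const, L.volume_set,
          mul_left_comm]
        exact mul_le_mul_right (hb.lintegral_le L hL) _
    _ ≤ M * ∫⁻ z in L.set, ENNReal.ofReal (2 * 4 ^ d * S.Cst) *
          (sphereWeight x s z + sphereWeight x t z) := by
        refine mul_le_mul_right (setLIntegral_mono' L.measurableSet_set fun z hz => ?_) _
        exact (hfar.kernelBound_mul_sqrt_le hd S hz).trans (mul_le_mul_right
          (hfar.ofReal_sqrt_div_le_sphereWeight_add hd huL huA hLA hz) _)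
    _ = _ := by rw [lintegral_const_mul' _ _ ENNReal.ofReal_ne_top, ← mul_assoc]

theorem setLIntegral_sdiff_kernel_mul_scaleWeight_le (hd : 0 < d)
    (hfar : ∀ L ∈ F, L.IsFarFrom x x') {s t : ℝ} (hs : 0 < s) (ht : 0 < t) :
    ∫⁻ y in annulus x s t \ ⋃ L ∈ innerCubes F (annulus x s t), L.set,
        ‖S.K x y * b y‖ₑ * scaleWeight F x y ≤
      M * ENNReal.ofReal (2 * 4 ^ d * S.Cst) * (2 * sphereWeightBound d) := by
  set A := annulus x s t
  rw [hb.lintegral_eq_tsum _ fun y h₀ => by simp [h₀]]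
  calc _ ≤ ∑' L : F, M * ENNReal.ofReal (2 * 4 ^ d * S.Cst) *
          ∫⁻ z in (L : Cube d).set, (sphereWeight x s z + sphereWeight x t z) := by
        refine ENNReal.tsum_le_tsum fun ⟨L, hL⟩ => ?_
        rw [Measure.restrict_restrict L.measurableSet_set]
        rcases (L.set ∩ (A \ ⋃ L ∈ innerCubes F A, L.set)).eq_empty_or_nonempty with hempty | hne
        · rw [hempty, setLIntegral_empty]; exact zero_le
        obtain ⟨u, huL, huA, hu⟩ := hne
        have hLA : ¬L.set ⊆ A := fun hsub => hu (mem_biUnion ⟨hL, hsub⟩ huL)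
        refine (lintegral_mono_set inter_subset_left).trans ?_
        rw [setLIntegral_congr_fun L.measurableSet_set fun y hy =>
          congrArg (‖S.K x y * b y‖ₑ * ·) (scaleWeight_of_mem hb.pairwiseDisjoint hL hy x)]
        exact hb.setLIntegral_kernel_mul_sqrt_le hd hL (hfar L hL) ⟨u, huL, huA⟩ hLA
    _ = M * ENNReal.ofReal (2 * 4 ^ d * S.Cst) *
          ∫⁻ z in ⋃ L ∈ F, L.set, (sphereWeight x s z + sphereWeight x t z) := by
        rw [ENNReal.tsum_mul_left,
          lintegral_biUnion hb.countable (fun L _ => L.measurableSet_set) hb.pairwiseDisjoint]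
    _ ≤ _ := by
        refine mul_le_mul_right ((setLIntegral_le_lintegral _ _).trans ?_) _
        rw [lintegral_add_left (measurable_sphereWeight x s), two_mul]
        exact add_le_add (lintegral_sphereWeight_le hd x hs) (lintegral_sphereWeight_le hd x ht)

theorem measurableSet_biUnion_innerCubes (A : Set (Rd d)) :
    MeasurableSet (⋃ L ∈ innerCubes F A, L.set) :=
  .biUnion (hb.countable.mono fun _ hL => hL.1) fun L _ => L.measurableSet_set

theorem enorm_annularIntegral_le (hd : 0 < d) (hfar : ∀ L ∈ F, L.IsFarFrom x x') {s t : ℝ}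
    (hs : 0 < s) :
    ‖S.annularIntegral b x s t‖ₑ ≤
      (∑' L : innerCubes F (annulus x s t), ENNReal.ofReal (S.Cst * 2 ^ (d + 1)) *
        ((∫⁻ y in (L : Cube d).set, ‖b y‖ₑ) * ENNReal.ofReal (S.cubeWeight x' L))) +
      ∫⁻ y in annulus x s t \ ⋃ L ∈ innerCubes F (annulus x s t), L.set, ‖S.K x y * b y‖ₑ := by
  set A := annulus x s t
  set G := ⋃ L ∈ innerCubes F A, L.set with hG
  have hsub : innerCubes F A ⊆ F := fun _ hL => hL.1
  have hGA : G ⊆ A := iUnion₂_subset fun _ hL => hL.2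
  have hint : IntegrableOn (fun y => S.K x y * b y) A :=
    S.integrableOn_annulus_kernel_mul hb.integrable x hs t
  have hsplit : S.annularIntegral b x s t =
      (∫ y in G, S.K x y * b y) + ∫ y in A \ G, S.K x y * b y := by
    have := integral_inter_add_sdiff (s := A) (hb.measurableSet_biUnion_innerCubes A) hint
    rw [inter_eq_right.2 hGA] at this
    exact this.symm
  have hinner : ∫ y in G, S.K x y * b y =
      ∑' L : innerCubes F A, ∫ y in (L : Cube d).set, S.K x y * b y := by
    have := (hb.countable.mono hsub).to_subtype
    rw [hG, biUnion_eq_iUnion] at hGA ⊢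
    exact integral_iUnion (fun L => Cube.measurableSet_set _)
      ((pairwise_subtype_iff_pairwise_set _ _).2 (hb.pairwiseDisjoint.subset hsub))
      (hint.mono_set hGA)
  rw [hsplit, hinner]
  refine (enorm_add_le _ _).trans (add_le_add ?_ (enorm_integral_le_lintegral_enorm _))
  exact enorm_tsum_le_tsum_enorm.trans (ENNReal.tsum_le_tsum fun L =>
    hb.enorm_setIntegral_kernel_mul_le hd L.2.1 (hfar L L.2.1))

theorem var_le_of_forall_isFarFrom {ρ : ℝ} (hρ : 2 ≤ ρ) (hd : 0 < d)
    (hfar : ∀ L ∈ F, L.IsFarFrom x x') :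
    S.var ρ b x ≤ S.badConst * (S.badPotential F b x' + M) := by
  suffices hvar : S.var ρ b x ≤
      ENNReal.ofReal (S.Cst * 2 ^ (d + 1)) * S.badPotential F b x' +
        (M * ENNReal.ofReal (2 * 4 ^ d * S.Cst) * (2 * sphereWeightBound d) +
          ENNReal.ofReal (2 * 4 ^ d * S.Cst) * S.badPotential F b x') by
    refine hvar.trans (le_self_add.trans_eq (?_ : _ + (ENNReal.ofReal (S.Cst * 2 ^ (d + 1)) * M +
      ENNReal.ofReal (2 * 4 ^ d * S.Cst) * M + ENNReal.ofReal (2 * 4 ^ d * S.Cst) *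
        (2 * sphereWeightBound d) * S.badPotential F b x') = _))
    rw [CZO.badConst]
    ring
  have hρ₁ : 1 ≤ ρ := by linarith
  refine S.var_le_of_forall_seqNorm_le hb.integrable fun ε hε => ?_
  have hdisj := pairwise_disjoint_annulus x hε.1.antitone
  refine (seqNorm_mono (by linarith) fun i =>
    hb.enorm_annularIntegral_le hd hfar (hε.2.1 (i + 1))).trans ?_
  refine (seqNorm_add_le hρ₁ _ _).trans (add_le_add ?_ ?_)
  · refine (seqNorm_le_tsum hρ₁ _).trans ?_
    rw [CZO.badPotential, ← ENNReal.tsum_mul_left]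
    exact tsum_tsum_innerCubes_le F hdisj fun L => ENNReal.ofReal (S.Cst * 2 ^ (d + 1)) *
      ((∫⁻ y in L.set, ‖b y‖ₑ) * ENNReal.ofReal (S.cubeWeight x' L))
  · refine (seqNorm_setLIntegral_le hρ ((S.measurable_kernel x).mul hb.measurable).enorm
      (measurable_scaleWeight hb.countable x) (fun y hy => ?_)
      (fun i => (measurableSet_annulus _ _ _).diff (hb.measurableSet_biUnion_innerCubes _))
      (fun i j hij => (hdisj hij).mono sdiff_subset sdiff_subset) fun i =>
      hb.setLIntegral_sdiff_kernel_mul_scaleWeight_le hd hfar (hε.2.1 _) (hε.2.1 _)).trans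
      (add_le_add_right (hb.lintegral_kernel_mul_inv_scaleWeight_le hd hfar) _)
    obtain ⟨L, hL, hyL⟩ := hb.exists_mem_of_ne_zero (y := y) fun h₀ => hy (by simp [h₀])
    have := (hfar L hL).dist_center_pos hd
    have := L.diamBound_pos hd
    rw [scaleWeight_of_mem hb.pairwiseDisjoint hL hyL]
    exact ⟨(ENNReal.ofReal_pos.2 (by positivity)).ne', ENNReal.ofReal_ne_top⟩

theorem indicator_of_subset {F' : Set (Cube d)} (hF' : F' ⊆ F) :
    IsBadPart F' ((⋃ L ∈ F', L.set).indicator b) M := by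
  have hmeas : MeasurableSet (⋃ L ∈ F', L.set) :=
    .biUnion (hb.countable.mono hF') fun L _ => L.measurableSet_set
  have heq {L : Cube d} (hL : L ∈ F') : EqOn ((⋃ L ∈ F', L.set).indicator b) b L.set :=
    fun y hy => indicator_of_mem (mem_biUnion hL hy) _
  refine ⟨hb.countable.mono hF', hb.pairwiseDisjoint.subset hF', hb.measurable.indicator hmeas,
    hb.integrable.indicator hmeas, fun y hy => indicator_of_notMem hy _, fun L hL => ?_,
    fun L hL => ?_⟩
  · rw [setIntegral_congr_fun L.measurableSet_set (heq hL), hb.integral_eq_zero L (hF' hL)]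
  · refine le_trans (lintegral_mono fun y => enorm_indicator_le_enorm_self _ _) ?_
    exact hb.lintegral_le L (hF' hL)

theorem var_indicator_lt_dist_le {ρ : ℝ} (hρ : 2 ≤ ρ) (hd : 0 < d) {R : ℝ} (hR : 0 < R)
    (hfar : ∀ L ∈ F, (∃ z ∈ L.set, R < dist x z) → L.IsFarFrom x x') :
    S.var ρ ({y | R < dist x y}.indicator b) x ≤ S.badConst * (S.badPotential F b x' + M) := by
  set F' : Set (Cube d) := {L ∈ F | ∃ z ∈ L.set, R < dist x z}
  have hF' : F' ⊆ F := fun _ hL => hL.1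
  set b' := (⋃ L ∈ F', L.set).indicator b
  have hb' : IsBadPart F' b' M := hb.indicator_of_subset hF'
  have hfar_eq : {y | R < dist x y}.indicator b = {y | R < dist x y}.indicator b' := by
    refine indicator_congr fun y hy => (indicator_apply_eq_self.2 fun hyF' => ?_).symm
    by_contra h₀
    obtain ⟨L, hL, hyL⟩ := hb.exists_mem_of_ne_zero h₀
    exact hyF' (mem_biUnion (show L ∈ F' from ⟨hL, y, hyL, hy⟩) hyL)
  have hpotential : S.badPotential F' b' x' ≤ S.badPotential F b x' :=
    calc S.badPotential F' b' x'
        ≤ ∑' L : F', (∫⁻ y in (L : Cube d).set, ‖b y‖ₑ) * ENNReal.ofReal (S.cubeWeight x' L) :=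
          ENNReal.tsum_le_tsum fun L => mul_le_mul_left
            (lintegral_mono fun y => enorm_indicator_le_enorm_self _ _) _
      _ ≤ S.badPotential F b x' := ENNReal.tsum_mono_subtype
          (fun L : Cube d => (∫⁻ y in L.set, ‖b y‖ₑ) * ENNReal.ofReal (S.cubeWeight x' L)) hF'
  calc S.var ρ ({y | R < dist x y}.indicator b) x
      ≤ S.var ρ b' x := hfar_eq ▸ S.var_indicator_lt_dist_le (by linarith) b' x hR
    _ ≤ S.badConst * (S.badPotential F' b' x' + M) :=
        hb'.var_le_of_forall_isFarFrom hρ hd fun L hL => hfar L hL.1 hL.2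
    _ ≤ S.badConst * (S.badPotential F b x' + M) :=
        mul_le_mul_right (add_le_add_left hpotential _) _

end IsBadPart

/-! ### The Calderón–Zygmund decomposition -/

/-- The cubes of a Calderón–Zygmund decomposition of `f` at height `t`: the means of `|f|` over
them are between `t` (after summation) and `2 ^ d * t`, and `|f| ≤ t` outside them. -/
structure IsCZFamily {d : ℕ} (F : Set (Cube d)) (f : Rd d → ℝ) (t : ℝ≥0) : Prop where
  countable : F.Countable
  pairwiseDisjoint : F.PairwiseDisjoint Cube.set
  lintegral_le : ∀ L ∈ F, ∫⁻ y in L.set, ‖f y‖ₑ ≤ (2 ^ d * t : ℝ≥0) * L.vol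
  mul_tsum_vol_le : t * ∑' L : F, (L : Cube d).vol ≤ ∫⁻ y, ‖f y‖ₑ
  ae_enorm_le : ∀ᵐ y, y ∉ ⋃ L ∈ F, L.set → ‖f y‖ₑ ≤ t

/-- A Calderón–Zygmund decomposition of `f` at height `t`, given by its cubes and its good part
`g`; the bad part is `badPart F f g`. The truncation of `f` outside the cubes makes the bound on
`g` hold everywhere and not only almost everywhere. -/
structure IsCZDecomposition {d : ℕ} (F : Set (Cube d)) (f : Rd d → ℝ) (t : ℝ≥0)
    (g : Rd d → ℝ) : Prop extends IsCZFamily F f t where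
  measurable : Measurable g
  eq_average : ∀ L ∈ F, ∀ y ∈ L.set, g y = ⨍ z in L.set, f z
  eq_indicator : ∀ y ∉ ⋃ L ∈ F, L.set, g y = {z | ‖f z‖ₑ ≤ t}.indicator f y

/-- The bad part of the Calderón–Zygmund decomposition of `f` with cubes `F` and good part `g`. -/
def badPart {d : ℕ} (F : Set (Cube d)) (f g : Rd d → ℝ) : Rd d → ℝ :=
  (⋃ L ∈ F, L.set).indicator (f - g)

section StoppingCubes

variable {d : ℕ} {Q₀ : Cube d} {t : ℝ≥0}

theorem setLIntegral_le_of_forall_isDyadicSubcube {h : Rd d → ℝ≥0∞} {E : Set (Rd d)}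
    (hE : E ⊆ Q₀.set)
    (hQ : ∀ Q, IsDyadicSubcube Q₀ Q → (Q.set ∩ E).Nonempty → ∫⁻ y in Q.set, h y ≤ t * Q.vol) :
    ∫⁻ y in E, h y ≤ t * volume E := by
  have hfin : volume E ≠ ∞ :=
    ne_top_of_le_ne_top Q₀.vol_ne_top (Q₀.volume_set ▸ measure_mono hE)
  refine ENNReal.le_mul_of_forall_lt (.inr hfin) (.inl ENNReal.coe_ne_top) fun t' ht' v hv => ?_
  obtain ⟨U, hEU, hU, hUv⟩ := E.exists_isOpen_lt_of_lt v hv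
  set F := Q₀.maximalSubcubes (·.set ⊆ U)
  have : Countable F := (Q₀.countable_maximalSubcubes _).to_subtype
  calc ∫⁻ y in E, h y
      ≤ ∫⁻ y in ⋃ P : F, (P : Cube d).set ∩ E, h y := by
        refine lintegral_mono_set fun y hy => ?_
        rw [← iUnion_inter, ← biUnion_eq_iUnion F fun P _ => P.set]
        exact ⟨Cube.inter_subset_biUnion_maximalSubcubes hU ⟨hE hy, hEU hy⟩, hy⟩
    _ ≤ ∑' P : F, ∫⁻ y in (P : Cube d).set ∩ E, h y := lintegral_iUnion_le _ _
    _ ≤ ∑' P : F, t * (P : Cube d).vol := by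
        refine ENNReal.tsum_le_tsum fun P => ?_
        rcases ((P : Cube d).set ∩ E).eq_empty_or_nonempty with hempty | hne
        · rw [hempty, setLIntegral_empty]; exact zero_le
        · exact (lintegral_mono_set inter_subset_left).trans (hQ P P.2.1 hne)
    _ ≤ t * volume U := by
        rw [ENNReal.tsum_mul_left]
        exact mul_le_mul_right (Q₀.tsum_vol_maximalSubcubes_le U) _
    _ ≤ t' * v := mul_le_mul' ht'.le hUv.le

theorem ae_le_of_forall_isDyadicSubcube {h : Rd d → ℝ≥0∞} (hh : Measurable h) {V : Set (Rd d)}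
    (hV : MeasurableSet V)
    (hQ : ∀ Q, IsDyadicSubcube Q₀ Q → ¬ Q.set ⊆ V → ∫⁻ y in Q.set, h y ≤ t * Q.vol) :
    ∀ᵐ y, y ∈ Q₀.set → y ∉ V → h y ≤ t := by
  have hmeas : MeasurableSet (Q₀.set \ V) := Q₀.measurableSet_set.diff hV
  have hle : h ≤ᵐ[volume.restrict (Q₀.set \ V)] fun _ => t := by
    refine ae_le_of_forall_setLIntegral_le_of_sigmaFinite hh fun s hs _ => ?_
    rw [Measure.restrict_restrict hs, setLIntegral_const]
    refine setLIntegral_le_of_forall_isDyadicSubcube (inter_subset_right.trans sdiff_subset)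
      fun Q hdyad ⟨y, hyQ, hy⟩ => hQ Q hdyad fun hsub => hy.2.2 (hsub hyQ)
  filter_upwards [(ae_restrict_iff' hmeas).1 hle] with y hy hyQ hyV using hy ⟨hyQ, hyV⟩

theorem exists_isCZFamily {f : Rd d → ℝ} (hf : Measurable f) (hsupp : ∀ y ∉ Q₀.set, f y = 0)
    (havg : ∫⁻ y in Q₀.set, ‖f y‖ₑ ≤ t * Q₀.vol) : ∃ F, IsCZFamily F f t := by
  set p : Cube d → Prop := fun Q => t * Q.vol < ∫⁻ y in Q.set, ‖f y‖ₑ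
  set F := Q₀.maximalSubcubes p
  have hcount : F.Countable := Q₀.countable_maximalSubcubes p
  have hdisj : F.PairwiseDisjoint Cube.set := Q₀.pairwiseDisjoint_maximalSubcubes p
  have hmeas : MeasurableSet (⋃ L ∈ F, L.set) := .biUnion hcount fun L _ => L.measurableSet_set
  refine ⟨F, hcount, hdisj, fun L hL => ?_, ?_, ?_⟩
  · obtain ⟨P, -, hLP, hl, hP⟩ := Cube.exists_parent_of_mem_maximalSubcubes havg.not_gt hL
    have hvol : P.vol = 2 ^ d * L.vol := by
      rw [Cube.vol, hl, mul_pow, ENNReal.ofReal_mul (by positivity),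
        ENNReal.ofReal_pow zero_le_two, ENNReal.ofReal_ofNat, Cube.vol]
    calc ∫⁻ y in L.set, ‖f y‖ₑ ≤ ∫⁻ y in P.set, ‖f y‖ₑ := lintegral_mono_set hLP
      _ ≤ t * P.vol := not_lt.1 hP
      _ = (2 ^ d * t : ℝ≥0) * L.vol := by rw [hvol]; push_cast; ring
  · calc t * ∑' L : F, (L : Cube d).vol
        ≤ ∑' L : F, ∫⁻ y in (L : Cube d).set, ‖f y‖ₑ := by
          rw [← ENNReal.tsum_mul_left]
          exact ENNReal.tsum_le_tsum fun L => L.2.2.1.le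
      _ = ∫⁻ y in ⋃ L ∈ F, L.set, ‖f y‖ₑ :=
          (lintegral_biUnion hcount (fun L _ => L.measurableSet_set) hdisj _).symm
      _ ≤ ∫⁻ y, ‖f y‖ₑ := setLIntegral_le_lintegral _ _
  · have hsmall : ∀ᵐ y, y ∈ Q₀.set → y ∉ ⋃ L ∈ F, L.set → ‖f y‖ₑ ≤ t := by
      refine ae_le_of_forall_isDyadicSubcube hf.enorm hmeas fun Q hQ hnot => not_lt.1 fun hp => ?_
      refine hnot fun x hx => ?_
      obtain ⟨P, hP, hxP⟩ := Cube.exists_maximalSubcubes_mem (p := p) hQ hp hx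
      exact mem_biUnion hP hxP
    filter_upwards [hsmall] with y hy hyF
    by_cases hyQ : y ∈ Q₀.set
    · exact hy hyQ hyF
    · simp [hsupp y hyQ]

end StoppingCubes

theorem exists_measurable_eq_const_on_cubes {d : ℕ} {F : Set (Cube d)} (hF : F.Countable)
    (hdisj : F.PairwiseDisjoint Cube.set) (c : Cube d → ℝ) {f₀ : Rd d → ℝ} (hf₀ : Measurable f₀) :
    ∃ g : Rd d → ℝ, Measurable g ∧ (∀ L ∈ F, ∀ y ∈ L.set, g y = c L) ∧
      ∀ y ∉ ⋃ L ∈ F, L.set, g y = f₀ y := by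
  have : Countable F := hF.to_subtype
  have hmeas : MeasurableSet (⋃ L ∈ F, L.set) := .biUnion hF fun L _ => L.measurableSet_set
  obtain ⟨g, hg, heq⟩ := exists_measurable_piecewise
    (fun o : Option F => o.elim (⋃ L ∈ F, L.set)ᶜ fun L => (L : Cube d).set)
    (by rintro (_ | L); exacts [hmeas.compl, L.1.measurableSet_set])
    (fun o : Option F => o.elim f₀ fun L _ => c L)
    (by rintro (_ | L); exacts [hf₀, measurable_const])
    (by
      rintro (_ | L) (_ | L') hne y ⟨hy, hy'⟩
      · exact absurd rfl hne
      · exact absurd (mem_biUnion L'.2 hy') hy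
      · exact absurd (mem_biUnion L.2 hy) hy'
      · simp only [Option.elim, hdisj.elim_set L.2 L'.2 y hy hy'])
  exact ⟨g, hg, fun L hL => heq (some ⟨L, hL⟩), heq none⟩

theorem IsCZFamily.exists_isCZDecomposition {d : ℕ} {F : Set (Cube d)} {f : Rd d → ℝ} {t : ℝ≥0}
    (hF : IsCZFamily F f t) (hf : Measurable f) : ∃ g, IsCZDecomposition F f t g := by
  have htrunc : Measurable ({z | ‖f z‖ₑ ≤ t}.indicator f) :=
    hf.indicator (measurableSet_le hf.enorm measurable_const)
  obtain ⟨g, hg, hgF, hg₀⟩ := exists_measurable_eq_const_on_cubes hF.countable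
    hF.pairwiseDisjoint (fun L => ⨍ z in L.set, f z) htrunc
  exact ⟨g, hF, hg, hgF, hg₀⟩

theorem Cube.enorm_average_mul_vol_le {d : ℕ} (L : Cube d) (f : Rd d → ℝ) :
    ‖⨍ z in L.set, f z‖ₑ * L.vol ≤ ∫⁻ y in L.set, ‖f y‖ₑ := by
  have hvol : ‖volume.real L.set‖ₑ = L.vol := by
    rw [Real.enorm_of_nonneg measureReal_nonneg, ofReal_measureReal (L.volume_set ▸ L.vol_ne_top),
      L.volume_set]
  have hmean := measure_smul_setAverage (μ := volume) f (L.volume_set ▸ L.vol_ne_top)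
  rw [mul_comm, ← hvol, ← enorm_smul, hmean]
  exact enorm_integral_le_lintegral_enorm _

namespace IsCZDecomposition

variable {d : ℕ} {F : Set (Cube d)} {f g : Rd d → ℝ} {t : ℝ≥0} {L : Cube d}
  (hD : IsCZDecomposition F f t g)

include hD

theorem measurableSet_biUnion : MeasurableSet (⋃ L ∈ F, L.set) :=
  .biUnion hD.countable fun L _ => L.measurableSet_set

theorem setLIntegral_enorm_le (hL : L ∈ F) :
    ∫⁻ y in L.set, ‖g y‖ₑ ≤ ∫⁻ y in L.set, ‖f y‖ₑ := by
  rw [setLIntegral_congr_fun (g := fun _ => ‖⨍ z in L.set, f z‖ₑ) L.measurableSet_set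
    fun y hy => by rw [hD.eq_average L hL y hy], setLIntegral_const, L.volume_set]
  exact L.enorm_average_mul_vol_le f

theorem lintegral_enorm_le : ∫⁻ y, ‖g y‖ₑ ≤ ∫⁻ y, ‖f y‖ₑ := by
  have hF := hD.measurableSet_biUnion
  rw [← lintegral_add_compl _ hF, ← lintegral_add_compl (fun y => ‖f y‖ₑ) hF]
  refine add_le_add ?_ (setLIntegral_mono' hF.compl fun y hy => ?_)
  · have hm (L : Cube d) (_ : L ∈ F) := L.measurableSet_set
    rw [lintegral_biUnion hD.countable hm hD.pairwiseDisjoint,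
      lintegral_biUnion hD.countable hm hD.pairwiseDisjoint]
    exact ENNReal.tsum_le_tsum fun L => hD.setLIntegral_enorm_le L.2
  · rw [hD.eq_indicator y hy]
    exact enorm_indicator_le_enorm_self _ _

theorem integrable (hf : Integrable f) : Integrable g :=
  ⟨hD.measurable.aestronglyMeasurable, hD.lintegral_enorm_le.trans_lt hf.2⟩

theorem enorm_le (y : Rd d) : ‖g y‖ₑ ≤ (2 ^ d * t : ℝ≥0) := by
  by_cases hy : y ∈ ⋃ L ∈ F, L.set
  · obtain ⟨L, hL, hyL⟩ := mem_iUnion₂.1 hy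
    rw [hD.eq_average L hL y hyL, ← ENNReal.mul_le_mul_iff_left L.vol_pos.ne' L.vol_ne_top]
    exact (L.enorm_average_mul_vol_le f).trans (hD.lintegral_le L hL)
  · rw [hD.eq_indicator y hy]
    have ht : (t : ℝ≥0∞) ≤ (2 ^ d * t : ℝ≥0) :=
      ENNReal.coe_le_coe.2 (le_mul_of_one_le_left' (one_le_pow₀ one_le_two))
    by_cases hyt : y ∈ {z | ‖f z‖ₑ ≤ t}
    · rw [indicator_of_mem hyt]; exact le_trans hyt ht
    · rw [indicator_of_notMem hyt, enorm_zero]; exact zero_le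

theorem ae_eq_add_badPart : f =ᵐ[volume] g + badPart F f g := by
  filter_upwards [hD.ae_enorm_le] with y hy
  by_cases hyF : y ∈ ⋃ L ∈ F, L.set
  · simp [badPart, indicator_of_mem hyF]
  · have hyt : y ∈ {z | ‖f z‖ₑ ≤ t} := hy hyF
    rw [Pi.add_apply, badPart, indicator_of_notMem hyF, hD.eq_indicator y hyF,
      indicator_of_mem hyt, add_zero]

theorem setIntegral_badPart (hL : L ∈ F) : ∫ y in L.set, badPart F f g y = 0 := by
  have : IsFiniteMeasure (volume.restrict L.set) :=
    isFiniteMeasure_restrict.2 (L.volume_set ▸ L.vol_ne_top)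
  rw [← integral_sub_average (volume.restrict L.set) f]
  refine setIntegral_congr_fun L.measurableSet_set fun y hy => ?_
  simp only [badPart, indicator_of_mem (mem_biUnion hL hy), Pi.sub_apply, hD.eq_average L hL y hy]

theorem setLIntegral_enorm_badPart_le (hf : Measurable f) (hL : L ∈ F) :
    ∫⁻ y in L.set, ‖badPart F f g y‖ₑ ≤ 2 * ∫⁻ y in L.set, ‖f y‖ₑ :=
  calc ∫⁻ y in L.set, ‖badPart F f g y‖ₑ
      ≤ ∫⁻ y in L.set, (‖f y‖ₑ + ‖g y‖ₑ) :=
        lintegral_mono fun _ => (enorm_indicator_le_enorm_self _ _).trans enorm_sub_le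
    _ = (∫⁻ y in L.set, ‖f y‖ₑ) + ∫⁻ y in L.set, ‖g y‖ₑ := lintegral_add_left hf.enorm _
    _ ≤ (∫⁻ y in L.set, ‖f y‖ₑ) + ∫⁻ y in L.set, ‖f y‖ₑ :=
        add_le_add_right (hD.setLIntegral_enorm_le hL) _
    _ = 2 * ∫⁻ y in L.set, ‖f y‖ₑ := (two_mul _).symm

theorem isBadPart (hf : Measurable f) (hint : Integrable f) :
    IsBadPart F (badPart F f g) (2 * (2 ^ d * t)) where
  countable := hD.countable
  pairwiseDisjoint := hD.pairwiseDisjoint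
  measurable := (hf.sub hD.measurable).indicator hD.measurableSet_biUnion
  integrable := (hint.sub (hD.integrable hint)).indicator hD.measurableSet_biUnion
  eq_zero y hy := indicator_of_notMem hy _
  integral_eq_zero L hL := hD.setIntegral_badPart hL
  lintegral_le L hL := by
    rw [ENNReal.coe_mul, ENNReal.coe_ofNat, mul_assoc]
    exact (hD.setLIntegral_enorm_badPart_le hf hL).trans
      (mul_le_mul_right (hD.lintegral_le L hL) _)

theorem lintegral_enorm_badPart_le (hf : Measurable f) :
    ∫⁻ y, ‖badPart F f g y‖ₑ ≤ 2 * ∫⁻ y, ‖f y‖ₑ :=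
  calc ∫⁻ y, ‖badPart F f g y‖ₑ
      ≤ ∫⁻ y, (‖f y‖ₑ + ‖g y‖ₑ) :=
        lintegral_mono fun _ => (enorm_indicator_le_enorm_self _ _).trans enorm_sub_le
    _ = (∫⁻ y, ‖f y‖ₑ) + ∫⁻ y, ‖g y‖ₑ := lintegral_add_left hf.enorm _
    _ ≤ (∫⁻ y, ‖f y‖ₑ) + ∫⁻ y, ‖f y‖ₑ := add_le_add_right hD.lintegral_enorm_le _
    _ = 2 * ∫⁻ y, ‖f y‖ₑ := (two_mul _).symm

end IsCZDecomposition

/-! ### The exceptional set -/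

namespace CZO

variable {d : ℕ} {S : CZO d} {ρ q : ℝ}

theorem VarBdd.exists_mul_volume_lt_var_le (hbdd : S.VarBdd ρ q) (hd : 0 < d) (hρ : 0 < ρ)
    (hq : 1 ≤ q) (N : ℝ≥0) :
    ∃ C : ℝ≥0∞, C ≠ ∞ ∧ ∀ (g : Rd d → ℝ) (t : ℝ≥0), Measurable g → Integrable g →
      (∀ y, ‖g y‖ₑ ≤ (N * t : ℝ≥0)) →
      t * volume {z | t < S.var ρ g z} ≤ C * ∫⁻ y, ‖g y‖ₑ := by
  obtain ⟨A, -, hA⟩ := hbdd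
  have hq₀ : 0 ≤ q := by linarith
  have hq₁ : 0 ≤ q - 1 := by linarith
  have rpow_eq (a : ℝ≥0∞) : a ^ q = a ^ (q - 1) * a := by
    conv_lhs => rw [← sub_add_cancel q 1, ENNReal.rpow_add_of_nonneg _ _ hq₁ zero_le_one,
      ENNReal.rpow_one]
  refine ⟨ENNReal.ofReal A * (N : ℝ≥0∞) ^ (q - 1), by finiteness, fun g t hg hint hN => ?_⟩
  rcases eq_or_ne t 0 with rfl | ht
  · simp
  have ht₀ : (t : ℝ≥0∞) ^ (q - 1) ≠ 0 := by simp [ENNReal.rpow_eq_zero_iff, ht]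
  rw [← ENNReal.mul_le_mul_iff_right ht₀ (by finiteness)]
  calc (t : ℝ≥0∞) ^ (q - 1) * (t * volume {z | t < S.var ρ g z})
      = t ^ q * volume {z | t < S.var ρ g z} := by rw [← mul_assoc, ← rpow_eq]
    _ ≤ t ^ q * volume {z | t ^ q ≤ S.var ρ g z ^ q} :=
        mul_le_mul_right (measure_mono fun z hz =>
          ENNReal.rpow_le_rpow (le_of_lt (show t < S.var ρ g z from hz)) hq₀) _
    _ ≤ ∫⁻ z, S.var ρ g z ^ q := mul_meas_ge_le_lintegral
        ((S.lowerSemicontinuous_var hint hd hρ).measurable.pow_const q) _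
    _ ≤ ENNReal.ofReal A * ∫⁻ y, ENNReal.ofReal |g y| ^ q := hA g hg
    _ ≤ ENNReal.ofReal A * ∫⁻ y, (N * t : ℝ≥0) ^ (q - 1) * ‖g y‖ₑ := by
        gcongr with y
        rw [← Real.enorm_eq_ofReal_abs, rpow_eq]
        exact mul_le_mul_left (ENNReal.rpow_le_rpow (hN y) hq₁) _
    _ = _ := by
        rw [lintegral_const_mul _ hg.enorm, ENNReal.coe_mul, ENNReal.mul_rpow_of_nonneg _ _ hq₁]
        ring

end CZO

theorem volume_biUnion_closedBall_center_le {d : ℕ} {F : Set (Cube d)} (hF : F.Countable)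
    {N : ℝ} (hN : 0 ≤ N) :
    volume (⋃ L ∈ F, Metric.closedBall L.center (N * L.diamBound)) ≤
      ENNReal.ofReal ((N * d) ^ d) * unitBallVolume d * ∑' L : F, (L : Cube d).vol := by
  refine (measure_biUnion_le _ hF _).trans ?_
  rw [← ENNReal.tsum_mul_left]
  refine ENNReal.tsum_le_tsum fun L => le_of_eq ?_
  have hl := (L : Cube d).hl
  rw [volume_closedBall_eq _ (by rw [Cube.diamBound]; positivity), Cube.vol, Cube.diamBound,
    ← mul_assoc, mul_pow, ENNReal.ofReal_mul (by positivity)]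
  ring

theorem CZO.setLIntegral_cubeWeight_le {d : ℕ} (S : CZO d) (hd : 0 < d) (L : Cube d) :
    ∫⁻ z in {z | L.diamBound ≤ dist z L.center}, ENNReal.ofReal (S.cubeWeight z L) ≤
      S.modulusBound := by
  simp only [CZO.cubeWeight, dist_comm _ L.center]
  exact setLIntegral_modulus_div_dist_pow_le S.monotone_modulus S.modulus_nonneg L.center
    (L.diamBound_pos hd)

theorem CZO.measurable_cubeWeight {d : ℕ} (S : CZO d) (L : Cube d) :
    Measurable fun z => S.cubeWeight z L := by
  have hdist : Measurable fun z : Rd d => dist z L.center := by fun_prop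
  exact (S.monotone_modulus.measurable.comp (hdist.const_div _)).div (hdist.pow_const d)

theorem IsBadPart.mul_volume_lt_badPotential_le {d : ℕ} {S : CZO d} {F : Set (Cube d)}
    {b : Rd d → ℝ} {M : ℝ≥0} (hb : IsBadPart F b M) (hd : 0 < d) (t : ℝ≥0∞) :
    t * volume {z | (∀ L ∈ F, L.diamBound ≤ dist z L.center) ∧ t < S.badPotential F b z} ≤
      S.modulusBound * ∫⁻ y, ‖b y‖ₑ := by
  have : Countable F := hb.countable.to_subtype
  set far : Cube d → Set (Rd d) := fun L => {z | L.diamBound ≤ dist z L.center}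
  set term : F → Rd d → ℝ≥0∞ := fun L z => (∫⁻ y in (L : Cube d).set, ‖b y‖ₑ) *
    (far L).indicator (fun z => ENNReal.ofReal (S.cubeWeight z L)) z
  have hfar (L : Cube d) : MeasurableSet (far L) := measurableSet_le measurable_const (by fun_prop)
  have hindicator (L : Cube d) :
      Measurable ((far L).indicator fun z => ENNReal.ofReal (S.cubeWeight z L)) :=
    (S.measurable_cubeWeight L).ennreal_ofReal.indicator (hfar L)
  have hterm (L : F) : Measurable (term L) := (hindicator L).const_mul _
  calc t * volume {z | (∀ L ∈ F, L.diamBound ≤ dist z L.center) ∧ t < S.badPotential F b z}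
      ≤ t * volume {z | t ≤ ∑' L, term L z} := by
        refine mul_le_mul_right (measure_mono ?_) _
        rintro z ⟨hzfar, hz⟩
        refine hz.le.trans_eq (tsum_congr fun L => ?_)
        simp only [term, indicator_of_mem (show z ∈ far L from hzfar L L.2)]
    _ ≤ ∫⁻ z, ∑' L, term L z := mul_meas_ge_le_lintegral (Measurable.tsum hterm) t
    _ = ∑' L, ∫⁻ z, term L z := lintegral_tsum fun L => (hterm L).aemeasurable
    _ ≤ ∑' L : F, S.modulusBound * ∫⁻ y in (L : Cube d).set, ‖b y‖ₑ := by
        refine ENNReal.tsum_le_tsum fun L => ?_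
        rw [lintegral_const_mul _ (hindicator L), lintegral_indicator (hfar L), mul_comm]
        exact mul_le_mul_left (S.setLIntegral_cubeWeight_le hd L) _
    _ = S.modulusBound * ∫⁻ y, ‖b y‖ₑ := by
        rw [ENNReal.tsum_mul_left, hb.lintegral_eq_tsum volume fun y h₀ => by simp [h₀]]

/-- A point outside the exceptional set of the Calderón–Zygmund decomposition at height `t` with
cubes `F`, good part `g` and bad part `b`. -/
structure IsGoodPoint {d : ℕ} (S : CZO d) (ρ : ℝ) (F : Set (Cube d)) (g b : Rd d → ℝ) (t : ℝ≥0)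
    (z : Rd d) : Prop where
  var_le : S.var ρ g z ≤ t
  diamBound_le : ∀ L ∈ F, 20 * L.diamBound ≤ dist z L.center
  badPotential_le : S.badPotential F b z ≤ t

theorem setOf_not_isGoodPoint_subset {d : ℕ} {S : CZO d} (hd : 0 < d) {ρ : ℝ} {F : Set (Cube d)}
    {g b : Rd d → ℝ} {t : ℝ≥0} :
    {z | ¬ IsGoodPoint S ρ F g b t z} ⊆ {z | t < S.var ρ g z} ∪
      ((⋃ L ∈ F, Metric.closedBall L.center (20 * L.diamBound)) ∪
        {z | (∀ L ∈ F, L.diamBound ≤ dist z L.center) ∧ t < S.badPotential F b z}) := by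
  intro z hz
  by_contra hnot
  simp only [mem_union, not_or, mem_iUnion, not_exists, Metric.mem_closedBall, not_le,
    mem_ofPred_eq, not_lt, not_and] at hnot
  obtain ⟨hvar, hballs, hpotential⟩ := hnot
  refine hz ⟨hvar, fun L hL => (hballs L hL).le, hpotential fun L hL => ?_⟩
  linarith [hballs L hL, L.diamBound_pos hd]

theorem CZO.VarBdd.exists_mul_volume_not_isGoodPoint_le {d : ℕ} {S : CZO d} {ρ q : ℝ}
    (hbdd : S.VarBdd ρ q) (hd : 0 < d) (hρ : 0 < ρ) (hq : 1 ≤ q) :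
    ∃ C : ℝ≥0∞, C ≠ ∞ ∧ ∀ (F : Set (Cube d)) (f g : Rd d → ℝ) (t : ℝ≥0), Measurable f →
      Integrable f → IsCZDecomposition F f t g →
      t * volume {z | ¬ IsGoodPoint S ρ F g (badPart F f g) t z} ≤ C * ∫⁻ y, ‖f y‖ₑ := by
  obtain ⟨Cg, hCg, hg⟩ := hbdd.exists_mul_volume_lt_var_le hd hρ hq (2 ^ d)
  set Cballs := ENNReal.ofReal ((20 * d) ^ d) * unitBallVolume d
  refine ⟨Cg + (Cballs + S.modulusBound * 2), ?_, fun F f g t hf hint hD => ?_⟩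
  · have := unitBallVolume_ne_top d
    have := S.modulusBound_ne_top
    finiteness
  set b := badPart F f g
  have hballs : t * volume (⋃ L ∈ F, Metric.closedBall L.center (20 * L.diamBound)) ≤
      Cballs * ∫⁻ y, ‖f y‖ₑ :=
    calc _ ≤ t * (Cballs * ∑' L : F, (L : Cube d).vol) := mul_le_mul_right
          (volume_biUnion_closedBall_center_le hD.countable (by norm_num)) _
      _ = Cballs * (t * ∑' L : F, (L : Cube d).vol) := mul_left_comm _ _ _
      _ ≤ Cballs * ∫⁻ y, ‖f y‖ₑ := mul_le_mul_right hD.mul_tsum_vol_le _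
  have hpotential := ((hD.isBadPart hf hint).mul_volume_lt_badPotential_le (S := S) hd t).trans
    (mul_le_mul_right (hD.lintegral_enorm_badPart_le hf) _)
  have hvar := (hg g t hD.measurable (hD.integrable hint) hD.enorm_le).trans
    (mul_le_mul_right hD.lintegral_enorm_le _)
  calc t * volume {z | ¬ IsGoodPoint S ρ F g b t z}
      ≤ t * (volume {z | t < S.var ρ g z} +
          (volume (⋃ L ∈ F, Metric.closedBall L.center (20 * L.diamBound)) +
            volume {z | (∀ L ∈ F, L.diamBound ≤ dist z L.center) ∧
              t < S.badPotential F b z})) :=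
        mul_le_mul_right ((measure_mono (setOf_not_isGoodPoint_subset hd)).trans
          ((measure_union_le _ _).trans (add_le_add_right (measure_union_le _ _) _))) _
    _ ≤ Cg * (∫⁻ y, ‖f y‖ₑ) + (Cballs * (∫⁻ y, ‖f y‖ₑ) +
          S.modulusBound * (2 * ∫⁻ y, ‖f y‖ₑ)) := by
        rw [mul_add, mul_add]
        exact add_le_add hvar (add_le_add hballs hpotential)
    _ = (Cg + (Cballs + S.modulusBound * 2)) * ∫⁻ y, ‖f y‖ₑ := by ring

/-! ### Pointwise bounds near a good point -/

section BallMass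

variable {d : ℕ} {F : Set (Cube d)} {f : Rd d → ℝ} {t : ℝ≥0} (hF : IsCZFamily F f t)
include hF

theorem IsCZFamily.setLIntegral_le_of_forall_subset {A B : Set (Rd d)} (hA : MeasurableSet A)
    (hAB : A ⊆ B) (hcubes : ∀ L ∈ F, (L.set ∩ A).Nonempty → L.set ⊆ B) :
    ∫⁻ y in A, ‖f y‖ₑ ≤ (1 + 2 ^ d) * t * volume B := by
  set V : Set (Rd d) := ⋃ L ∈ F, L.set
  set G : Set (Cube d) := {L ∈ F | (L.set ∩ A).Nonempty}
  have hV : MeasurableSet V := .biUnion hF.countable fun L _ => L.measurableSet_set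
  have hGF : G ⊆ F := fun _ hL => hL.1
  have hG : G.Countable := hF.countable.mono hGF
  have : Countable G := hG.to_subtype
  have hAVG : A ⊆ (A \ V) ∪ ⋃ L : G, (L : Cube d).set := fun y hy => by
    by_cases hyV : y ∈ V
    · obtain ⟨L, hL, hyL⟩ := mem_iUnion₂.1 hyV
      exact .inr (mem_iUnion.2 ⟨⟨L, hL, y, hyL, hy⟩, hyL⟩)
    · exact .inl ⟨hy, hyV⟩
  have hoff : ∫⁻ y in A \ V, ‖f y‖ₑ ≤ t * volume B :=
    calc ∫⁻ y in A \ V, ‖f y‖ₑ ≤ ∫⁻ _ in A \ V, t :=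
          setLIntegral_mono_ae' (hA.diff hV) (hF.ae_enorm_le.mono fun y hy hyA => hy hyA.2)
      _ = t * volume (A \ V) := setLIntegral_const _ _
      _ ≤ t * volume B := mul_le_mul_right (measure_mono (sdiff_subset.trans hAB)) _
  have hon : ∫⁻ y in ⋃ L : G, (L : Cube d).set, ‖f y‖ₑ ≤ 2 ^ d * t * volume B :=
    calc ∫⁻ y in ⋃ L : G, (L : Cube d).set, ‖f y‖ₑ
        ≤ ∑' L : G, ∫⁻ y in (L : Cube d).set, ‖f y‖ₑ := lintegral_iUnion_le _ _
      _ ≤ ∑' L : G, 2 ^ d * t * (L : Cube d).vol := ENNReal.tsum_le_tsum fun L => by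
          exact_mod_cast hF.lintegral_le L (hGF L.2)
      _ = 2 ^ d * t * volume (⋃ L ∈ G, L.set) := by
          rw [ENNReal.tsum_mul_left, tsum_vol_eq_volume_biUnion hG (hF.pairwiseDisjoint.subset hGF)]
      _ ≤ 2 ^ d * t * volume B :=
          mul_le_mul_right (measure_mono (iUnion₂_subset fun L hL => hcubes L hL.1 hL.2)) _
  calc ∫⁻ y in A, ‖f y‖ₑ
      ≤ (∫⁻ y in A \ V, ‖f y‖ₑ) + ∫⁻ y in ⋃ L : G, (L : Cube d).set, ‖f y‖ₑ :=
        (lintegral_mono_set hAVG).trans (lintegral_union_le _ _ _)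
    _ ≤ t * volume B + 2 ^ d * t * volume B := add_le_add hoff hon
    _ = (1 + 2 ^ d) * t * volume B := by ring

theorem IsCZFamily.setLIntegral_closedBall_le {x x' : Rd d} {R : ℝ} (hR : 0 ≤ R)
    (hxx' : dist x x' ≤ R) (hfar : ∀ L ∈ F, 20 * L.diamBound ≤ dist x' L.center) :
    ∫⁻ y in Metric.closedBall x R, ‖f y‖ₑ ≤
      (1 + 2 ^ d) * t * volume (Metric.closedBall x (2 * R)) := by
  refine hF.setLIntegral_le_of_forall_subset Metric.isClosed_closedBall.measurableSet
    (Metric.closedBall_subset_closedBall (by linarith)) fun L hL ⟨z, hzL, hzR⟩ y hy => ?_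
  have hcenter : dist x' L.center ≤ dist x x' + dist z x + dist z L.center := by
    have := dist_triangle4 x' x z L.center
    rwa [dist_comm x' x, dist_comm x z] at this
  rw [Metric.mem_closedBall] at hzR ⊢
  linarith [hfar L hL, L.dist_le_diamBound hzL L.center_mem, L.dist_le_diamBound hy hzL,
    dist_triangle y z x, dist_nonneg (x := z) (y := L.center)]

end BallMass

namespace CZO

variable {d : ℕ} (S : CZO d)

/-- The constant in the bound for the part of `f` supported outside `3P` but within `100` times
the diameter of `P`. -/
def middleConst : ℝ≥0∞ :=
  ENNReal.ofReal S.Cst * (1 + 2 ^ d) * (ENNReal.ofReal ((400 * d) ^ d) * unitBallVolume d)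

theorem middleConst_ne_top : S.middleConst ≠ ∞ := by
  have := unitBallVolume_ne_top d
  unfold middleConst
  finiteness

/-- The constant in the bound for `V_ρ(T_* f)` near a good point, collecting the contributions of
the middle part of `f` and of the far parts of `g` and `b`. -/
def pointConst : ℝ≥0∞ :=
  S.middleConst + (1 + S.farShiftConst * 2 ^ d) + S.badConst * (1 + 2 * 2 ^ d)

theorem pointConst_ne_top : S.pointConst ≠ ∞ := by
  have := S.middleConst_ne_top
  have := S.farShiftConst_ne_top
  have := S.badConst_ne_top
  unfold pointConst
  finiteness

end CZO

section MiddlePart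

variable {d : ℕ} {F : Set (Cube d)} {f : Rd d → ℝ} {t : ℝ≥0} {P : Cube d} {x x' : Rd d} {ρ : ℝ}

theorem IsCZFamily.var_indicator_compl_dilate_three_inter_closedBall_le (S : CZO d)
    (hF : IsCZFamily F f t) (hf : Integrable f) (hρ : 1 ≤ ρ) (hx : x ∈ P.set)
    (hxx' : dist x x' ≤ 2 * P.diamBound)
    (hfar : ∀ L ∈ F, 20 * L.diamBound ≤ dist x' L.center) :
    S.var ρ (((P.dilate 3)ᶜ ∩ Metric.closedBall x (100 * P.diamBound)).indicator f) x ≤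
      S.middleConst * t := by
  have hl := P.hl
  have hCst := S.hCst
  have hdiam := P.diamBound_nonneg
  set B := Metric.closedBall x (100 * P.diamBound)
  have hA : MeasurableSet ((P.dilate 3)ᶜ ∩ B) :=
    (P.measurableSet_dilate three_pos).compl.inter Metric.isClosed_closedBall.measurableSet
  have hscale : ENNReal.ofReal (S.Cst / (P.l / 2) ^ d) *
      ENNReal.ofReal ((2 * (100 * P.diamBound)) ^ d) =
        ENNReal.ofReal S.Cst * ENNReal.ofReal ((400 * d) ^ d) := by
    rw [← ENNReal.ofReal_mul (by positivity), ← ENNReal.ofReal_mul hCst.le,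
      div_mul_eq_mul_div, mul_div_assoc, ← div_pow, Cube.diamBound]
    congr 3
    field_simp
    ring
  calc S.var ρ (((P.dilate 3)ᶜ ∩ B).indicator f) x
      ≤ ENNReal.ofReal (S.Cst / (P.l / 2) ^ d) *
          ∫⁻ y, ‖((P.dilate 3)ᶜ ∩ B).indicator f y‖ₑ := by
        refine S.var_le_of_forall_lt_dist hρ (hf.indicator hA) (half_pos hl) fun y hy => ?_
        linarith [P.side_le_dist_of_notMem_dilate_three hx (mem_of_indicator_ne_zero hy).1]
    _ ≤ ENNReal.ofReal (S.Cst / (P.l / 2) ^ d) * ∫⁻ y in B, ‖f y‖ₑ := by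
        simp_rw [enorm_indicator_eq_indicator_enorm]
        rw [lintegral_indicator hA]
        exact mul_le_mul_right (lintegral_mono_set inter_subset_right) _
    _ ≤ ENNReal.ofReal (S.Cst / (P.l / 2) ^ d) *
          ((1 + 2 ^ d) * t * volume (Metric.closedBall x (2 * (100 * P.diamBound)))) :=
        mul_le_mul_right (hF.setLIntegral_closedBall_le (by positivity) (by linarith) hfar) _
    _ = ENNReal.ofReal (S.Cst / (P.l / 2) ^ d) *
          ENNReal.ofReal ((2 * (100 * P.diamBound)) ^ d) *
            ((1 + 2 ^ d) * t * unitBallVolume d) := by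
        rw [volume_closedBall_eq _ (by positivity)]; ring
    _ = S.middleConst * t := by rw [hscale, CZO.middleConst]; ring

end MiddlePart

theorem IsCZDecomposition.var_le_of_isGoodPoint {d : ℕ} {S : CZO d} {ρ : ℝ} {F : Set (Cube d)}
    {f g : Rd d → ℝ} {t : ℝ≥0} {x : Rd d} (hD : IsCZDecomposition F f t g) (hd : 0 < d)
    (hρ : 2 ≤ ρ) (hf : Measurable f) (hint : Integrable f)
    (hgood : IsGoodPoint S ρ F g (badPart F f g) t x) : S.var ρ f x ≤ S.pointConst * t := by
  have hbad := hD.isBadPart hf hint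
  have hfar : ∀ L ∈ F, L.IsFarFrom x x := fun L hL =>
    ⟨hgood.diamBound_le L hL, by linarith [dist_nonneg (x := x) (y := L.center)]⟩
  calc S.var ρ f x = S.var ρ (g + badPart F f g) x := S.var_congr_ae ρ hD.ae_eq_add_badPart x
    _ ≤ S.var ρ g x + S.var ρ (badPart F f g) x :=
        S.var_add_le (hD.integrable hint) (by linarith) hbad.integrable x
    _ ≤ t + S.badConst * (t + (2 * (2 ^ d * t) : ℝ≥0)) :=
        add_le_add hgood.var_le ((hbad.var_le_of_forall_isFarFrom hρ hd hfar).trans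
          (mul_le_mul_right (add_le_add_left hgood.badPotential_le _) _))
    _ = (1 + S.badConst * (1 + 2 * 2 ^ d)) * t := by push_cast; ring
    _ ≤ S.pointConst * t :=
        mul_le_mul_left (add_le_add_left (le_add_left le_self_add) _) _

section FarPart

variable {d : ℕ} {S : CZO d} {ρ : ℝ} {F : Set (Cube d)} {f g : Rd d → ℝ} {t : ℝ≥0} {P : Cube d}
  {x x' : Rd d} (hD : IsCZDecomposition F f t g) (hd : 0 < d) (hρ : 2 ≤ ρ) (hf : Measurable f)
  (hint : Integrable f) (hgood : IsGoodPoint S ρ F g (badPart F f g) t x')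
include hD hd hρ hf hint hgood

theorem IsCZDecomposition.var_indicator_lt_dist_le (hxx' : dist x x' ≤ 2 * P.diamBound) :
    S.var ρ ({y | 100 * P.diamBound < dist x y}.indicator f) x ≤
      (1 + S.farShiftConst * 2 ^ d + S.badConst * (1 + 2 * 2 ^ d)) * t := by
  have hdiam := P.diamBound_pos hd
  have hbad := hD.isBadPart hf hint
  set R := 100 * P.diamBound
  have hR₀ : 0 < R := by positivity
  set O := {y : Rd d | R < dist x y}
  have hO : MeasurableSet O := measurableSet_lt_dist x R
  have hsplit : O.indicator f =ᵐ[volume] O.indicator g + O.indicator (badPart F f g) := by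
    rw [← indicator_add']
    exact hD.ae_eq_add_badPart.indicator
  have hfar : ∀ L ∈ F, (∃ z ∈ L.set, R < dist x z) → L.IsFarFrom x x' := by
    rintro L hL ⟨z, hzL, hz⟩
    refine ⟨hgood.diamBound_le L hL, ?_⟩
    have hcenter := dist_triangle_left x' L.center x
    have hz' := dist_triangle_right x z L.center
    linarith [hgood.diamBound_le L hL, L.dist_le_diamBound hzL L.center_mem]
  calc S.var ρ (O.indicator f) x
      = S.var ρ (O.indicator g + O.indicator (badPart F f g)) x := S.var_congr_ae ρ hsplit x
    _ ≤ S.var ρ (O.indicator g) x + S.var ρ (O.indicator (badPart F f g)) x :=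
        S.var_add_le ((hD.integrable hint).indicator hO) (by linarith)
          (hbad.integrable.indicator hO) x
    _ ≤ (S.var ρ g x' + S.farShiftConst * (2 ^ d * t : ℝ≥0)) +
          S.badConst * (S.badPotential F (badPart F f g) x' + (2 * (2 ^ d * t) : ℝ≥0)) :=
        add_le_add
          (S.var_indicator_lt_dist_le_var_add hρ hd hD.measurable (hD.integrable hint) hD.enorm_le
            hR₀ (by linarith))
          (hbad.var_indicator_lt_dist_le hρ hd hR₀ hfar)
    _ ≤ (t + S.farShiftConst * (2 ^ d * t : ℝ≥0)) + S.badConst * (t + (2 * (2 ^ d * t) : ℝ≥0)) :=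
        add_le_add (add_le_add_left hgood.var_le _)
          (mul_le_mul_right (add_le_add_left hgood.badPotential_le _) _)
    _ = (1 + S.farShiftConst * 2 ^ d + S.badConst * (1 + 2 * 2 ^ d)) * t := by push_cast; ring

theorem IsCZDecomposition.var_le_add_var_indicator_dilate_three (hx : x ∈ P.set)
    (hxx' : dist x x' ≤ 2 * P.diamBound) :
    S.var ρ f x ≤ S.pointConst * t + S.var ρ ((P.dilate 3).indicator f) x := by
  have hdiam := P.diamBound_pos hd
  have hρ₁ : 1 ≤ ρ := by linarith
  set N := P.dilate 3
  set A := Nᶜ ∩ Metric.closedBall x (100 * P.diamBound)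
  set O := {y : Rd d | 100 * P.diamBound < dist x y}
  have hN : MeasurableSet N := P.measurableSet_dilate three_pos
  have hA : MeasurableSet A := hN.compl.inter Metric.isClosed_closedBall.measurableSet
  have hO : MeasurableSet O := measurableSet_lt_dist x _
  have hNO : O ⊆ Nᶜ := fun y hy hyN => by
    have : 100 * P.diamBound < dist x y := hy
    linarith [P.dist_le_of_mem_dilate_three hx hyN]
  have hA_eq : A = Nᶜ \ O := by
    ext y
    simp only [A, O, mem_inter_iff, Set.mem_sdiff, Metric.mem_closedBall', mem_ofPred_eq, not_lt]
  have hsplit : f = N.indicator f + (A.indicator f + O.indicator f) := by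
    rw [hA_eq, indicator_sdiff hNO, sub_add_cancel, indicator_self_add_compl]
  have hmiddle : S.var ρ (A.indicator f) x ≤ S.middleConst * t :=
    hD.toIsCZFamily.var_indicator_compl_dilate_three_inter_closedBall_le S hint hρ₁ hx hxx'
      hgood.diamBound_le
  have hfar := hD.var_indicator_lt_dist_le hd hρ hf hint hgood hxx'
  calc S.var ρ f x = S.var ρ (N.indicator f + (A.indicator f + O.indicator f)) x := by
        rw [← hsplit]
    _ ≤ S.var ρ (N.indicator f) x + (S.var ρ (A.indicator f) x + S.var ρ (O.indicator f) x) :=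
        (S.var_add_le (hint.indicator hN) hρ₁ ((hint.indicator hA).add (hint.indicator hO))
          x).trans (add_le_add_right
            (S.var_add_le (hint.indicator hA) hρ₁ (hint.indicator hO) x) _)
    _ ≤ S.var ρ (N.indicator f) x + (S.middleConst * t +
          (1 + S.farShiftConst * 2 ^ d + S.badConst * (1 + 2 * 2 ^ d)) * t) :=
        add_le_add_right (add_le_add hmiddle hfar) _
    _ = S.pointConst * t + S.var ρ (N.indicator f) x := by rw [CZO.pointConst]; ring

end FarPart

/-! ### Stopping cubes -/

theorem Cube.exists_dyadic_cover_with_nearby_point {d : ℕ} (Q₀ : Cube d) {E : Set (Rd d)}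
    {η : ℝ≥0∞} (hE : volume E < η) (hη : η ≤ Q₀.vol) :
    ∃ G : Set (Cube d), (∀ P ∈ G, IsDyadicSubcube Q₀ P) ∧ G.PairwiseDisjoint Cube.set ∧
      ∑' P : G, (P : Cube d).vol ≤ η ∧
      ∀ x ∈ Q₀.set, x ∉ E ∨ ∃ P ∈ G, x ∈ P.set ∧ ∃ x' ∉ E, dist x x' ≤ 2 * P.diamBound := by
  obtain ⟨U, hEU, hU, hUη⟩ := E.exists_isOpen_lt_of_lt η hE
  have hQ₀U : ¬ Q₀.set ⊆ U := fun hsub =>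
    (measure_mono hsub).not_gt (hUη.trans_le (Q₀.volume_set ▸ hη))
  refine ⟨Q₀.maximalSubcubes (·.set ⊆ U), fun P hP => hP.1, pairwiseDisjoint_maximalSubcubes _ _,
    (tsum_vol_maximalSubcubes_le Q₀ U).trans hUη.le, fun x hx => ?_⟩
  by_cases hxU : x ∈ U
  · obtain ⟨P, hP, hxP⟩ := mem_iUnion₂.1 (inter_subset_biUnion_maximalSubcubes hU ⟨hx, hxU⟩)
    obtain ⟨P', -, hPP', hside, hP'U⟩ := exists_parent_of_mem_maximalSubcubes hQ₀U hP
    obtain ⟨x', hx'P', hx'U⟩ := not_subset.1 hP'U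
    refine .inr ⟨P, hP, hxP, x', fun hx'E => hx'U (hEU hx'E), ?_⟩
    calc dist x x' ≤ P'.diamBound := P'.dist_le_diamBound (hPP' hxP) hx'P'
      _ = 2 * P.diamBound := by rw [diamBound, diamBound, hside, mul_left_comm]
  · exact .inl fun hxE => hxU (hEU hxE)

theorem IsCZDecomposition.exists_dyadic_var_le {d : ℕ} {S : CZO d} {ρ : ℝ} {F : Set (Cube d)}
    {f g : Rd d → ℝ} {t : ℝ≥0} (hD : IsCZDecomposition F f t g) (hd : 0 < d) (hρ : 2 ≤ ρ)
    (hf : Measurable f) (hint : Integrable f) {Q₀ : Cube d} {η : ℝ≥0∞}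
    (hE : volume {z | ¬ IsGoodPoint S ρ F g (badPart F f g) t z} < η) (hη : η ≤ Q₀.vol) :
    ∃ G : Set (Cube d), (∀ P ∈ G, IsDyadicSubcube Q₀ P) ∧ G.PairwiseDisjoint Cube.set ∧
      ∑' P : G, (P : Cube d).vol ≤ η ∧
      ∀ x ∈ Q₀.set, S.var ρ f x ≤ S.pointConst * t +
        ∑' P : G, (P : Cube d).set.indicator
          (fun _ => S.var ρ (((P : Cube d).dilate 3).indicator f) x) x := by
  obtain ⟨G, hdyadic, hdisjoint, hvol, hcover⟩ := Q₀.exists_dyadic_cover_with_nearby_point hE hη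
  refine ⟨G, hdyadic, hdisjoint, hvol, fun x hx => ?_⟩
  rcases hcover x hx with hgood | ⟨P, hP, hxP, x', hgood, hxx'⟩
  · exact (hD.var_le_of_isGoodPoint hd hρ hf hint (not_not.1 hgood)).trans le_self_add
  · refine (hD.var_le_add_var_indicator_dilate_three hd hρ hf hint (not_not.1 hgood) hxP
      hxx').trans (add_le_add_right ?_ _)
    refine le_trans ?_ (ENNReal.le_tsum (⟨P, hP⟩ : G))
    rw [indicator_of_mem hxP]

theorem CZO.VarBdd.exists_isCZDecomposition_volume_lt {d : ℕ} {S : CZO d} {ρ q : ℝ}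
    (hbdd : S.VarBdd ρ q) (hd : 0 < d) (hρ : 0 < ρ) (hq : 1 ≤ q) {ε : ℝ≥0} (hε : ε ≠ 0) :
    ∃ C : ℝ≥0, ∀ (Q : Cube d) (f : Rd d → ℝ), Measurable f → Integrable f →
      (∀ y ∉ Q.set, f y = 0) → ∫⁻ y, ‖f y‖ₑ ≠ 0 →
      ∃ F g, ∃ t : ℝ≥0, IsCZDecomposition F f t g ∧ t * Q.vol = C * ∫⁻ y, ‖f y‖ₑ ∧
        volume {z | ¬ IsGoodPoint S ρ F g (badPart F f g) t z} < ε * Q.vol := by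
  obtain ⟨A, hA, hexceptional⟩ := hbdd.exists_mul_volume_not_isGoodPoint_le hd hρ hq
  lift A to ℝ≥0 using hA
  set C : ℝ≥0 := 1 + (A + 1) / ε
  have hAC : A < C * ε := by
    rw [add_mul, div_mul_cancel₀ _ hε]
    exact (lt_add_one A).trans_le le_add_self
  refine ⟨C, fun Q f hf hint hsupp hmass => ?_⟩
  have hmass_top : ∫⁻ y, ‖f y‖ₑ ≠ ∞ := hint.2.ne
  have ht_top : C * (∫⁻ y, ‖f y‖ₑ) / Q.vol ≠ ∞ := by
    have := Q.vol_pos.ne'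
    finiteness
  set t : ℝ≥0 := (C * (∫⁻ y, ‖f y‖ₑ) / Q.vol).toNNReal
  have ht : t * Q.vol = C * ∫⁻ y, ‖f y‖ₑ := by
    rw [ENNReal.coe_toNNReal ht_top, ENNReal.div_mul_cancel Q.vol_pos.ne' Q.vol_ne_top]
  have havg : ∫⁻ y in Q.set, ‖f y‖ₑ ≤ t * Q.vol := by
    rw [ht]
    exact (setLIntegral_le_lintegral _ _).trans
      (le_mul_of_one_le_left' (ENNReal.one_le_coe_iff.2 le_self_add))
  obtain ⟨F, hF⟩ := exists_isCZFamily hf hsupp havg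
  obtain ⟨g, hD⟩ := hF.exists_isCZDecomposition hf
  refine ⟨F, g, t, hD, ht, lt_of_not_ge fun hlarge => ?_⟩
  refine hAC.not_ge (ENNReal.coe_le_coe.1 ?_)
  rw [← ENNReal.mul_le_mul_iff_left hmass hmass_top]
  calc ((C * ε : ℝ≥0) : ℝ≥0∞) * ∫⁻ y, ‖f y‖ₑ = t * (ε * Q.vol) := by
        rw [ENNReal.coe_mul, mul_right_comm, ← ht]; ring
    _ ≤ A * ∫⁻ y, ‖f y‖ₑ := (mul_le_mul_right hlarge _).trans (hexceptional F f g t hf hint hD)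

theorem CZO.var_eq_zero_of_ae_eq_zero {d : ℕ} (S : CZO d) {ρ : ℝ} (hρ : 1 ≤ ρ) {f : Rd d → ℝ}
    (hf : f =ᵐ[volume] 0) (x : Rd d) : S.var ρ f x = 0 := by
  rw [S.var_congr_ae ρ hf x]
  refine le_antisymm ((S.var_le_lintegral_kernel_mul (integrable_zero _ _ _) hρ x).trans ?_) zero_le
  simp

theorem Cube.vol_scale {d : ℕ} (Q : Cube d) {t : ℝ} (ht : 0 < t) :
    (Q.scale t ht).vol = ENNReal.ofReal (t ^ d) * Q.vol := by
  rw [vol, vol, scale, mul_pow, ENNReal.ofReal_mul (by positivity)]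

theorem CZO.VarBdd.exists_dyadic_var_le {d : ℕ} {S : CZO d} {ρ q : ℝ} (hbdd : S.VarBdd ρ q)
    (hd : 0 < d) (hρ : 2 ≤ ρ) (hq : 1 ≤ q) {ε : ℝ≥0} (hε₀ : ε ≠ 0) (hε₁ : ε ≤ 1) :
    ∃ C : ℝ≥0, ∀ (Q₀ : Cube d) (f : Rd d → ℝ), Measurable f → Integrable f →
      (∀ y ∉ Q₀.dilate 3, f y = 0) →
      ∃ G : Set (Cube d), (∀ P ∈ G, IsDyadicSubcube Q₀ P) ∧ G.PairwiseDisjoint Cube.set ∧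
        ∑' P : G, (P : Cube d).vol ≤ ε * Q₀.vol ∧
        ∀ x ∈ Q₀.set, S.var ρ f x ≤ C * ((∫⁻ y, ‖f y‖ₑ) / (Q₀.scale 3 three_pos).vol) +
          ∑' P : G, (P : Cube d).set.indicator
            (fun _ => S.var ρ (((P : Cube d).dilate 3).indicator f) x) x := by
  obtain ⟨C, hC⟩ := hbdd.exists_isCZDecomposition_volume_lt hd (by linarith) hq
    (div_ne_zero hε₀ (pow_ne_zero d three_ne_zero))
  refine ⟨S.pointConst.toNNReal * C, fun Q₀ f hf hint hsupp => ?_⟩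
  set Q := Q₀.scale 3 three_pos
  by_cases hmass : ∫⁻ y, ‖f y‖ₑ = 0
  · have hf₀ : f =ᵐ[volume] 0 :=
      ((lintegral_eq_zero_iff hf.enorm).1 hmass).mono fun _ => enorm_eq_zero.1
    refine ⟨∅, by simp, by simp, by simp, fun x _ => ?_⟩
    rw [S.var_eq_zero_of_ae_eq_zero (by linarith) hf₀]
    exact zero_le
  obtain ⟨F, g, t, hD, ht, hE⟩ := hC Q f hf hint hsupp hmass
  have hη : ((ε / 3 ^ d : ℝ≥0) : ℝ≥0∞) * Q.vol = ε * Q₀.vol := by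
    rw [Q₀.vol_scale, ← mul_assoc, ENNReal.ofReal_pow three_pos.le, ENNReal.ofReal_ofNat]
    norm_cast
    rw [div_mul_cancel₀ _ (by positivity)]
  have ht' : (t : ℝ≥0∞) = C * ((∫⁻ y, ‖f y‖ₑ) / Q.vol) := by
    rw [← mul_div_assoc, ← ht, ENNReal.mul_div_cancel_right Q.vol_pos.ne' Q.vol_ne_top]
  rw [ENNReal.coe_mul, ENNReal.coe_toNNReal S.pointConst_ne_top, mul_assoc, ← ht']
  exact hD.exists_dyadic_var_le hd hρ hf hint (hη ▸ hE)
    (mul_le_of_le_one_left' (ENNReal.coe_le_one_iff.2 hε₁))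

theorem ofReal_avg3_eq_lintegral_div {d : ℕ} (Q : Cube d) {f : Rd d → ℝ}
    (hf : IntegrableOn f (Q.dilate 3)) :
    ENNReal.ofReal (avg3 Q f) =
      (∫⁻ y, ‖(Q.dilate 3).indicator f y‖ₑ) / (Q.scale 3 three_pos).vol := by
  have hvol : 0 < (3 * Q.l) ^ d := pow_pos (mul_pos three_pos Q.hl) d
  simp_rw [enorm_indicator_eq_indicator_enorm]
  rw [avg3, ENNReal.ofReal_div_of_pos hvol, lintegral_indicator (Q.measurableSet_dilate three_pos),
    ← ofReal_integral_norm_eq_lintegral_enorm hf]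
  rfl

theorem variation_sparse_domination_one_sided_general
    (d : ℕ) (hd : 0 < d) (S : CZO d) (ρ q : ℝ) (hρ : 2 ≤ ρ) (hq : 1 ≤ q)
    (hbdd : S.VarBdd ρ q) (ε : ℝ) (hε0 : 0 < ε) (hε1 : ε < 1) :
    ∃ C : ℝ, 0 < C ∧ ∀ (Q₀ : Cube d) (f : Rd d → ℝ), Measurable f →
      IntegrableOn f (Q₀.dilate 3) →
      ∃ F : Set (Cube d), (∀ P ∈ F, IsDyadicSubcube Q₀ P) ∧
        F.PairwiseDisjoint Cube.set ∧
        (∑' P : F, (P : Cube d).vol) ≤ ENNReal.ofReal ε * Q₀.vol ∧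
        ∀ x ∈ Q₀.set,
          S.var ρ ((Q₀.dilate 3).indicator f) x ≤
            ENNReal.ofReal (C * avg3 Q₀ f) +
              ∑' P : F, Set.indicator (P : Cube d).set
                (fun _ => S.var ρ (((P : Cube d).dilate 3).indicator f) x) x := by
  lift ε to ℝ≥0 using hε0.le
  obtain ⟨C, hC⟩ := hbdd.exists_dyadic_var_le hd hρ hq (NNReal.coe_ne_zero.1 hε0.ne') hε1.le
  refine ⟨C + 1, by positivity, fun Q₀ f hf hint => ?_⟩
  have hdilate : MeasurableSet (Q₀.dilate 3) := Q₀.measurableSet_dilate three_pos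
  obtain ⟨F, hdyadic, hdisjoint, hvol, hvar⟩ := hC Q₀ ((Q₀.dilate 3).indicator f)
    (hf.indicator hdilate) ((integrable_indicator_iff hdilate).2 hint)
    fun y hy => indicator_of_notMem hy f
  refine ⟨F, hdyadic, hdisjoint, by rwa [ENNReal.ofReal_coe_nnreal], fun x hx => ?_⟩
  refine (hvar x hx).trans (add_le_add ?_ (ENNReal.tsum_le_tsum fun P => ?_))
  · rw [← ofReal_avg3_eq_lintegral_div Q₀ hint, ENNReal.ofReal_mul (by positivity)]
    refine mul_le_mul_left ?_ _
    rw [← ENNReal.ofReal_coe_nnreal]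
    exact ENNReal.ofReal_le_ofReal (by linarith)
  · rw [indicator_indicator, inter_eq_left.2 (hdyadic P P.2).dilate_three_subset]

/-- One-sided sparse domination: for `f ∈ L^∞` supported in `Q₀` there are
pairwise disjoint dyadic subcubes `{P_j}` of `Q₀` of total measure at most `ε|Q₀|` such that
a.e. on `Q₀`, `V_ρ(T_*(fχ_{3Q₀})) ≤ C⟨|f|⟩_{3Q₀} + Σ_j V_ρ(T_*(fχ_{3P_j})) χ_{P_j}`. -/
theorem variation_sparse_domination_one_sided
    (d : ℕ) (hd : 0 < d) (S : CZO d) (ρ q : ℝ) (hρ : 2 < ρ) (hq : 1 < q)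
    (hbdd : S.VarBdd ρ q) (ε : ℝ) (hε0 : 0 < ε) (hε1 : ε < 1) :
    ∃ C : ℝ, 0 < C ∧ ∀ (Q₀ : Cube d) (f : Rd d → ℝ), Measurable f →
      (∃ M : ℝ, ∀ x, |f x| ≤ M) → (∀ x, x ∉ Q₀.set → f x = 0) →
      ∃ F : Set (Cube d), (∀ P ∈ F, IsDyadicSubcube Q₀ P) ∧
        F.PairwiseDisjoint Cube.set ∧
        (∑' P : F, (P : Cube d).vol) ≤ ENNReal.ofReal ε * Q₀.vol ∧
        ∀ᵐ x ∂(volume : Measure (Rd d)), x ∈ Q₀.set →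
          S.var ρ ((Q₀.dilate 3).indicator f) x ≤
            ENNReal.ofReal (C * avg3 Q₀ f) +
              ∑' P : F, Set.indicator (P : Cube d).set
                (fun _ => S.var ρ (((P : Cube d).dilate 3).indicator f) x) x := by
  obtain ⟨C, hC, hdom⟩ :=
    variation_sparse_domination_one_sided_general d hd S ρ q hρ.le hq.le hbdd ε hε0 hε1
  refine ⟨C, hC, fun Q₀ f hf ⟨M, hM⟩ _ => ?_⟩
  have hint : IntegrableOn f (Q₀.dilate 3) := Measure.integrableOn_of_bounded (M := M)
    ((Q₀.scale 3 three_pos).volume_set ▸ (Q₀.scale 3 three_pos).vol_ne_top)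
    hf.aestronglyMeasurable (Eventually.of_forall hM)
  obtain ⟨F, hdyadic, hdisjoint, hvol, hvar⟩ := hdom Q₀ f hf hint
  exact ⟨F, hdyadic, hdisjoint, hvol, Eventually.of_forall hvar⟩
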